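/- Fix d ≥ 1. Let F : ℝ^d → ℝ^d be twice continuously differentiable with unique root x*, globally L-Lipschitz, with every second partial derivative of every component bounded in absolute value by M < ∞, and with Hurwitz Jacobian J* := DF(x*). Let (𝖹, 𝒵) be a measurable space, P a Markov kernel on 𝖹 with invariant probability measure π_Z, and ξ : 𝖹 → ℝ^d a bounded measurable function with ∫ ξ dπ_Z = 0. Suppose the matrix series Σ_M := ∫ ξ(z)ξ(z)ᵀ dπ_Z(z) + Σ_{m=1}^∞ ∫ [ξ(z)(P^m ξ)(z)ᵀ + (P^m ξ)(z) ξ(z)ᵀ] dπ_Z(z) converges entrywise absolutely and Σ_M is symmetric positive definite. Suppose there are bounded measurable V : 𝖹 → ℝ^d and W : 𝖹 → ℝ^{d×d} solving the Poisson equations ξ = V − PV and W − PW = Φ − ∫ Φ dπ_Z, where Φ(z) := −V(z)ξ(z)ᵀ + (1/2)Σ_M + (1/2)ξ(z)ξ(z)ᵀ. Suppose there exist ᾱ₀ ∈ (0,1] and A < ∞ such that for every α ∈ (0,ᾱ₀) there is a probability measure μ_α on ℝ^d × 𝖹, with 𝖹-marginal π_Z, that is invariant for the joint chain (meaning: if (X,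 Z) ∼ μ_α and Z' is drawn from P(Z,·), then (X + α(F(X) + ξ(Z)), Z') ∼ μ_α), and the law π_α of (X − x*)/√α under μ_α satisfies ∫‖y‖⁴ dπ_α(y) ≤ A. Let Σ_Y be the unique symmetric positive definite solution of J*Σ_Y + Σ_Y(J*)ᵀ = −Σ_M and let γ be the centered Gaussian law on ℝ^d with covariance Σ_Y. Then there exist ᾱ₁ ∈ (0,1] and a finite constant Ū such that for every α ∈ (0,ᾱ₁] and every 1-Lipschitz h : ℝ^d → ℝ, |∫ h dπ_α − ∫ h dγ| ≤ Ū · √α · log(1/α). -/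

import Mathlib

/-!
The argument is a discrete Stein-Lindeberg comparison. Write `Y = (X - x*)/√α`, `J = DF(x*)` and
consider the Gaussian recursion `y ↦ (1 + αJ) y + u` with independent noise
`u ∼ N(0, S - (1 + αJ) S (1 + αJ)ᵀ)`, `S = Σ_Y`. Its stationary law is exactly `γ = N(0, S)` for
every `α`, and by the Lyapunov equation the noise covariance is `αΣ_M + O(α²)`. Let `Q_k` (`semig`)
be its `k`-step operator. For a 1-Lipschitz `h`, the sequence `e k = E[Q_k h (Y)]` starts at
`E[h(Y)]` and converges to `∫ h dγ`, so it suffices to bound its increments.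

*Regularity.* `Q_k h` is `h` smoothed by a Gaussian law whose covariance dominates a multiple of
`1 - (1 - cα)^k`. Splitting that law into two Gaussian smoothings and a remainder shows that the
first two derivatives of `Q_k h` and the Lipschitz constant of the second one are
`O(1 + 1/(kα))` (`exists_isC21_gsmooth`, `isC21_gau`, `gaussian_package`).

*Increments.* For `g = Q_k h` the difference `Q_{k+1} h - g` equals `α 𝓛 g` up to `α^{3/2}`, where
`𝓛 g (y) = Dg(y) J y + ½ ⟨D²g(y), Σ_M⟩` (`gauss_step`). On the other side stationarity of the
joint chain, applied to the corrected test function `g(y) + √α Dg(y) V(z) - α ⟨D²g(y), W(z)⟩`,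
gives `|E[α 𝓛 g (Y)]| = O(α^{3/2})`: the Poisson equations cancel all fluctuating terms of order
`√α` and `α` (`markov_step`, `chain_step`). What is left of the second Poisson equation is the
pairing of `D²g` with the constant matrix `∫ Φ dπ_Z`, which vanishes because this matrix is
antisymmetric (`phi_antisymm`). The latter is a statement about the series defining `Σ_M`: since
`ξ = V - PV`, the series telescopes; the limit of its remainder exists by summability, and is zero
because its Cesàro means tend to zero (`abs_sum_coboundary_le`, `tsum_correlation`).

*Summation.* The increments are `O(α^{3/2}(1 + 1/(kα)))` for `k ≥ 1` and `O(√α)` for `k = 0`, and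
`|e k - ∫ h dγ| = O((1 - cα)^{k/2})`. With `log(1/α)/(cα)` steps the total is
`O(√α log(1/α))` (`sum_steps`).
-/


open MeasureTheory Matrix
open scoped RealInnerProductSpace NNReal

/-- The Markov (transition) operator of a kernel `P`, acting on vector-valued functions:
`(P g)(z) = ∫ g(z') P(z, dz')`. -/
noncomputable def kernelOp {Z : Type*} [MeasurableSpace Z] {d : ℕ}
    (P : ProbabilityTheory.Kernel Z Z)
    (g : Z → EuclideanSpace ℝ (Fin d)) (z : Z) : EuclideanSpace ℝ (Fin d) :=
  ∫ z', g z' ∂(P z)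

set_option linter.unusedSectionVars false

/-! ### Gaussian smoothing -/

section Smoothing
open ProbabilityTheory

variable {E : Type*} [NormedAddCommGroup E] [InnerProductSpace ℝ E] [FiniteDimensional ℝ E]
  [MeasurableSpace E] [BorelSpace E]
variable {G : Type*} [NormedAddCommGroup G] [NormedSpace ℝ G] [CompleteSpace G]

/-- The standard Gaussian density on `E`. -/
noncomputable def gdens (x : E) : ℝ :=
  ((2 * Real.pi) ^ (Module.finrank ℝ E / 2 : ℝ))⁻¹ * Real.exp (-(1/2) * ‖x‖ ^ 2)

lemma gdens_nonneg (x : E) : 0 ≤ gdens x := by unfold gdens; positivity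

lemma continuous_gdens : Continuous (gdens : E → ℝ) := by unfold gdens; fun_prop

lemma integrable_rexp_neg_mul_sq {b : ℝ} (hb : 0 < b) :
    Integrable (fun x : E => Real.exp (-b * ‖x‖ ^ 2)) := by
  have h := GaussianFourier.integrable_cexp_neg_mul_sq_norm_add (V := E) (b := (b : ℂ))
    (by simpa using hb) 0 0
  have h2 := h.norm
  refine h2.congr (Filter.Eventually.of_forall fun x => ?_)
  simp only [Complex.norm_exp]
  congr 1
  simp
  left
  norm_cast

lemma integrable_gdens : Integrable (gdens : E → ℝ) :=
  (integrable_rexp_neg_mul_sq (by norm_num)).const_mul _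

lemma integral_gdens : ∫ x : E, gdens x = 1 := by
  unfold gdens
  rw [integral_const_mul, GaussianFourier.integral_rexp_neg_mul_sq_norm (by norm_num)]
  rw [show Real.pi / (1/2) = 2 * Real.pi by ring]
  exact inv_mul_cancel₀ (by positivity)

lemma stdGaussian_eq_withDensity :
    stdGaussian E = volume.withDensity (fun x => ENNReal.ofReal (gdens x)) := by
  haveI : IsFiniteMeasure ((volume : Measure E).withDensity (fun x => ENNReal.ofReal (gdens x))) :=
    isFiniteMeasure_withDensity_ofReal integrable_gdens.2
  apply Measure.ext_of_charFun
  ext t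
  rw [charFun_stdGaussian, charFun_apply,
    integral_withDensity_eq_integral_toReal_smul (by unfold gdens; fun_prop) (by simp)]
  simp_rw [ENNReal.toReal_ofReal (gdens_nonneg _)]
  have h := GaussianFourier.integral_cexp_neg_mul_sq_norm_add (V := E) (b := (1/2 : ℂ))
    (by norm_num) Complex.I t
  have h1 : ∀ x : E, gdens x • Complex.exp (((⟪x, t⟫ : ℝ) : ℂ) * Complex.I)
      = ((((2 * Real.pi) ^ (Module.finrank ℝ E / 2 : ℝ))⁻¹ : ℝ) : ℂ) *
        Complex.exp (-(1/2) * ‖x‖ ^ 2 + Complex.I * ((⟪t, x⟫ : ℝ) : ℂ)) := by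
    intro x
    unfold gdens
    rw [Complex.real_smul, Complex.exp_add, real_inner_comm]
    push_cast
    rw [mul_comm Complex.I]
    ring
  simp_rw [h1]
  rw [integral_const_mul, h, ← mul_assoc]
  have h2 : ((((2 * Real.pi) ^ (Module.finrank ℝ E / 2 : ℝ))⁻¹ : ℝ) : ℂ) *
      ((Real.pi : ℂ) / (1/2)) ^ (Module.finrank ℝ E / 2 : ℂ) = 1 := by
    have : ((Real.pi : ℂ) / (1/2)) ^ (Module.finrank ℝ E / 2 : ℂ)
        = (((2 * Real.pi) ^ (Module.finrank ℝ E / 2 : ℝ) : ℝ) : ℂ) := by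
      rw [Complex.ofReal_cpow (by positivity)]
      push_cast
      congr 1
      ring
    rw [this, ← Complex.ofReal_mul, inv_mul_cancel₀ (by positivity)]
    simp
  rw [h2, one_mul]
  congr 1
  simp
  ring

lemma integral_stdGaussian (f : E → G) :
    ∫ x, f x ∂(stdGaussian E) = ∫ x, gdens x • f x := by
  rw [stdGaussian_eq_withDensity,
    integral_withDensity_eq_integral_toReal_smul (by unfold gdens; fun_prop) (by simp)]
  simp_rw [ENNReal.toReal_ofReal (gdens_nonneg _)]

/-- Convolution of `f` with the standard Gaussian law. -/
noncomputable def gsmooth (f : E → G) (w : E) : G := ∫ u, f (w + u) ∂(stdGaussian E)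

/-- First absolute moment of the standard Gaussian law. -/
noncomputable def gm1 (E : Type*) [NormedAddCommGroup E] [InnerProductSpace ℝ E]
  [FiniteDimensional ℝ E] [MeasurableSpace E] : ℝ := ∫ u, ‖u‖ ∂(stdGaussian E)

lemma gm1_nonneg : 0 ≤ gm1 E := integral_nonneg fun _ => norm_nonneg _

lemma integrable_norm_std : Integrable (fun u : E => ‖u‖) (stdGaussian E) :=
  (IsGaussian.integrable_id (μ := stdGaussian E)).norm

lemma LipschitzWith.norm_le_affine {K : ℝ≥0} {f : E → G} (hf : LipschitzWith K f) (w u : E) :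
    ‖f (w + u)‖ ≤ ‖f w‖ + K * ‖u‖ := by
  have := hf.norm_sub_le (w + u) w
  simp only [add_sub_cancel_left] at this
  calc ‖f (w + u)‖ = ‖f w + (f (w+u) - f w)‖ := by congr 1; abel
    _ ≤ _ := (norm_add_le _ _).trans (by linarith)

lemma LipschitzWith.integrable_of_norm {K : ℝ≥0} {f : E → G} (hf : LipschitzWith K f)
    {ν : Measure E} [IsFiniteMeasure ν] (hν : Integrable (fun u : E => ‖u‖) ν) (w : E) :
    Integrable (fun u => f (w + u)) ν := by
  refine Integrable.mono' ((integrable_const ‖f w‖).add (hν.const_mul (K : ℝ))) ?_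
    (Filter.Eventually.of_forall fun u => hf.norm_le_affine w u)
  exact (hf.continuous.comp (continuous_const.add continuous_id)).aestronglyMeasurable

/-- Averaging over translations preserves the Lipschitz constant. -/
lemma LipschitzWith.average {K : ℝ≥0} {f : E → G} (hf : LipschitzWith K f)
    {ν : Measure E} [IsProbabilityMeasure ν] (hν : Integrable (fun u : E => ‖u‖) ν) :
    LipschitzWith K (fun w => ∫ u, f (w + u) ∂ν) := by
  refine LipschitzWith.of_dist_le_mul fun x y => ?_
  rw [dist_eq_norm, dist_eq_norm,
    ← integral_sub (hf.integrable_of_norm hν x) (hf.integrable_of_norm hν y)]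
  refine (norm_integral_le_of_norm_le_const (C := K * ‖x - y‖)
    (Filter.Eventually.of_forall fun u => ?_)).trans (by simp)
  have := hf.norm_sub_le (x + u) (y + u)
  simpa using this

lemma LipschitzWith.gsmooth {K : ℝ≥0} {f : E → G} (hf : LipschitzWith K f) :
    LipschitzWith K (gsmooth f) := hf.average integrable_norm_std

/-- The candidate derivative of `gsmooth f`, given by Gaussian integration by parts. -/
noncomputable def gsmoothD (f : E → G) (w : E) : E →L[ℝ] G :=
  ∫ u, (innerSL ℝ u).smulRight (f (w + u)) ∂(stdGaussian E)

lemma norm_innerSL_smulRight_le (u : E) (g : G) : ‖(innerSL ℝ u).smulRight g‖ ≤ ‖u‖ * ‖g‖ := by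
  rw [ContinuousLinearMap.norm_smulRight_apply, innerSL_apply_norm]

lemma gsmooth_eq (f : E → G) (w : E) : gsmooth f w = ∫ z, gdens (z - w) • f z := by
  unfold gsmooth
  rw [integral_stdGaussian, ← integral_sub_right_eq_self _ w]
  simp

lemma hasFDerivAt_gdens (z w : E) :
    HasFDerivAt (fun w => gdens (z - w)) (gdens (z - w) • innerSL ℝ (z - w)) w := by
  unfold gdens
  have h1 : HasFDerivAt (fun w : E => ‖z - w‖ ^ 2) (2 • (innerSL ℝ (z - w)).comp
      (-(ContinuousLinearMap.id ℝ E))) w := by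
    have := ((hasFDerivAt_id w).const_sub z).norm_sq
    simpa using this
  have h2 := ((h1.const_mul (-(1/2) : ℝ)).exp).const_mul
    (((2 * Real.pi) ^ (Module.finrank ℝ E / 2 : ℝ))⁻¹)
  refine h2.congr_fderiv ?_
  ext v
  simp
  ring

lemma gsmoothD_eq (f : E → G) (w : E) :
    gsmoothD f w = ∫ z, (gdens (z - w) • innerSL ℝ (z - w)).smulRight (f z) := by
  unfold gsmoothD
  rw [integral_stdGaussian, ← integral_sub_right_eq_self _ w]
  congr 1
  ext z v
  simp [mul_smul]

/-- `r ↦ r exp(-r²/2)` and `r ↦ r² exp(-r²/2)` are dominated by a slower Gaussian. -/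
lemma gauss_poly_bound (r : ℝ) :
    (1 + r) * r * Real.exp (-(1/2) * r ^ 2) ≤ 8 * Real.exp (-(1/4) * r ^ 2) := by
  have h1 : Real.exp (-(1/2) * r ^ 2) = Real.exp (-(1/4) * r ^ 2) * Real.exp (-(1/4) * r ^ 2) := by
    rw [← Real.exp_add]; ring_nf
  have h2 : (1 + r) * r * Real.exp (-(1/4) * r ^ 2) ≤ 8 := by
    have h3 : 1 + (1/4) * r^2 ≤ Real.exp ((1/4) * r ^ 2) := by
      have := Real.add_one_le_exp ((1/4) * r^2); linarith
    have h4 : Real.exp (-(1/4) * r ^ 2) = (Real.exp ((1/4) * r ^ 2))⁻¹ := by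
      rw [← Real.exp_neg]; ring_nf
    rw [h4, ← div_eq_mul_inv, div_le_iff₀ (Real.exp_pos _)]
    nlinarith [sq_nonneg (r - 1)]
  rw [h1, ← mul_assoc]
  exact mul_le_mul_of_nonneg_right h2 (Real.exp_pos _).le

/-- Gaussian convolution of a Lipschitz function is differentiable: the derivative is moved onto
the density, and the domination comes from `gauss_poly_bound`. -/
theorem hasFDerivAt_gsmooth {K : ℝ≥0} {f : E → G} (hf : LipschitzWith K f) (w : E) :
    HasFDerivAt (gsmooth f) (gsmoothD f w) w := by
  have e1 : gsmooth f = fun w => ∫ z, gdens (z - w) • f z := funext (gsmooth_eq f)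
  rw [e1, gsmoothD_eq]
  set c : ℝ := ((2 * Real.pi) ^ (Module.finrank ℝ E / 2 : ℝ))⁻¹ with hc
  have hc0 : 0 ≤ c := by positivity
  set B : ℝ := ‖f w‖ + 2 * K with hB
  have hB0 : 0 ≤ B := by positivity
  have hfb : ∀ x ∈ Metric.ball w 1, ∀ z, ‖f z‖ ≤ B * (1 + ‖z - x‖) := by
    intro x hx z
    have h1 := hf.norm_le_affine w (z - w)
    rw [add_sub_cancel] at h1
    have h2 : ‖z - w‖ ≤ ‖z - x‖ + 1 := by
      rw [Metric.mem_ball, dist_eq_norm] at hx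
      calc ‖z - w‖ = ‖(z - x) + (x - w)‖ := by congr 1; abel
        _ ≤ _ := (norm_add_le _ _).trans (by linarith)
    have h3 : (K : ℝ) * ‖z - w‖ ≤ K * (‖z - x‖ + 1) := mul_le_mul_of_nonneg_left h2 K.2
    have := norm_nonneg (z - x)
    have := norm_nonneg (f w)
    have hK : (0:ℝ) ≤ K := K.2
    rw [hB]
    nlinarith [mul_nonneg hK (norm_nonneg (z - x)), mul_nonneg (norm_nonneg (f w)) (norm_nonneg (z-x))]
  refine hasFDerivAt_integral_of_dominated_of_fderiv_le (𝕜 := ℝ)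
    (F := fun w z => gdens (z - w) • f z)
    (F' := fun x z => (gdens (z - x) • innerSL ℝ (z - x)).smulRight (f z))
    (bound := fun z => B * c * 8 * Real.exp (1/4) * Real.exp (-(1/8) * ‖z - w‖ ^ 2))
    (Metric.ball_mem_nhds w one_pos) ?_ ?_ ?_ ?_ ?_ ?_
  · refine Filter.Eventually.of_forall fun x => ?_
    exact ((continuous_gdens.comp (continuous_id.sub continuous_const)).smul
      hf.continuous).aestronglyMeasurable
  · have h1 : Integrable (fun u => f (w + u)) (stdGaussian E) :=
      hf.integrable_of_norm integrable_norm_std w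
    rw [stdGaussian_eq_withDensity, integrable_withDensity_iff_integrable_smul'
      (by unfold gdens; fun_prop) (by simp)] at h1
    simp_rw [ENNReal.toReal_ofReal (gdens_nonneg _)] at h1
    have := h1.comp_sub_right w
    simpa using this
  · have hcont : Continuous fun z => (gdens (z - w) • innerSL ℝ (z - w)).smulRight (f z) := by
      have h1 : Continuous fun z : E => gdens (z - w) • innerSL ℝ (z - w) :=
        (continuous_gdens.comp (continuous_id.sub continuous_const)).smul
          ((innerSL ℝ).continuous.comp (continuous_id.sub continuous_const))
      exact (ContinuousLinearMap.smulRightL ℝ E G).continuous₂.comp (h1.prodMk hf.continuous)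
    exact hcont.aestronglyMeasurable
  · refine Filter.Eventually.of_forall fun z x hx => ?_
    rw [ContinuousLinearMap.norm_smulRight_apply, norm_smul, innerSL_apply_norm, Real.norm_eq_abs,
      abs_of_nonneg (gdens_nonneg _)]
    have h1 := hfb x hx z
    have h2 := gauss_poly_bound ‖z - x‖
    have h3 : Real.exp (-(1/4) * ‖z - x‖ ^ 2) ≤
        Real.exp (1/4) * Real.exp (-(1/8) * ‖z - w‖ ^ 2) := by
      rw [← Real.exp_add]
      apply Real.exp_le_exp.2
      rw [Metric.mem_ball, dist_eq_norm] at hx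
      have h4 : ‖z - w‖ ≤ ‖z - x‖ + 1 := by
        calc ‖z - w‖ = ‖(z - x) + (x - w)‖ := by congr 1; abel
          _ ≤ _ := (norm_add_le _ _).trans (by linarith)
      nlinarith [sq_nonneg (‖z - x‖ - 1), norm_nonneg (z - w), norm_nonneg (z - x)]
    calc gdens (z - x) * ‖z - x‖ * ‖f z‖ ≤ gdens (z - x) * ‖z - x‖ * (B * (1 + ‖z - x‖)) := by
          have := gdens_nonneg (z - x)
          gcongr
      _ = B * c * ((1 + ‖z - x‖) * ‖z - x‖ * Real.exp (-(1/2) * ‖z - x‖ ^ 2)) := by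
          unfold gdens; rw [← hc]; ring
      _ ≤ B * c * (8 * (Real.exp (1/4) * Real.exp (-(1/8) * ‖z - w‖ ^ 2))) := by
          exact mul_le_mul_of_nonneg_left (h2.trans (mul_le_mul_of_nonneg_left h3 (by norm_num)))
            (by positivity)
      _ = _ := by ring
  · have := ((integrable_rexp_neg_mul_sq (E := E) (b := 1/8) (by norm_num)).comp_sub_right w)
    exact this.const_mul _
  · refine Filter.Eventually.of_forall fun z x _ => ?_
    exact (hasFDerivAt_gdens z x).smul_const (f z)

/-- The formula for `gsmoothD` involves `f` but not its derivative, so one Gaussian smoothing gains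
one order of regularity. -/
lemma lipschitz_gsmoothD {K : ℝ≥0} {f : E → G} (hf : LipschitzWith K f) (x y : E) :
    ‖gsmoothD f x - gsmoothD f y‖ ≤ K * gm1 E * ‖x - y‖ := by
  have hint : ∀ x, Integrable (fun u : E => (innerSL ℝ u).smulRight (f (x + u)))
      (stdGaussian E) := by
    intro x
    have hm2 : Integrable (fun u : E => ‖u‖ ^ 2) (stdGaussian E) :=
      (IsGaussian.memLp_two_id (μ := stdGaussian E)).integrable_norm_pow (by norm_num)
    refine Integrable.mono' ((integrable_norm_std.mul_const ‖f x‖).add (hm2.const_mul (K : ℝ))) ?_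
      (Filter.Eventually.of_forall fun u => ?_)
    · have : Continuous fun u => (innerSL ℝ u).smulRight (f (x + u)) :=
        (ContinuousLinearMap.smulRightL ℝ E G).continuous₂.comp ((innerSL ℝ).continuous.prodMk
          (hf.continuous.comp (continuous_const.add continuous_id)))
      exact this.aestronglyMeasurable
    · refine (norm_innerSL_smulRight_le _ _).trans ?_
      have := mul_le_mul_of_nonneg_left (hf.norm_le_affine x u) (norm_nonneg u)
      simp only [Pi.add_apply]
      nlinarith
  unfold gsmoothD
  rw [← integral_sub (hint x) (hint y)]
  have : K * gm1 E * ‖x - y‖ = ∫ u, ‖u‖ * (K * ‖x - y‖) ∂(stdGaussian E) := by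
    rw [integral_mul_const, gm1]; ring
  rw [this]
  refine norm_integral_le_of_norm_le (integrable_norm_std.mul_const _)
    (Filter.Eventually.of_forall fun u => ?_)
  have e : (innerSL ℝ u).smulRight (f (x + u)) - (innerSL ℝ u).smulRight (f (y + u))
      = (innerSL ℝ u).smulRight (f (x + u) - f (y + u)) := by
    ext v; simp [smul_sub]
  rw [e]
  refine (norm_innerSL_smulRight_le _ _).trans ?_
  gcongr
  simpa using hf.norm_sub_le (x + u) (y + u)

/-- When `f` is already differentiable, the derivative may fall on `f` instead of the density. -/
lemma hasFDerivAt_gsmooth_of_deriv {K K' : ℝ≥0} {f : E → G} {f' : E → E →L[ℝ] G}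
    (hf : LipschitzWith K f) (hf' : ∀ x, HasFDerivAt f (f' x) x) (hL : LipschitzWith K' f')
    (w : E) : HasFDerivAt (gsmooth f) (gsmooth f' w) w := by
  refine hasFDerivAt_integral_of_dominated_of_fderiv_le (𝕜 := ℝ)
    (F := fun w u => f (w + u)) (F' := fun w u => f' (w + u)) (bound := fun _ => (K : ℝ))
    Filter.univ_mem ?_ (hf.integrable_of_norm integrable_norm_std w) ?_ ?_
    (integrable_const _) ?_
  · exact Filter.Eventually.of_forall fun x =>
      (hf.continuous.comp (continuous_const.add continuous_id)).aestronglyMeasurable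
  · exact (hL.continuous.comp (continuous_const.add continuous_id)).aestronglyMeasurable
  · exact Filter.Eventually.of_forall fun u x _ => (hf' _).le_of_lipschitz hf
  · refine Filter.Eventually.of_forall fun u x _ => ?_
    have h1 : HasFDerivAt (fun x => x + u) (ContinuousLinearMap.id ℝ E) x :=
      (hasFDerivAt_id x).add_const u
    have h2 := (hf' (x + u)).comp x h1
    rw [ContinuousLinearMap.comp_id] at h2
    exact h2

/-- `IsC21 g G₁ G₂ K`: `g` has first derivative `G₁` and second derivative `G₂`, both bounded by
`K`, and `G₂` is `K`-Lipschitz. -/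
structure IsC21 (g : E → ℝ) (G₁ : E → E →L[ℝ] ℝ) (G₂ : E → E →L[ℝ] E →L[ℝ] ℝ) (K : ℝ) :
    Prop where
  deriv1 : ∀ x, HasFDerivAt g (G₁ x) x
  deriv2 : ∀ x, HasFDerivAt G₁ (G₂ x) x
  bound1 : ∀ x, ‖G₁ x‖ ≤ K
  bound2 : ∀ x, ‖G₂ x‖ ≤ K
  lip2 : ∀ x y, ‖G₂ x - G₂ y‖ ≤ K * ‖x - y‖

/-- Two Gaussian smoothings turn a Lipschitz function into a `C^{2,1}` function; precomposing with
a linear map `T` scales the `j`-th derivative by `‖T‖ ^ j`. -/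
theorem exists_isC21_gsmooth {K : ℝ≥0} {f : E → ℝ} (hf : LipschitzWith K f) (T : E →L[ℝ] E)
    {B : ℝ} (h1 : K * ‖T‖ ≤ B) (h2 : K * gm1 E * ‖T‖ ^ 2 ≤ B)
    (h3 : K * gm1 E ^ 2 * ‖T‖ ^ 3 ≤ B) :
    ∃ G₁ G₂, IsC21 (fun x => gsmooth (gsmooth f) (T x)) G₁ G₂ B := by
  set m : ℝ≥0 := ⟨gm1 E, gm1_nonneg⟩ with hm
  have hmv : (m : ℝ) = gm1 E := rfl
  have l0 : LipschitzWith K (gsmooth f) := hf.gsmooth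
  have d1 : ∀ x, HasFDerivAt (gsmooth f) (gsmoothD f x) x := hasFDerivAt_gsmooth hf
  have l1 : LipschitzWith (K * m) (gsmoothD f) := LipschitzWith.of_dist_le_mul fun x y => by
    rw [dist_eq_norm, dist_eq_norm]; exact lipschitz_gsmoothD hf x y
  have d2 : ∀ x, HasFDerivAt (gsmooth (gsmooth f)) (gsmooth (gsmoothD f) x) x :=
    hasFDerivAt_gsmooth_of_deriv l0 d1 l1
  have d3 : ∀ x, HasFDerivAt (gsmooth (gsmoothD f)) (gsmoothD (gsmoothD f) x) x :=
    hasFDerivAt_gsmooth l1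
  have l2 := lipschitz_gsmoothD l1
  set Φ : (E →L[ℝ] ℝ) →L[ℝ] (E →L[ℝ] ℝ) := (ContinuousLinearMap.compL ℝ E E ℝ).flip T with hΦ
  have hΦn : ‖Φ‖ ≤ ‖T‖ := by
    refine Φ.opNorm_le_bound (norm_nonneg _) fun L => ?_
    rw [mul_comm]
    exact L.opNorm_comp_le T
  refine ⟨fun x => Φ (gsmooth (gsmoothD f) (T x)),
    fun x => Φ.comp ((gsmoothD (gsmoothD f) (T x)).comp T), ?_, ?_, ?_, ?_, ?_⟩
  · intro x
    exact (d2 (T x)).comp x T.hasFDerivAt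
  · intro x
    exact Φ.hasFDerivAt.comp x ((d3 (T x)).comp x T.hasFDerivAt)
  · intro x
    refine (Φ.le_opNorm _).trans (le_trans ?_ h1)
    rw [mul_comm]
    exact mul_le_mul ((d2 _).le_of_lipschitz l0.gsmooth) hΦn (norm_nonneg _) K.2
  · intro x
    have hb : ‖gsmoothD (gsmoothD f) (T x)‖ ≤ K * gm1 E := by
      exact (d3 _).le_of_lipschitz l1.gsmooth
    refine le_trans ?_ h2
    calc _ ≤ ‖Φ‖ * (‖gsmoothD (gsmoothD f) (T x)‖ * ‖T‖) :=
          (Φ.opNorm_comp_le _).trans (by gcongr; exact ContinuousLinearMap.opNorm_comp_le _ _)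
      _ ≤ ‖T‖ * ((K * gm1 E) * ‖T‖) := by gcongr
      _ = _ := by ring
  · intro x y
    have e : Φ.comp ((gsmoothD (gsmoothD f) (T x)).comp T) -
        Φ.comp ((gsmoothD (gsmoothD f) (T y)).comp T) =
        Φ.comp ((gsmoothD (gsmoothD f) (T x) - gsmoothD (gsmoothD f) (T y)).comp T) := by
      ext u v; simp
    rw [e]
    have hb := l2 (T x) (T y)
    have hT : ‖T x - T y‖ ≤ ‖T‖ * ‖x - y‖ := by rw [← map_sub]; exact T.le_opNorm _
    have hg := gm1_nonneg (E := E)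
    calc _ ≤ ‖Φ‖ * (‖gsmoothD (gsmoothD f) (T x) - gsmoothD (gsmoothD f) (T y)‖ * ‖T‖) :=
          (Φ.opNorm_comp_le _).trans (by gcongr; exact ContinuousLinearMap.opNorm_comp_le _ _)
      _ ≤ ‖T‖ * ((((K * m : ℝ≥0) : ℝ) * gm1 E * (‖T‖ * ‖x - y‖)) * ‖T‖) := by
          gcongr
          exact hb.trans (by gcongr)
      _ = (K * gm1 E ^ 2 * ‖T‖ ^ 3) * ‖x - y‖ := by push_cast; rw [hmv]; ring
      _ ≤ _ := by gcongr

end Smoothing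

/-! ### Third-order one-step expansions -/

section Taylor
variable {E : Type*} [NormedAddCommGroup E] [InnerProductSpace ℝ E] [FiniteDimensional ℝ E]
  [MeasurableSpace E] [BorelSpace E]
variable {g : E → ℝ} {G₁ : E → E →L[ℝ] ℝ} {G₂ : E → E →L[ℝ] E →L[ℝ] ℝ} {K : ℝ}

namespace IsC21

lemma K_nonneg (h : IsC21 g G₁ G₂ K) : 0 ≤ K := (norm_nonneg _).trans (h.bound1 0)

lemma symm (h : IsC21 g G₁ G₂ K) (y u v : E) : G₂ y u v = G₂ y v u :=
  second_derivative_symmetric h.deriv1 (h.deriv2 y) u v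

lemma abs_G₁_le (h : IsC21 g G₁ G₂ K) (y u : E) : |G₁ y u| ≤ K * ‖u‖ :=
  ((G₁ y).le_opNorm u).trans (by gcongr; exact h.bound1 y)

lemma abs_G₂_le (h : IsC21 g G₁ G₂ K) (y u v : E) : |G₂ y u v| ≤ K * ‖u‖ * ‖v‖ :=
  ((G₂ y).le_opNorm₂ u v).trans (by gcongr; exact h.bound2 y)

lemma lip1 (h : IsC21 g G₁ G₂ K) (x y : E) : ‖G₁ x - G₁ y‖ ≤ K * ‖x - y‖ :=
  convex_univ.norm_image_sub_le_of_norm_hasFDerivWithin_le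
    (fun z _ => (h.deriv2 z).hasFDerivWithinAt) (fun z _ => h.bound2 z) (Set.mem_univ y)
    (Set.mem_univ x)

lemma lip0 (h : IsC21 g G₁ G₂ K) (x y : E) : ‖g x - g y‖ ≤ K * ‖x - y‖ :=
  convex_univ.norm_image_sub_le_of_norm_hasFDerivWithin_le
    (fun z _ => (h.deriv1 z).hasFDerivWithinAt) (fun z _ => h.bound1 z) (Set.mem_univ y)
    (Set.mem_univ x)

lemma continuous_g (h : IsC21 g G₁ G₂ K) : Continuous g :=
  continuous_iff_continuousAt.2 fun x => (h.deriv1 x).continuousAt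

lemma continuous_G₁ (h : IsC21 g G₁ G₂ K) : Continuous G₁ :=
  continuous_iff_continuousAt.2 fun x => (h.deriv2 x).continuousAt

lemma continuous_G₂ (h : IsC21 g G₁ G₂ K) : Continuous G₂ :=
  ((lipschitzWith_iff_norm_sub_le (f := G₂) (C := K.toNNReal)).2 fun x y => by
    rw [Real.coe_toNNReal _ h.K_nonneg]; exact h.lip2 x y).continuous

lemma taylor1 (h : IsC21 g G₁ G₂ K) (y u : E) :
    ‖G₁ (y + u) - G₁ y - G₂ y u‖ ≤ K * ‖u‖ ^ 2 := by
  have := (convex_closedBall y ‖u‖).norm_image_sub_le_of_norm_hasFDerivWithin_le'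
    (f := G₁) (φ := G₂ y) (C := K * ‖u‖) (x := y) (y := y + u)
    (fun z _ => (h.deriv2 z).hasFDerivWithinAt) (fun z hz => ?_) (by simp) (by simp)
  · simpa [pow_two, mul_assoc] using this
  · refine (h.lip2 z y).trans ?_
    rw [mem_closedBall_iff_norm] at hz
    have := h.K_nonneg
    gcongr

lemma taylor2 (h : IsC21 g G₁ G₂ K) (y u : E) :
    |g (y + u) - g y - G₁ y u - (1/2) * G₂ y u u| ≤ K * ‖u‖ ^ 3 := by
  have hd : ∀ x, HasFDerivAt (fun x => g x - (1/2) * G₂ y (x - y) (x - y))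
      (G₁ x - G₂ y (x - y)) x := by
    intro x
    have h1 : HasFDerivAt (fun x => x - y) (ContinuousLinearMap.id ℝ E) x :=
      (hasFDerivAt_id x).sub_const y
    have h2 := ((G₂ y).hasFDerivAt.comp x h1).clm_apply h1
    refine ((h.deriv1 x).sub (h2.const_mul (1/2 : ℝ))).congr_fderiv ?_
    ext v
    have hs := h.symm y (x - y) v
    simp only [map_sub, _root_.sub_apply] at hs
    simp
    linear_combination (-1/2) * hs
  have := (convex_closedBall y ‖u‖).norm_image_sub_le_of_norm_hasFDerivWithin_le'
    (φ := G₁ y) (C := K * ‖u‖ ^ 2) (x := y) (y := y + u)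
    (fun z _ => (hd z).hasFDerivWithinAt) (fun z hz => ?_) (by simp) (by simp)
  · simp only [add_sub_cancel_left, sub_self, map_zero, mul_zero, sub_zero, Real.norm_eq_abs] at this
    calc _ = |g (y + u) - 1 / 2 * G₂ y u u - g y - G₁ y u| := by congr 1; ring
      _ ≤ _ := this
      _ = _ := by ring
  · have h3 := h.taylor1 y (z - y)
    rw [add_sub_cancel] at h3
    rw [mem_closedBall_iff_norm] at hz
    have h4 := h.K_nonneg
    calc _ = ‖G₁ z - G₁ y - G₂ y (z - y)‖ := by congr 1; abel
      _ ≤ _ := h3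
      _ ≤ _ := by gcongr

end IsC21
end Taylor

section OneStep
variable {d : ℕ}

/-- The contraction `∑ᵢⱼ Sᵢⱼ b(eᵢ, eⱼ)` of a bilinear form with a matrix. -/
noncomputable def bpair (b : EuclideanSpace ℝ (Fin d) →L[ℝ] EuclideanSpace ℝ (Fin d) →L[ℝ] ℝ) (S : Matrix (Fin d) (Fin d) ℝ) : ℝ :=
  ∑ i, ∑ j, S i j * b (EuclideanSpace.single i 1) (EuclideanSpace.single j 1)

lemma bpair_vec (b : EuclideanSpace ℝ (Fin d) →L[ℝ] EuclideanSpace ℝ (Fin d) →L[ℝ] ℝ) (u v : EuclideanSpace ℝ (Fin d)) :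
    bpair b (Matrix.of fun i j => u i * v j) = b u v := by
  have hu : ∀ u : EuclideanSpace ℝ (Fin d), u = ∑ i, u i • EuclideanSpace.single i (1:ℝ) := by
    intro u
    have := (EuclideanSpace.basisFun (Fin d) ℝ).sum_repr u
    simpa using this.symm
  conv_rhs => rw [hu u, hu v]
  simp only [bpair, Matrix.of_apply, map_sum, _root_.sum_apply, map_smul,
    _root_.smul_apply, smul_eq_mul, Finset.mul_sum]
  rw [Finset.sum_comm]
  refine Finset.sum_congr rfl fun i _ => Finset.sum_congr rfl fun j _ => ?_
  ring

lemma bpair_add (b : EuclideanSpace ℝ (Fin d) →L[ℝ] EuclideanSpace ℝ (Fin d) →L[ℝ] ℝ) (S T : Matrix (Fin d) (Fin d) ℝ) :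
    bpair b (S + T) = bpair b S + bpair b T := by
  simp [bpair, add_mul, Finset.sum_add_distrib]

lemma bpair_sub (b : EuclideanSpace ℝ (Fin d) →L[ℝ] EuclideanSpace ℝ (Fin d) →L[ℝ] ℝ) (S T : Matrix (Fin d) (Fin d) ℝ) :
    bpair b (S - T) = bpair b S - bpair b T := by
  simp [bpair, sub_mul, Finset.sum_sub_distrib]

lemma bpair_smul (b : EuclideanSpace ℝ (Fin d) →L[ℝ] EuclideanSpace ℝ (Fin d) →L[ℝ] ℝ) (c : ℝ) (S : Matrix (Fin d) (Fin d) ℝ) :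
    bpair b (c • S) = c * bpair b S := by
  simp [bpair, Finset.mul_sum, mul_assoc]

lemma bpair_sub_left (b b' : EuclideanSpace ℝ (Fin d) →L[ℝ] EuclideanSpace ℝ (Fin d) →L[ℝ] ℝ) (S : Matrix (Fin d) (Fin d) ℝ) :
    bpair (b - b') S = bpair b S - bpair b' S := by
  simp [bpair, mul_sub, Finset.sum_sub_distrib]

/-- A symmetric form annihilates antisymmetric matrices. -/
lemma bpair_antisymm (b : EuclideanSpace ℝ (Fin d) →L[ℝ] EuclideanSpace ℝ (Fin d) →L[ℝ] ℝ) (hb : ∀ u v, b u v = b v u)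
    (S : Matrix (Fin d) (Fin d) ℝ) (hS : ∀ i j, S i j + S j i = 0) : bpair b S = 0 := by
  have h : bpair b S = - bpair b S := by
    conv_lhs => unfold bpair
    rw [Finset.sum_comm]
    simp only [bpair, ← Finset.sum_neg_distrib]
    refine Finset.sum_congr rfl fun i _ => Finset.sum_congr rfl fun j _ => ?_
    rw [hb, eq_neg_of_add_eq_zero_left (hS j i)]
    ring
  linarith

lemma abs_bpair_le (b : EuclideanSpace ℝ (Fin d) →L[ℝ] EuclideanSpace ℝ (Fin d) →L[ℝ] ℝ) (S : Matrix (Fin d) (Fin d) ℝ) {C : ℝ}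
    (hS : ∀ i j, |S i j| ≤ C) : |bpair b S| ≤ d ^ 2 * C * ‖b‖ := by
  have h1 : ∀ i j : Fin d, |S i j * b (EuclideanSpace.single i 1) (EuclideanSpace.single j 1)|
      ≤ C * ‖b‖ := by
    intro i j
    rw [abs_mul]
    have h2 := b.le_opNorm₂ (EuclideanSpace.single i 1) (EuclideanSpace.single j 1)
    simp only [PiLp.norm_single, norm_one, mul_one] at h2
    have := hS i j
    exact mul_le_mul this h2 (abs_nonneg _) ((abs_nonneg _).trans this)
  calc |bpair b S| ≤ ∑ i : Fin d, ∑ j : Fin d, C * ‖b‖ :=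
        (Finset.abs_sum_le_sum_abs _ _).trans (Finset.sum_le_sum fun i _ =>
          (Finset.abs_sum_le_sum_abs _ _).trans (Finset.sum_le_sum fun j _ => h1 i j))
    _ = _ := by simp; ring

variable {g : EuclideanSpace ℝ (Fin d) → ℝ} {G₁ : EuclideanSpace ℝ (Fin d) → EuclideanSpace ℝ (Fin d) →L[ℝ] ℝ} {G₂ : EuclideanSpace ℝ (Fin d) → EuclideanSpace ℝ (Fin d) →L[ℝ] EuclideanSpace ℝ (Fin d) →L[ℝ] ℝ} {K : ℝ}

set_option maxHeartbeats 1000000 in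
/-- Taylor expansion of one step `y ↦ y + r² J y + u` with centered noise `u` of covariance `r² SM`
up to `O(r⁴)` and third moment `O(r³)`: the generator is that of the Ornstein-Uhlenbeck process
with drift `J` and diffusion matrix `SM`. -/
lemma gauss_step (hg : IsC21 g G₁ G₂ K) (J : EuclideanSpace ℝ (Fin d) →L[ℝ] EuclideanSpace ℝ (Fin d)) (SM : Matrix (Fin d) (Fin d) ℝ)
    (ν : Measure (EuclideanSpace ℝ (Fin d))) [IsProbabilityMeasure ν] {r m₃ c₂ : ℝ} (hr : 0 < r) (hr1 : r ≤ 1)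
    (hc₂ : 0 ≤ c₂)
    (hi1 : Integrable (fun u => ‖u‖) ν) (hi2 : Integrable (fun u => ‖u‖ ^ 2) ν)
    (hi3 : Integrable (fun u => ‖u‖ ^ 3) ν)
    (h3 : ∫ u, ‖u‖ ^ 3 ∂ν ≤ m₃ * r ^ 3)
    (hmean : ∀ Λ : EuclideanSpace ℝ (Fin d) →L[ℝ] ℝ, ∫ u, Λ u ∂ν = 0)
    (hcov : ∀ b : EuclideanSpace ℝ (Fin d) →L[ℝ] EuclideanSpace ℝ (Fin d) →L[ℝ] ℝ, |∫ u, b u u ∂ν - r ^ 2 * bpair b SM| ≤ c₂ * ‖b‖ * r ^ 4)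
    (y : EuclideanSpace ℝ (Fin d)) :
    |∫ u, g (y + r ^ 2 • J y + u) ∂ν - g y - r ^ 2 * (G₁ y (J y) + (1/2) * bpair (G₂ y) SM)|
      ≤ (‖J‖ ^ 2 + c₂ + 4 * ‖J‖ ^ 3 + 4 * m₃) * K * (r ^ 3 * (1 + ‖y‖) ^ 3) := by
  set a : EuclideanSpace ℝ (Fin d) := r ^ 2 • J y with ha
  set s : ℝ := 1 + ‖y‖ with hs
  have hK := hg.K_nonneg
  have hy0 := norm_nonneg y
  have hs1 : 1 ≤ s := by rw [hs]; linarith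
  have han : ‖a‖ ≤ r ^ 2 * (‖J‖ * s) := by
    rw [ha, norm_smul, Real.norm_eq_abs, abs_of_nonneg (by positivity)]
    gcongr
    exact (J.le_opNorm y).trans (by gcongr; linarith)
  -- the second-order Taylor polynomial at `y` in the direction `a + u`
  set p : EuclideanSpace ℝ (Fin d) → ℝ := fun u => g y + G₁ y (a + u) + (1/2) * G₂ y (a + u) (a + u) with hp
  have hR : ∀ u, |g (y + a + u) - p u| ≤ 4 * K * (‖a‖ ^ 3 + ‖u‖ ^ 3) := by
    intro u
    have h1 : |g (y + a + u) - g y - G₁ y (a + u) - 1 / 2 * G₂ y (a + u) (a + u)|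
        ≤ K * ‖a + u‖ ^ 3 := by
      rw [add_assoc]; exact hg.taylor2 y (a + u)
    have h2 : ‖a + u‖ ^ 3 ≤ 4 * (‖a‖ ^ 3 + ‖u‖ ^ 3) := by
      have h4 : ‖a + u‖ ^ 3 ≤ (‖a‖ + ‖u‖) ^ 3 := by gcongr; exact norm_add_le _ _
      have h5 : 0 ≤ (‖a‖ + ‖u‖) * (‖a‖ - ‖u‖) ^ 2 := by positivity
      nlinarith
    calc _ = |g (y + a + u) - g y - G₁ y (a + u) - 1 / 2 * G₂ y (a + u) (a + u)| := by
          rw [hp]; congr 1; ring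
      _ ≤ _ := h1
      _ ≤ K * (4 * (‖a‖ ^ 3 + ‖u‖ ^ 3)) := by gcongr
      _ = _ := by ring
  have hpe : ∀ u, p u = (g y + G₁ y a + (1/2) * G₂ y a a) + (G₁ y + G₂ y a) u
      + (1/2) * G₂ y u u := by
    intro u
    simp only [hp, map_add, _root_.add_apply]
    rw [hg.symm y u a]
    ring
  have hcl : ∀ Λ : EuclideanSpace ℝ (Fin d) →L[ℝ] ℝ, Integrable (fun u => Λ u) ν := fun Λ =>
    Integrable.mono' (hi1.const_mul ‖Λ‖) Λ.continuous.aestronglyMeasurable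
      (Filter.Eventually.of_forall fun u => Λ.le_opNorm u)
  have hcb : Integrable (fun u => G₂ y u u) ν := by
    refine Integrable.mono' (hi2.const_mul K) ?_
      (Filter.Eventually.of_forall fun u => (hg.abs_G₂_le y u u).trans (le_of_eq (by ring)))
    exact ((G₂ y).continuous.clm_apply continuous_id).aestronglyMeasurable
  have hpi : Integrable p ν := by
    simp_rw [funext hpe]
    exact ((integrable_const _).add (hcl _)).add (hcb.const_mul _)
  have hpv : ∫ u, p u ∂ν = g y + G₁ y a + (1/2) * G₂ y a a + (1/2) * ∫ u, G₂ y u u ∂ν := by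
    have i1 : Integrable (fun u => (g y + G₁ y a + 1 / 2 * G₂ y a a) + (G₁ y + G₂ y a) u) ν :=
      (integrable_const _).add (hcl _)
    simp_rw [hpe]
    rw [integral_add i1 (hcb.const_mul _),
      integral_add (integrable_const _) (hcl _), hmean, integral_const_mul]
    simp
  have hRi : Integrable (fun u => 4 * K * (‖a‖ ^ 3 + ‖u‖ ^ 3)) ν :=
    ((integrable_const _).add hi3).const_mul _
  have hdi : Integrable (fun u => g (y + a + u) - p u) ν := by
    refine Integrable.mono' hRi ?_ (Filter.Eventually.of_forall hR)
    refine AEStronglyMeasurable.sub ?_ hpi.aestronglyMeasurable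
    exact (hg.continuous_g.comp (continuous_const.add continuous_id)).aestronglyMeasurable
  have hgi : ∫ u, g (y + a + u) ∂ν = ∫ u, p u ∂ν + ∫ u, (g (y + a + u) - p u) ∂ν := by
    rw [← integral_add hpi hdi]; simp
  have hRb : |∫ u, (g (y + a + u) - p u) ∂ν| ≤ 4 * K * (‖a‖ ^ 3 + m₃ * r ^ 3) := by
    have hR' : ∀ u, ‖g (y + a + u) - p u‖ ≤ 4 * K * (‖a‖ ^ 3 + ‖u‖ ^ 3) := hR
    refine (norm_integral_le_of_norm_le hRi (Filter.Eventually.of_forall hR')).trans ?_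
    rw [integral_const_mul, integral_add (integrable_const _) hi3]
    simp only [integral_const, probReal_univ, smul_eq_mul, one_mul]
    gcongr
  have hm₃ : 0 ≤ m₃ := by
    have : 0 ≤ m₃ * r ^ 3 := le_trans (integral_nonneg fun u => by positivity) h3
    exact nonneg_of_mul_nonneg_left this (by positivity)
  have e1 : G₁ y a = r ^ 2 * G₁ y (J y) := by rw [ha, map_smul, smul_eq_mul]
  have e2 : |G₂ y a a| ≤ ‖J‖ ^ 2 * K * (r ^ 4 * s ^ 2) := by
    refine (hg.abs_G₂_le y a a).trans ?_
    calc K * ‖a‖ * ‖a‖ ≤ K * (r ^ 2 * (‖J‖ * s)) * (r ^ 2 * (‖J‖ * s)) := by gcongr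
      _ = _ := by ring
  have e3 := hcov (G₂ y)
  have e4 : c₂ * ‖G₂ y‖ * r ^ 4 ≤ c₂ * K * r ^ 4 := by gcongr; exact hg.bound2 y
  have e5 : ‖a‖ ^ 3 ≤ (r ^ 2 * (‖J‖ * s)) ^ 3 := by gcongr
  have hr43 : r ^ 4 ≤ r ^ 3 := pow_le_pow_of_le_one hr.le hr1 (by norm_num)
  have hr63 : r ^ 6 ≤ r ^ 3 := pow_le_pow_of_le_one hr.le hr1 (by norm_num)
  have hs23 : s ^ 2 ≤ s ^ 3 := pow_le_pow_right₀ hs1 (by norm_num)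
  have hs3 : 1 ≤ s ^ 3 := one_le_pow₀ hs1
  rw [hgi, hpv, e1]
  have hsplit : g y + r ^ 2 * G₁ y (J y) + 1 / 2 * G₂ y a a + 1 / 2 * ∫ u, G₂ y u u ∂ν
      + ∫ u, (g (y + a + u) - p u) ∂ν - g y
      - r ^ 2 * (G₁ y (J y) + (1/2) * bpair (G₂ y) SM)
      = (1/2) * G₂ y a a + (1/2) * (∫ u, G₂ y u u ∂ν - r ^ 2 * bpair (G₂ y) SM)
        + ∫ u, (g (y + a + u) - p u) ∂ν := by ring
  rw [hsplit]
  have b1 : ‖J‖ ^ 2 * K * (r ^ 4 * s ^ 2) ≤ ‖J‖ ^ 2 * K * (r ^ 3 * s ^ 3) := by gcongr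
  have b2 : c₂ * K * r ^ 4 ≤ c₂ * K * (r ^ 3 * s ^ 3) := by
    gcongr
    calc r ^ 4 ≤ r ^ 3 * 1 := by linarith
      _ ≤ _ := by gcongr
  have b3 : 4 * K * (‖a‖ ^ 3 + m₃ * r ^ 3)
      ≤ (4 * ‖J‖ ^ 3 + 4 * m₃) * K * (r ^ 3 * s ^ 3) := by
    calc _ ≤ 4 * K * ((r ^ 2 * (‖J‖ * s)) ^ 3 + m₃ * r ^ 3) := by gcongr
      _ = 4 * K * (r ^ 6 * ‖J‖ ^ 3 * s ^ 3 + m₃ * r ^ 3 * 1) := by ring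
      _ ≤ 4 * K * (r ^ 3 * ‖J‖ ^ 3 * s ^ 3 + m₃ * r ^ 3 * s ^ 3) := by gcongr
      _ = _ := by ring
  have p1 : 0 ≤ ‖J‖ ^ 2 * K * (r ^ 3 * s ^ 3) := by positivity
  have p2 : 0 ≤ c₂ * K * (r ^ 3 * s ^ 3) := by positivity
  rw [abs_le] at e2 e3 hRb ⊢
  constructor <;> linarith [e2.1, e2.2, e3.1, e3.2, hRb.1, hRb.2]

set_option maxHeartbeats 1000000 in
/-- One step of the chain applied to the corrected test function
`g(y) + r G₁(y) V(z) - r² ⟨G₂(y), W(z)⟩`; here `v, W` are the values of `V, W` at the current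
noise state and `v - x`, `W'` their conditional expectations at the next one. -/
lemma markov_step (hg : IsC21 g G₁ G₂ K) (SM Φb W W' : Matrix (Fin d) (Fin d) ℝ)
    {r cF cL Cx Cv CW : ℝ} (hr : 0 < r) (hr1 : r ≤ 1) (hcF : 0 ≤ cF) (hcL : 0 ≤ cL)
    (y D Jy x v : EuclideanSpace ℝ (Fin d)) (hD : ‖D‖ ≤ r ^ 2 * (cL * ‖y‖)) (hDJ : ‖D - r ^ 2 • Jy‖ ≤ cF * r ^ 3 * ‖y‖ ^ 2)
    (hx : ‖x‖ ≤ Cx) (hv : ‖v - x‖ ≤ Cv) (hW' : ∀ i j, |W' i j| ≤ CW) (hCW : 0 ≤ CW)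
    (hΦ : ∀ i j, Φb i j + Φb j i = 0)
    (hPW : ∀ i j, W i j - W' i j
      = (-(v i * x j) + (1/2) * SM i j + (1/2) * (x i * x j)) - Φb i j) :
    |(g (y + (D + r • x)) + r * G₁ (y + (D + r • x)) (v - x)
        - r ^ 2 * bpair (G₂ (y + (D + r • x))) W')
      - (g y + r * G₁ y v - r ^ 2 * bpair (G₂ y) W)
      - r ^ 2 * (G₁ y Jy + (1/2) * bpair (G₂ y) SM)|
      ≤ ((cL + Cx) ^ 3 + (cL + Cx) ^ 2 * Cv + (cL + Cx) * (d ^ 2 * CW) + cF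
          + (cL ^ 2 + cL * Cx) + cL * Cv) * K * (r ^ 3 * (1 + ‖y‖) ^ 3) := by
  set δ : EuclideanSpace ℝ (Fin d) := D + r • x with hδ
  set s : ℝ := 1 + ‖y‖ with hs
  have hK := hg.K_nonneg
  have hy0 := norm_nonneg y
  have hs1 : 1 ≤ s := by rw [hs]; linarith
  have hCx : 0 ≤ Cx := (norm_nonneg _).trans hx
  have hCv : 0 ≤ Cv := (norm_nonneg _).trans hv
  have hD' : ‖D‖ ≤ r ^ 2 * cL * s := by
    refine hD.trans ?_
    rw [mul_assoc]; gcongr; linarith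
  have hδn : ‖δ‖ ≤ r * (cL + Cx) * s := by
    have h1 : ‖δ‖ ≤ ‖D‖ + r * ‖x‖ := by
      refine (norm_add_le _ _).trans (le_of_eq ?_)
      rw [norm_smul, Real.norm_eq_abs, abs_of_pos hr]
    have h2 : r ^ 2 * cL * s ≤ r * cL * s := by
      gcongr
      nlinarith
    have h3 : r * ‖x‖ ≤ r * Cx * s := by
      calc r * ‖x‖ ≤ r * Cx * 1 := by rw [mul_one]; gcongr
        _ ≤ _ := by gcongr
    calc _ ≤ _ := h1
      _ ≤ r * cL * s + r * Cx * s := by linarith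
      _ = _ := by ring
  have hr2 : r ^ 2 ≤ r := by nlinarith
  have hr43 : r ^ 4 ≤ r ^ 3 := pow_le_pow_of_le_one hr.le hr1 (by norm_num)
  have hs13 : s ≤ s ^ 3 := by simpa using pow_le_pow_right₀ hs1 (show 1 ≤ 3 by norm_num)
  have hs23 : s ^ 2 ≤ s ^ 3 := pow_le_pow_right₀ hs1 (by norm_num)
  -- Taylor remainders of `g`, `G₁`, `G₂`
  have t1 : |g (y + δ) - g y - G₁ y δ - (1/2) * G₂ y δ δ| ≤ (cL + Cx) ^ 3 * K * (r ^ 3 * s ^ 3) := by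
    refine (hg.taylor2 y δ).trans ?_
    calc K * ‖δ‖ ^ 3 ≤ K * (r * (cL + Cx) * s) ^ 3 := by gcongr
      _ = _ := by ring
  have t2 : |r * (G₁ (y + δ) (v - x) - G₁ y (v - x) - G₂ y δ (v - x))|
      ≤ (cL + Cx) ^ 2 * Cv * K * (r ^ 3 * s ^ 3) := by
    rw [abs_mul, abs_of_pos hr]
    have h1 : |G₁ (y + δ) (v - x) - G₁ y (v - x) - G₂ y δ (v - x)| ≤ K * ‖δ‖ ^ 2 * Cv := by
      refine ((G₁ (y + δ) - G₁ y - G₂ y δ).le_opNorm (v - x)).trans ?_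
      exact mul_le_mul (hg.taylor1 y δ) hv (norm_nonneg _) (by positivity)
    calc _ ≤ r * (K * ‖δ‖ ^ 2 * Cv) := by gcongr
      _ ≤ r * (K * (r * (cL + Cx) * s) ^ 2 * Cv) := by gcongr
      _ = (cL + Cx) ^ 2 * Cv * K * (r ^ 3 * s ^ 2) := by ring
      _ ≤ _ := by gcongr
  have t3 : |r ^ 2 * (bpair (G₂ (y + δ)) W' - bpair (G₂ y) W')|
      ≤ (cL + Cx) * (d ^ 2 * CW) * K * (r ^ 3 * s ^ 3) := by
    rw [← bpair_sub_left, abs_mul, abs_of_nonneg (by positivity)]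
    have h1 := abs_bpair_le (G₂ (y + δ) - G₂ y) W' hW'
    have h2 := hg.lip2 (y + δ) y
    rw [add_sub_cancel_left] at h2
    calc _ ≤ r ^ 2 * (d ^ 2 * CW * (K * (r * (cL + Cx) * s))) := by
          gcongr
          refine h1.trans ?_
          gcongr
          exact h2.trans (by gcongr)
      _ = (cL + Cx) * (d ^ 2 * CW) * K * (r ^ 3 * s) := by ring
      _ ≤ _ := by gcongr
  -- lower-order terms
  have t4 : |G₁ y (D - r ^ 2 • Jy)| ≤ cF * K * (r ^ 3 * s ^ 3) := by
    refine (hg.abs_G₁_le y _).trans ?_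
    calc _ ≤ K * (cF * r ^ 3 * s ^ 2) := by
          gcongr
          refine hDJ.trans ?_
          gcongr
          linarith
      _ = cF * K * (r ^ 3 * s ^ 2) := by ring
      _ ≤ _ := by gcongr
  have t5 : |(1/2) * G₂ y D D + r * G₂ y D x| ≤ (cL ^ 2 + cL * Cx) * K * (r ^ 3 * s ^ 3) := by
    have h1 : |G₂ y D D| ≤ cL ^ 2 * K * (r ^ 3 * s ^ 3) := by
      refine (hg.abs_G₂_le y D D).trans ?_
      calc _ ≤ K * (r ^ 2 * cL * s) * (r ^ 2 * cL * s) := by gcongr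
        _ = cL ^ 2 * K * (r ^ 4 * s ^ 2) := by ring
        _ ≤ _ := by gcongr
    have h2 : |r * G₂ y D x| ≤ cL * Cx * K * (r ^ 3 * s ^ 3) := by
      rw [abs_mul, abs_of_pos hr]
      calc _ ≤ r * (K * (r ^ 2 * cL * s) * Cx) := by
            gcongr
            exact (hg.abs_G₂_le y D x).trans (by gcongr)
        _ = cL * Cx * K * (r ^ 3 * s) := by ring
        _ ≤ _ := by gcongr
    have h3 : 0 ≤ cL ^ 2 * K * (r ^ 3 * s ^ 3) := by positivity
    rw [abs_le] at h1 h2 ⊢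
    constructor <;> linarith [h1.1, h1.2, h2.1, h2.2]
  have t6 : |r * G₂ y D (v - x)| ≤ cL * Cv * K * (r ^ 3 * s ^ 3) := by
    rw [abs_mul, abs_of_pos hr]
    calc _ ≤ r * (K * (r ^ 2 * cL * s) * Cv) := by
          gcongr
          exact (hg.abs_G₂_le y D (v - x)).trans (by gcongr)
      _ = cL * Cv * K * (r ^ 3 * s) := by ring
      _ ≤ _ := by gcongr
  -- the two Poisson equations cancel the fluctuating terms of order `r` and `r²`
  have hWW : bpair (G₂ y) W - bpair (G₂ y) W' = -G₂ y v x + (1/2) * bpair (G₂ y) SM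
      + (1/2) * G₂ y x x := by
    have hm : W - W' = (((1/2 : ℝ) • SM + (1/2 : ℝ) • (Matrix.of
        fun i j => x i * x j)) - (Matrix.of fun i j => v i * x j)) - Φb := by
      ext i j
      have := hPW i j
      simp only [Matrix.sub_apply, Matrix.of_apply, Matrix.add_apply, Matrix.smul_apply, smul_eq_mul]
      rw [this]; ring
    rw [← bpair_sub, hm, bpair_sub, bpair_sub, bpair_add, bpair_smul, bpair_smul,
      bpair_antisymm _ (hg.symm y) Φb hΦ, bpair_vec, bpair_vec]
    ring
  have eδ : G₂ y δ δ = G₂ y D D + 2 * r * G₂ y D x + r ^ 2 * G₂ y x x := by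
    simp only [hδ, map_add, map_smul, _root_.add_apply,
      _root_.smul_apply, smul_eq_mul]
    rw [hg.symm y x D]; ring
  have eδ2 : G₂ y δ (v - x) = G₂ y D (v - x) + r * (G₂ y v x - G₂ y x x) := by
    simp only [hδ, map_add, map_sub, map_smul, _root_.add_apply,
      _root_.smul_apply, smul_eq_mul]
    rw [hg.symm y v x]; ring
  have eδ1 : G₁ y δ = G₁ y (D - r ^ 2 • Jy) + r ^ 2 * G₁ y Jy + r * G₁ y x := by
    simp only [hδ, map_add, map_sub, map_smul, smul_eq_mul]; ring
  have ev : G₁ y (v - x) = G₁ y v - G₁ y x := map_sub _ _ _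
  have hsplit : (g (y + δ) + r * G₁ (y + δ) (v - x) - r ^ 2 * bpair (G₂ (y + δ)) W')
      - (g y + r * G₁ y v - r ^ 2 * bpair (G₂ y) W)
      - r ^ 2 * (G₁ y Jy + (1/2) * bpair (G₂ y) SM)
      = (g (y + δ) - g y - G₁ y δ - (1/2) * G₂ y δ δ)
        + r * (G₁ (y + δ) (v - x) - G₁ y (v - x) - G₂ y δ (v - x))
        - r ^ 2 * (bpair (G₂ (y + δ)) W' - bpair (G₂ y) W')
        + G₁ y (D - r ^ 2 • Jy) + ((1/2) * G₂ y D D + r * G₂ y D x) + r * G₂ y D (v - x) := by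
    linear_combination r ^ 2 * hWW + eδ1 + (1/2) * eδ + r * eδ2 + r * ev
  rw [hsplit]
  rw [abs_le] at t1 t2 t3 t4 t5 t6 ⊢
  constructor <;> linarith [t1.1, t1.2, t2.1, t2.2, t3.1, t3.2, t4.1, t4.2, t5.1, t5.2, t6.1, t6.2]

end OneStep

/-! ### Centered Gaussian laws on Euclidean space -/

section Gauss
variable {d : ℕ}

/-- The continuous linear operator on Euclidean space with matrix `T`. -/
noncomputable def cl (T : Matrix (Fin d) (Fin d) ℝ) :
    EuclideanSpace ℝ (Fin d) →L[ℝ] EuclideanSpace ℝ (Fin d) :=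
  Matrix.toEuclideanCLM (n := Fin d) (𝕜 := ℝ) T

/-- The centered Gaussian law with covariance matrix `S` (meaningful for `S` positive
semidefinite). -/
noncomputable def gau (S : Matrix (Fin d) (Fin d) ℝ) : Measure (EuclideanSpace ℝ (Fin d)) :=
  ProbabilityTheory.multivariateGaussian 0 S

instance (S : Matrix (Fin d) (Fin d) ℝ) : ProbabilityTheory.IsGaussian (gau S) := by
  unfold gau; infer_instance

lemma inner_cl (S : Matrix (Fin d) (Fin d) ℝ) (x y : EuclideanSpace ℝ (Fin d)) :
    ⟪x, cl S y⟫ = x ⬝ᵥ S *ᵥ y := Matrix.inner_toEuclideanCLM S x y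

lemma cl_mul (S T : Matrix (Fin d) (Fin d) ℝ) (x : EuclideanSpace ℝ (Fin d)) :
    cl (S * T) x = cl S (cl T x) := by
  simp [cl, map_mul]

lemma cl_add (S T : Matrix (Fin d) (Fin d) ℝ) (x : EuclideanSpace ℝ (Fin d)) :
    cl (S + T) x = cl S x + cl T x := by
  simp [cl, map_add]

lemma cl_sub (S T : Matrix (Fin d) (Fin d) ℝ) (x : EuclideanSpace ℝ (Fin d)) :
    cl (S - T) x = cl S x - cl T x := by
  simp [cl, map_sub]

lemma cl_neg (S : Matrix (Fin d) (Fin d) ℝ) (x : EuclideanSpace ℝ (Fin d)) :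
    cl (-S) x = -cl S x := by
  simp [cl, map_neg]

lemma cl_smul (c : ℝ) (T : Matrix (Fin d) (Fin d) ℝ) (x : EuclideanSpace ℝ (Fin d)) :
    cl (c • T) x = c • cl T x := by
  simp [cl, map_smul]

lemma cl_one (x : EuclideanSpace ℝ (Fin d)) : cl (1 : Matrix (Fin d) (Fin d) ℝ) x = x := by
  simp [cl, map_one]

lemma inner_cl_left (T : Matrix (Fin d) (Fin d) ℝ) (x y : EuclideanSpace ℝ (Fin d)) :
    ⟪cl T x, y⟫ = ⟪x, cl Tᵀ y⟫ := by
  rw [real_inner_comm, inner_cl, inner_cl, Matrix.dotProduct_mulVec, ← Matrix.mulVec_transpose,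
    dotProduct_comm]

lemma posSemidef_of_inner {S : Matrix (Fin d) (Fin d) ℝ} (hS : Sᵀ = S)
    (h : ∀ x : EuclideanSpace ℝ (Fin d), 0 ≤ ⟪x, cl S x⟫) : S.PosSemidef := by
  refine Matrix.PosSemidef.of_dotProduct_mulVec_nonneg ?_ fun x => ?_
  · rw [Matrix.IsHermitian, Matrix.conjTranspose_eq_transpose_of_trivial, hS]
  · have := h (WithLp.toLp 2 x)
    rw [inner_cl] at this
    simpa using this

lemma posSemidef_inner_nonneg {S : Matrix (Fin d) (Fin d) ℝ} (hS : S.PosSemidef)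
    (x : EuclideanSpace ℝ (Fin d)) : 0 ≤ ⟪x, cl S x⟫ := by
  rw [inner_cl]
  simpa using hS.dotProduct_mulVec_nonneg x.ofLp

lemma charFun_gau {S : Matrix (Fin d) (Fin d) ℝ} (hS : S.PosSemidef)
    (t : EuclideanSpace ℝ (Fin d)) :
    charFun (gau S) t = Complex.exp (-(⟪t, cl S t⟫ : ℝ) / 2) := by
  rw [gau, ProbabilityTheory.charFun_multivariateGaussian hS, inner_cl]
  simp
  ring_nf

/-- Push-forward of a Gaussian law under a linear map. -/
lemma gau_map {S : Matrix (Fin d) (Fin d) ℝ} (hS : S.PosSemidef) (T : Matrix (Fin d) (Fin d) ℝ) :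
    (gau S).map (cl T) = gau (T * S * Tᵀ) := by
  have hP : (T * S * Tᵀ).PosSemidef := by
    simpa using hS.mul_mul_conjTranspose_same T
  have : IsProbabilityMeasure ((gau S).map (cl T)) :=
    Measure.isProbabilityMeasure_map (cl T).continuous.aemeasurable
  refine Measure.ext_of_charFun (funext fun t => ?_)
  rw [charFun_gau hP, charFun_apply, integral_map (cl T).continuous.aemeasurable (by fun_prop)]
  simp_rw [inner_cl_left]
  have e : ⟪t, cl T (cl S (cl Tᵀ t))⟫ = ⟪cl Tᵀ t, cl S (cl Tᵀ t)⟫ := by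
    rw [inner_cl_left, Matrix.transpose_transpose]
  rw [← charFun_apply, charFun_gau hS, cl_mul, cl_mul, e]

lemma gau_conv {S T : Matrix (Fin d) (Fin d) ℝ} (hS : S.PosSemidef) (hT : T.PosSemidef) :
    (gau S).conv (gau T) = gau (S + T) := by
  refine Measure.ext_of_charFun (funext fun t => ?_)
  rw [charFun_conv, charFun_gau hS, charFun_gau hT, charFun_gau (hS.add hT), ← Complex.exp_add,
    cl_add, inner_add_right]
  push_cast
  ring_nf

lemma gau_one : gau (1 : Matrix (Fin d) (Fin d) ℝ)
    = ProbabilityTheory.stdGaussian (EuclideanSpace ℝ (Fin d)) :=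
  ProbabilityTheory.multivariateGaussian_zero_one

/-- A law with the prescribed Gaussian characteristic function is `gau S`. -/
lemma eq_gau {S : Matrix (Fin d) (Fin d) ℝ} (hS : S.PosSemidef)
    (γ : Measure (EuclideanSpace ℝ (Fin d))) [IsProbabilityMeasure γ]
    (hγ : ∀ t : EuclideanSpace ℝ (Fin d),
      (∫ x, Complex.exp (Complex.I * ((⟪t, x⟫ : ℝ) : ℂ)) ∂γ)
        = Complex.exp (-(1/2 : ℂ) * ((⟪t, Matrix.toEuclideanLin S t⟫ : ℝ) : ℂ))) :
    γ = gau S := by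
  refine Measure.ext_of_charFun (funext fun t => ?_)
  have h := hγ t
  rw [charFun_gau hS, charFun_apply]
  have e : ⟪t, cl S t⟫ = ⟪t, Matrix.toEuclideanLin S t⟫ := rfl
  rw [e]
  convert h using 2
  · ext x
    rw [mul_comm, real_inner_comm]
  · ring

lemma integrable_norm_pow_gau (S : Matrix (Fin d) (Fin d) ℝ) (p : ℕ) :
    Integrable (fun u => ‖u‖ ^ p) (gau S) := by
  rcases Nat.eq_zero_or_pos p with rfl | hp
  · simp
  · have := (ProbabilityTheory.IsGaussian.memLp_id (gau S) p (by simp)).integrable_norm_pow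
      hp.ne'
    simpa using this

lemma integrable_norm_gau (S : Matrix (Fin d) (Fin d) ℝ) :
    Integrable (fun u => ‖u‖) (gau S) := by
  simpa using integrable_norm_pow_gau S 1

lemma integral_clm_gau (S : Matrix (Fin d) (Fin d) ℝ) (Λ : EuclideanSpace ℝ (Fin d) →L[ℝ] ℝ) :
    ∫ u, Λ u ∂(gau S) = 0 := by
  rw [Λ.integral_comp_comm ProbabilityTheory.IsGaussian.integrable_fun_id]
  rw [gau, ProbabilityTheory.integral_id_multivariateGaussian, map_zero]

lemma integral_bilin_gau {S : Matrix (Fin d) (Fin d) ℝ} (hS : S.PosSemidef)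
    (b : EuclideanSpace ℝ (Fin d) →L[ℝ] EuclideanSpace ℝ (Fin d) →L[ℝ] ℝ) :
    ∫ u, b u u ∂(gau S) = bpair b S := by
  have h2 : ∀ i : Fin d, MemLp (fun u : EuclideanSpace ℝ (Fin d) => u i) 2 (gau S) := by
    intro i
    exact MemLp.of_le (ProbabilityTheory.IsGaussian.memLp_id (gau S) 2 (by simp))
      (by fun_prop) (Filter.Eventually.of_forall fun u => PiLp.norm_apply_le u i)
  have hm : ∀ i : Fin d, ∫ u, u i ∂(gau S) = 0 := fun i =>
    integral_clm_gau S (EuclideanSpace.proj (𝕜 := ℝ) i)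
  have hc : ∀ i j : Fin d, ∫ u, u i * u j ∂(gau S) = S i j := by
    intro i j
    have := ProbabilityTheory.covariance_eval_multivariateGaussian
      (μ := (0 : EuclideanSpace ℝ (Fin d))) hS i j
    rw [ProbabilityTheory.covariance] at this
    change ∫ ω, (ω i - ∫ u, u i ∂(gau S)) * (ω j - ∫ u, u j ∂(gau S)) ∂(gau S) = S i j at this
    simpa [hm] using this
  simp_rw [← bpair_vec]
  simp only [bpair, Matrix.of_apply]
  have hi : ∀ i j : Fin d, Integrable (fun u : EuclideanSpace ℝ (Fin d) =>
      u i * u j * b (EuclideanSpace.single i 1) (EuclideanSpace.single j 1)) (gau S) :=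
    fun i j => ((h2 i).integrable_mul (h2 j)).mul_const _
  rw [integral_finsetSum _ fun i _ => integrable_finsetSum _ fun j _ => hi i j]
  refine Finset.sum_congr rfl fun i _ => ?_
  rw [integral_finsetSum _ fun j _ => hi i j]
  refine Finset.sum_congr rfl fun j _ => ?_
  rw [integral_mul_const, hc]

open scoped MatrixOrder Matrix.Norms.L2Operator in
/-- Moments of a Gaussian law are controlled by its covariance, through
`N(0,S) = law of √S · N(0,I)`. -/
lemma integral_norm_pow_gau_le {S : Matrix (Fin d) (Fin d) ℝ} (hS : S.PosSemidef) {c : ℝ}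
    (hc : 0 ≤ c) (h : ∀ x : EuclideanSpace ℝ (Fin d), ⟪x, cl S x⟫ ≤ c ^ 2 * ‖x‖ ^ 2) (p : ℕ) :
    ∫ u, ‖u‖ ^ p ∂(gau S)
      ≤ c ^ p * ∫ u, ‖u‖ ^ p ∂(gau (1 : Matrix (Fin d) (Fin d) ℝ)) := by
  have hsq : ∀ x : EuclideanSpace ℝ (Fin d), ‖cl (CFC.sqrt S) x‖ ≤ c * ‖x‖ := by
    intro x
    have ht : (CFC.sqrt S)ᵀ = CFC.sqrt S := by
      have := (CFC.sqrt_nonneg S).isSelfAdjoint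
      rw [IsSelfAdjoint, Matrix.star_eq_conjTranspose,
        Matrix.conjTranspose_eq_transpose_of_trivial] at this
      exact this
    have h1 : ‖cl (CFC.sqrt S) x‖ ^ 2 = ⟪x, cl S x⟫ := by
      rw [← real_inner_self_eq_norm_sq, inner_cl_left, ht, ← cl_mul,
        CFC.sqrt_mul_sqrt_self _ hS.nonneg]
    refine abs_le_of_sq_le_sq' ?_ (by positivity) |>.2
    rw [h1, mul_pow]; exact h x
  have e : gau S = (gau (1 : Matrix (Fin d) (Fin d) ℝ)).map (cl (CFC.sqrt S)) := by
    rw [gau_one, gau, ProbabilityTheory.multivariateGaussian]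
    congr 1; ext1 x; simp [cl]
  rw [e, integral_map (cl _).continuous.aemeasurable (by fun_prop), ← integral_const_mul]
  refine integral_mono_of_nonneg (Filter.Eventually.of_forall fun u => by positivity)
    ((integrable_norm_pow_gau _ p).const_mul _) (Filter.Eventually.of_forall fun u => ?_)
  simp only
  rw [← mul_pow]
  gcongr
  exact hsq u

end Gauss

/-! ### Regularization by a Gaussian law with nondegenerate covariance -/

section Semigroup
variable {d : ℕ}

/-- `N(0,S + T)` is the convolution of `N(0,S)` and `N(0,T)`. -/
lemma integral_gau_add {S T : Matrix (Fin d) (Fin d) ℝ} (hS : S.PosSemidef) (hT : T.PosSemidef)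
    {K : ℝ≥0} {h : EuclideanSpace ℝ (Fin d) → ℝ} (hh : LipschitzWith K h)
    (v : EuclideanSpace ℝ (Fin d)) :
    ∫ x, h (v + x) ∂(gau (S + T)) = ∫ w, ∫ x, h (v + w + x) ∂(gau S) ∂(gau T) := by
  have hi : Integrable (fun x => h (v + x)) (gau (S + T)) :=
    hh.integrable_of_norm (integrable_norm_gau _) v
  rw [add_comm S T, ← gau_conv hT hS] at hi ⊢
  rw [integral_conv hi]
  simp_rw [add_assoc]

lemma integral_gau_map {S : Matrix (Fin d) (Fin d) ℝ} (hS : S.PosSemidef)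
    (T : Matrix (Fin d) (Fin d) ℝ) {f : EuclideanSpace ℝ (Fin d) → ℝ} (hf : Continuous f) :
    ∫ x, f x ∂(gau (T * S * Tᵀ)) = ∫ x, f (cl T x) ∂(gau S) := by
  rw [← gau_map hS, integral_map (cl T).continuous.aemeasurable hf.aestronglyMeasurable]

/-- If the covariance `S` dominates `2 s² I`, the map `y ↦ E h(T y + N(0,S))` is a double Gaussian
smoothing at scale `s` and inherits the corresponding derivative bounds. -/
lemma isC21_gau {S : Matrix (Fin d) (Fin d) ℝ} {s b : ℝ} (hs : 0 < s)
    (hS : (S - (2 * s ^ 2) • (1 : Matrix (Fin d) (Fin d) ℝ)).PosSemidef)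
    {h : EuclideanSpace ℝ (Fin d) → ℝ} (hh : LipschitzWith 1 h)
    (T : Matrix (Fin d) (Fin d) ℝ) (hT : ‖cl T‖ ≤ b) :
    ∃ G₁ G₂, IsC21 (fun y => ∫ x, h (cl T y + x) ∂(gau S)) G₁ G₂
      ((b + gm1 (EuclideanSpace ℝ (Fin d)) * b ^ 2 + gm1 (EuclideanSpace ℝ (Fin d)) ^ 2 * b ^ 3)
        * (1 + 1 / s ^ 2)) := by
  set S' := S - (2 * s ^ 2) • (1 : Matrix (Fin d) (Fin d) ℝ) with hS'
  set D : Matrix (Fin d) (Fin d) ℝ := s • (1 : Matrix (Fin d) (Fin d) ℝ) with hD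
  have h1 : (1 : Matrix (Fin d) (Fin d) ℝ).PosSemidef := Matrix.PosSemidef.one
  have hDD : (D * 1 * Dᵀ).PosSemidef := by simpa using h1.mul_mul_conjTranspose_same D
  have hSe : S = S' + D * 1 * Dᵀ + D * 1 * Dᵀ := by
    simp only [hS', hD, Matrix.transpose_smul, Matrix.transpose_one, Matrix.mul_one,
      Matrix.mul_smul, smul_smul]
    rw [add_assoc, ← add_smul, ← two_mul, ← pow_two, sub_add_cancel]
  have hcD : ∀ x, cl D x = s • x := fun x => by rw [hD, cl_smul, cl_one]
  -- rescaled test function, already averaged over the excess covariance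
  set f : EuclideanSpace ℝ (Fin d) → ℝ := fun w => ∫ x, h (s • w + x) ∂(gau S') with hf
  have hsL : LipschitzWith s.toNNReal (fun w : EuclideanSpace ℝ (Fin d) => s • w) := by
    refine LipschitzWith.of_dist_le_mul fun x y => ?_
    rw [dist_smul₀, Real.coe_toNNReal _ hs.le, Real.norm_eq_abs, abs_of_pos hs]
  have hfL : LipschitzWith s.toNNReal f := by
    have := (hh.average (integrable_norm_gau S')).comp hsL
    rwa [one_mul] at this
  have key : ∀ y, ∫ x, h (cl T y + x) ∂(gau S) = gsmooth (gsmooth f) ((s⁻¹ • cl T) y) := by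
    intro y
    have hL1 : LipschitzWith 1 (fun v => ∫ x, h (v + x) ∂(gau (S' + D * 1 * Dᵀ))) :=
      hh.average (integrable_norm_gau _)
    have hL2 : LipschitzWith 1 (fun v => ∫ x, h (v + x) ∂(gau S')) :=
      hh.average (integrable_norm_gau _)
    conv_lhs => rw [hSe]
    rw [integral_gau_add (hS.add hDD) hDD hh, integral_gau_map h1 D
      (f := fun w => ∫ x, h (cl T y + w + x) ∂(gau (S' + D * 1 * Dᵀ)))
      (hL1.continuous.comp (continuous_const.add continuous_id)), gau_one]
    unfold gsmooth
    refine integral_congr_ae (Filter.Eventually.of_forall fun u => ?_)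
    simp only
    rw [integral_gau_add hS hDD hh, integral_gau_map h1 D
      (f := fun w => ∫ x, h (cl T y + cl D u + w + x) ∂(gau S'))
      (hL2.continuous.comp (continuous_const.add continuous_id)), gau_one]
    refine integral_congr_ae (Filter.Eventually.of_forall fun v => ?_)
    simp only [hf, hcD, smul_add, FunLike.coe_smul, Pi.smul_apply, smul_smul,
      mul_inv_cancel₀ hs.ne', one_smul]
  simp_rw [key]
  have hb : 0 ≤ b := (norm_nonneg _).trans hT
  have hg : 0 ≤ gm1 (EuclideanSpace ℝ (Fin d)) := gm1_nonneg
  have hn : ‖s⁻¹ • cl T‖ ≤ s⁻¹ * b := by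
    rw [norm_smul, Real.norm_eq_abs, abs_of_pos (inv_pos.2 hs)]
    gcongr
  have hs1 : s⁻¹ ≤ 1 + 1 / s ^ 2 := by
    rw [one_div, ← inv_pow]
    nlinarith [sq_nonneg (s⁻¹ - 1), inv_pos.2 hs]
  have hs2 : s⁻¹ ^ 2 ≤ 1 + 1 / s ^ 2 := by rw [one_div, ← inv_pow]; linarith
  have hs0 : 1 ≤ 1 + 1 / s ^ 2 := by
    have : 0 ≤ 1 / s ^ 2 := by positivity
    linarith
  refine exists_isC21_gsmooth hfL (s⁻¹ • cl T) ?_ ?_ ?_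
  · rw [Real.coe_toNNReal _ hs.le]
    calc s * ‖s⁻¹ • cl T‖ ≤ s * (s⁻¹ * b) := by gcongr
      _ = b * 1 := by field_simp
      _ ≤ _ := by
        gcongr
        have : 0 ≤ gm1 (EuclideanSpace ℝ (Fin d)) * b ^ 2 := by positivity
        have : 0 ≤ gm1 (EuclideanSpace ℝ (Fin d)) ^ 2 * b ^ 3 := by positivity
        linarith
  · rw [Real.coe_toNNReal _ hs.le]
    calc s * gm1 (EuclideanSpace ℝ (Fin d)) * ‖s⁻¹ • cl T‖ ^ 2
        ≤ s * gm1 (EuclideanSpace ℝ (Fin d)) * (s⁻¹ * b) ^ 2 := by gcongr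
      _ = gm1 (EuclideanSpace ℝ (Fin d)) * b ^ 2 * s⁻¹ := by field_simp
      _ ≤ _ := by
        gcongr
        have : 0 ≤ gm1 (EuclideanSpace ℝ (Fin d)) ^ 2 * b ^ 3 := by positivity
        linarith
  · rw [Real.coe_toNNReal _ hs.le]
    calc s * gm1 (EuclideanSpace ℝ (Fin d)) ^ 2 * ‖s⁻¹ • cl T‖ ^ 3
        ≤ s * gm1 (EuclideanSpace ℝ (Fin d)) ^ 2 * (s⁻¹ * b) ^ 3 := by gcongr
      _ = gm1 (EuclideanSpace ℝ (Fin d)) ^ 2 * b ^ 3 * s⁻¹ ^ 2 := by field_simp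
      _ ≤ _ := by
        gcongr
        have : 0 ≤ gm1 (EuclideanSpace ℝ (Fin d)) * b ^ 2 := by positivity
        linarith

end Semigroup

/-! ### The linear Gaussian recursion and the Lyapunov equation -/

section Lyapunov
variable {d : ℕ}

lemma posDef_inner_lower {S : Matrix (Fin d) (Fin d) ℝ} (hS : S.PosDef) :
    ∃ m : ℝ, 0 < m ∧ ∀ x : EuclideanSpace ℝ (Fin d), m * ‖x‖ ^ 2 ≤ ⟪x, cl S x⟫ := by
  have hcont : Continuous fun x : EuclideanSpace ℝ (Fin d) => ⟪x, cl S x⟫ :=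
    continuous_id.inner (cl S).continuous
  have hpos : ∀ x : EuclideanSpace ℝ (Fin d), x ≠ 0 → 0 < ⟪x, cl S x⟫ := by
    intro x hx
    rw [inner_cl]
    have hx' : x.ofLp ≠ 0 := fun h => hx (by ext i; exact congrFun h i)
    simpa using hS.dotProduct_mulVec_pos hx'
  rcases (Metric.sphere (0 : EuclideanSpace ℝ (Fin d)) 1).eq_empty_or_nonempty with he | hne
  · refine ⟨1, one_pos, fun x => ?_⟩
    have hx : x = 0 := by
      by_contra hx
      have : ‖x‖⁻¹ • x ∈ Metric.sphere (0 : EuclideanSpace ℝ (Fin d)) 1 := by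
        simp [norm_smul, inv_mul_cancel₀ (norm_ne_zero_iff.2 hx)]
      rw [he] at this
      exact this
    simp [hx]
  · obtain ⟨x₀, hx₀, hmin⟩ := (isCompact_sphere (0 : EuclideanSpace ℝ (Fin d)) 1).exists_isMinOn
      hne hcont.continuousOn
    have hx₀n : ‖x₀‖ = 1 := by simpa using hx₀
    refine ⟨⟪x₀, cl S x₀⟫, hpos x₀ (by intro h; simp [h] at hx₀n), fun x => ?_⟩
    rcases eq_or_ne x 0 with rfl | hx
    · simp
    have hxn : ‖x‖ ≠ 0 := norm_ne_zero_iff.2 hx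
    have h1 := hmin (show ‖x‖⁻¹ • x ∈ Metric.sphere (0 : EuclideanSpace ℝ (Fin d)) 1 by
      simp [norm_smul, inv_mul_cancel₀ hxn])
    simp only [Set.mem_ofPred_eq, map_smul, inner_smul_left, inner_smul_right] at h1
    simp only [conj_trivial] at h1
    calc ⟪x₀, cl S x₀⟫ * ‖x‖ ^ 2 ≤ (‖x‖⁻¹ * (‖x‖⁻¹ * ⟪x, cl S x⟫)) * ‖x‖ ^ 2 := by gcongr
      _ = _ := by field_simp

lemma inner_cl_le (S : Matrix (Fin d) (Fin d) ℝ) (x : EuclideanSpace ℝ (Fin d)) :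
    ⟪x, cl S x⟫ ≤ ‖cl S‖ * ‖x‖ ^ 2 :=
  (real_inner_le_norm _ _).trans (by
    have := (cl S).le_opNorm x
    nlinarith [norm_nonneg x])

lemma norm_cl_sq_le {T : Matrix (Fin d) (Fin d) ℝ} {c : ℝ} (hc : 0 ≤ c)
    (h : ∀ x : EuclideanSpace ℝ (Fin d), ‖cl Tᵀ x‖ ≤ c * ‖x‖) : ‖cl T‖ ≤ c := by
  refine ContinuousLinearMap.opNorm_le_bound _ hc fun x => ?_
  have h1 : ‖cl T x‖ ^ 2 ≤ ‖x‖ * (c * ‖cl T x‖) := by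
    rw [← real_inner_self_eq_norm_sq, inner_cl_left]
    exact (real_inner_le_norm _ _).trans (by gcongr; exact h _)
  rcases eq_or_ne (cl T x) 0 with h0 | h0
  · rw [h0, norm_zero]; positivity
  · have := norm_pos_iff.2 h0
    nlinarith

/-- Covariance of the `k`-step noise of the linear Gaussian recursion with matrix `B` and
stationary covariance `S`. -/
noncomputable def kcov (S B : Matrix (Fin d) (Fin d) ℝ) (k : ℕ) : Matrix (Fin d) (Fin d) ℝ :=
  S - B ^ k * S * (B ^ k)ᵀ

/-- `k`-step transition operator of the linear Gaussian recursion `y ↦ B y + N(0, S - B S Bᵀ)`,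
whose stationary law is `N(0,S)`. -/
noncomputable def semig (S B : Matrix (Fin d) (Fin d) ℝ) (k : ℕ)
    (h : EuclideanSpace ℝ (Fin d) → ℝ) (y : EuclideanSpace ℝ (Fin d)) : ℝ :=
  ∫ x, h (cl (B ^ k) y + x) ∂(gau (kcov S B k))

lemma kcov_succ (S B : Matrix (Fin d) (Fin d) ℝ) (k : ℕ) :
    kcov S B (k + 1) = kcov S B k + B ^ k * kcov S B 1 * (B ^ k)ᵀ := by
  simp only [kcov, pow_succ, pow_zero, one_mul, Matrix.transpose_mul, Matrix.mul_sub, Matrix.sub_mul]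
  simp only [Matrix.mul_assoc]
  abel

lemma kcov_add (S B : Matrix (Fin d) (Fin d) ℝ) (k : ℕ) :
    kcov S B k + B ^ k * S * (B ^ k)ᵀ = S := by
  simp [kcov]

section
variable {S B : Matrix (Fin d) (Fin d) ℝ} {h : EuclideanSpace ℝ (Fin d) → ℝ}

lemma semig_zero (h : EuclideanSpace ℝ (Fin d) → ℝ) (y : EuclideanSpace ℝ (Fin d)) :
    semig S B 0 h y = h y := by
  have h0 : kcov S B 0 = 0 := by simp [kcov]
  have h1 : gau (0 : Matrix (Fin d) (Fin d) ℝ) = Measure.dirac 0 := by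
    rw [gau, ProbabilityTheory.multivariateGaussian]
    simp
  rw [semig, h0, h1, integral_dirac]
  simp [cl_one]

lemma semig_lip (hh : LipschitzWith 1 h) (k : ℕ) :
    LipschitzWith ‖cl (B ^ k)‖₊ (semig S B k h) := by
  have := (hh.average (integrable_norm_gau (kcov S B k))).comp (cl (B ^ k)).lipschitz
  rwa [one_mul] at this

/-- The semigroup property, with the additional step taken first. -/
lemma semig_succ (hP : ∀ k, (kcov S B k).PosSemidef) (hh : LipschitzWith 1 h) (k : ℕ)
    (y : EuclideanSpace ℝ (Fin d)) :
    semig S B (k + 1) h y = ∫ u, semig S B k h (cl B y + u) ∂(gau (kcov S B 1)) := by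
  have hQ : (B ^ k * kcov S B 1 * (B ^ k)ᵀ).PosSemidef := by
    simpa using (hP 1).mul_mul_conjTranspose_same (B ^ k)
  have hL : LipschitzWith 1 (fun v => ∫ x, h (v + x) ∂(gau (kcov S B k))) :=
    hh.average (integrable_norm_gau _)
  rw [semig, kcov_succ, integral_gau_add (hP k) hQ hh, integral_gau_map (hP 1) (B ^ k)
    (f := fun w => ∫ x, h (cl (B ^ (k + 1)) y + w + x) ∂(gau (kcov S B k)))
    (hL.continuous.comp (continuous_const.add continuous_id))]
  refine integral_congr_ae (Filter.Eventually.of_forall fun u => ?_)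
  simp only [semig, map_add, pow_succ, cl_mul]

/-- `N(0,S)` is stationary for the recursion. -/
lemma integral_semig (hS : S.PosSemidef) (hP : ∀ k, (kcov S B k).PosSemidef)
    (hh : LipschitzWith 1 h) (k : ℕ) :
    ∫ y, semig S B k h y ∂(gau S) = ∫ y, h y ∂(gau S) := by
  have hQ : (B ^ k * S * (B ^ k)ᵀ).PosSemidef := by
    simpa using hS.mul_mul_conjTranspose_same (B ^ k)
  have hL : LipschitzWith 1 (fun v => ∫ x, h (v + x) ∂(gau (kcov S B k))) :=
    hh.average (integrable_norm_gau _)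
  have h1 := integral_gau_add (hP k) hQ hh 0
  rw [kcov_add] at h1
  simp only [zero_add] at h1
  rw [h1, integral_gau_map hS (B ^ k) hL.continuous]
  rfl

end

/-- Discrete Lyapunov estimate: for small `α` the matrix `B = 1 + αJ` contracts the quadratic form
of `S` in the transposed sense, because `B S Bᵀ = S - αM + α² J S Jᵀ`. -/
lemma lyapunov {J S M : Matrix (Fin d) (Fin d) ℝ} (hM : M.PosDef)
    (hL : J * S + S * Jᵀ = -M) :
    ∃ a c : ℝ, 0 < a ∧ 0 < c ∧ a * c ≤ 1 ∧ ∀ α, 0 < α → α ≤ a → ∀ k : ℕ,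
      ∀ t : EuclideanSpace ℝ (Fin d),
        ⟪t, cl ((1 + α • J) ^ k * S * ((1 + α • J) ^ k)ᵀ) t⟫ ≤ (1 - c * α) ^ k * ⟪t, cl S t⟫ := by
  obtain ⟨m, hm, hmM⟩ := posDef_inner_lower hM
  set N := ‖cl (J * S * Jᵀ)‖ with hN
  have hN0 : 0 ≤ N := norm_nonneg _
  set q := ‖cl S‖ + 1 with hq
  have hq0 : 0 < q := by have := norm_nonneg (cl S); linarith
  set c := m / (2 * q) with hc
  have hc0 : 0 < c := by positivity
  refine ⟨min (m / (2 * (N + 1))) (1 / c), c, by positivity, hc0, ?_, ?_⟩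
  · calc _ ≤ 1 / c * c := by gcongr; exact min_le_right _ _
      _ = 1 := by field_simp
  intro α hα hαa k
  have hα1 : α * (N + 1) ≤ m / 2 := by
    have := hαa.trans (min_le_left _ _)
    rw [le_div_iff₀ (by positivity)] at this
    linarith
  have hα2 : 0 ≤ 1 - c * α := by
    have := hαa.trans (min_le_right _ _)
    rw [le_div_iff₀ hc0] at this
    linarith
  have hone : ∀ t : EuclideanSpace ℝ (Fin d),
      ⟪t, cl ((1 + α • J) * S * (1 + α • J)ᵀ) t⟫ ≤ (1 - c * α) * ⟪t, cl S t⟫ := by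
    intro t
    have he : (1 + α • J) * S * (1 + α • J)ᵀ = S + α • (J * S + S * Jᵀ)
        + (α ^ 2) • (J * S * Jᵀ) := by
      simp only [Matrix.transpose_add, Matrix.transpose_one, Matrix.transpose_smul,
        Matrix.add_mul, Matrix.mul_add, Matrix.one_mul, Matrix.mul_one, Matrix.smul_mul,
        Matrix.mul_smul, smul_add, smul_smul, pow_two]
      abel
    rw [he, hL, cl_add, cl_add, cl_smul, cl_smul, cl_neg, inner_add_right, inner_add_right,
      inner_smul_right, inner_smul_right, inner_neg_right]
    have h1 := hmM t
    have h2 := inner_cl_le (J * S * Jᵀ) t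
    have h3 : ⟪t, cl S t⟫ ≤ q * ‖t‖ ^ 2 := (inner_cl_le S t).trans (by gcongr; linarith)
    have h4 : c * ⟪t, cl S t⟫ ≤ m / 2 * ‖t‖ ^ 2 := by
      calc _ ≤ c * (q * ‖t‖ ^ 2) := by gcongr
        _ = _ := by rw [hc]; field_simp
    have h5 : α ^ 2 * ⟪t, cl (J * S * Jᵀ) t⟫ ≤ α * (m / 2) * ‖t‖ ^ 2 := by
      calc _ ≤ α ^ 2 * (N * ‖t‖ ^ 2) := by gcongr
        _ ≤ α * (α * (N + 1)) * ‖t‖ ^ 2 := by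
          have : 0 ≤ α * α * ‖t‖ ^ 2 := by positivity
          linarith
        _ ≤ _ := by gcongr
    nlinarith
  induction k with
  | zero => intro t; simp
  | succ k ih =>
    intro t
    have he : (1 + α • J) ^ (k + 1) * S * ((1 + α • J) ^ (k + 1))ᵀ
        = (1 + α • J) ^ k * ((1 + α • J) * S * (1 + α • J)ᵀ) * ((1 + α • J) ^ k)ᵀ := by
      simp only [pow_succ, Matrix.transpose_mul, Matrix.mul_assoc]
    have hmv : ∀ X T : Matrix (Fin d) (Fin d) ℝ, ⟪t, cl (X * T * Xᵀ) t⟫ = ⟪cl Xᵀ t, cl T (cl Xᵀ t)⟫ := by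
      intro X T
      rw [inner_cl_left, Matrix.transpose_transpose, cl_mul, cl_mul]
    rw [he, hmv]
    refine (hone _).trans ?_
    rw [← hmv]
    exact (mul_le_mul_of_nonneg_left (ih t) hα2).trans (le_of_eq (by ring))

end Lyapunov

/-! ### Uniform estimates for the Gaussian recursion -/

section Package
variable {d : ℕ}

lemma one_sub_pow_le_inv {x : ℝ} (hx : 0 ≤ x) (hx1 : x ≤ 1) (k : ℕ) :
    (1 - x) ^ k ≤ 1 / (1 + k * x) := by
  have hb : 1 + (k : ℝ) * x ≤ (1 + x) ^ k := one_add_mul_le_pow (by linarith) k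
  have hp : 0 < 1 + (k : ℝ) * x := by positivity
  rw [le_div_iff₀ hp]
  calc (1 - x) ^ k * (1 + k * x) ≤ (1 - x) ^ k * (1 + x) ^ k :=
        mul_le_mul_of_nonneg_left hb (pow_nonneg (by linarith) k)
    _ = (1 - x ^ 2) ^ k := by rw [← mul_pow]; ring
    _ ≤ 1 := pow_le_one₀ (by nlinarith) (by nlinarith)

lemma IsC21.mono {g : EuclideanSpace ℝ (Fin d) → ℝ} {G₁ G₂} {K K' : ℝ} (hg : IsC21 g G₁ G₂ K)
    (h : K ≤ K') : IsC21 g G₁ G₂ K' where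
  deriv1 := hg.deriv1
  deriv2 := hg.deriv2
  bound1 x := (hg.bound1 x).trans h
  bound2 x := (hg.bound2 x).trans h
  lip2 x y := (hg.lip2 x y).trans (mul_le_mul_of_nonneg_right h (norm_nonneg _))

set_option maxHeartbeats 2000000 in
/-- Quantitative properties, uniform in small `α`, of the Gaussian recursion with matrix
`B = 1 + αJ` whose stationary covariance solves the Lyapunov equation: contraction of `B ^ k`,
regularization by `k` steps, and size and covariance of the one-step noise. -/
lemma gaussian_package {J S M : Matrix (Fin d) (Fin d) ℝ} (hS : S.PosDef) (hM : M.PosDef)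
    (hL : J * S + S * Jᵀ = -M) :
    ∃ a c C : ℝ, 0 < a ∧ a ≤ 1 ∧ 0 < c ∧ a * c ≤ 1 ∧ 0 ≤ C ∧ ∀ α, 0 < α → α ≤ a →
      (∀ k, (kcov S (1 + α • J) k).PosSemidef) ∧
      (∀ k : ℕ, ‖cl ((1 + α • J) ^ k)‖ ^ 2 ≤ C ^ 2 * (1 - c * α) ^ k) ∧
      (∀ k : ℕ, 1 ≤ k → ∀ h : EuclideanSpace ℝ (Fin d) → ℝ, LipschitzWith 1 h →
        ∃ G₁ G₂, IsC21 (semig S (1 + α • J) k h) G₁ G₂ (C * (1 + 1 / (k * α)))) ∧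
      (∀ p : ℕ, p ≤ 3 → ∫ u, ‖u‖ ^ p ∂(gau (kcov S (1 + α • J) 1)) ≤ C * Real.sqrt α ^ p) ∧
      (∀ b : EuclideanSpace ℝ (Fin d) →L[ℝ] EuclideanSpace ℝ (Fin d) →L[ℝ] ℝ,
        |∫ u, b u u ∂(gau (kcov S (1 + α • J) 1)) - α * bpair b M| ≤ C * ‖b‖ * α ^ 2) := by
  obtain ⟨a, c, ha, hc, hac, hlya⟩ := lyapunov hM hL
  obtain ⟨q0, hq0, hq0S⟩ := posDef_inner_lower hS
  set q1 := ‖cl S‖ with hq1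
  have hq1' : 0 ≤ q1 := norm_nonneg _
  have hSt : Sᵀ = S := by
    have := hS.isHermitian
    rwa [Matrix.IsHermitian, Matrix.conjTranspose_eq_transpose_of_trivial] at this
  set C₀ := Real.sqrt (q1 / q0) with hC₀
  have hC₀0 : 0 ≤ C₀ := Real.sqrt_nonneg _
  have hC₀sq : C₀ ^ 2 = q1 / q0 := Real.sq_sqrt (by positivity)
  set g := gm1 (EuclideanSpace ℝ (Fin d)) with hg
  have hg0 : 0 ≤ g := gm1_nonneg
  set C₁ := (C₀ + g * C₀ ^ 2 + g ^ 2 * C₀ ^ 3) * (1 + 2 / q0 + 2 / (q0 * c)) with hC₁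
  have hC₁0 : 0 ≤ C₁ := by positivity
  set m : ℕ → ℝ := fun p => ∫ u, ‖u‖ ^ p ∂(gau (1 : Matrix (Fin d) (Fin d) ℝ)) with hm
  have hm0 : ∀ p, 0 ≤ m p := fun p => integral_nonneg fun u => by positivity
  set e := Real.sqrt ‖cl M‖ with he
  have he0 : 0 ≤ e := Real.sqrt_nonneg _
  have hesq : e ^ 2 = ‖cl M‖ := Real.sq_sqrt (norm_nonneg _)
  set C₂ := m 0 + e * m 1 + e ^ 2 * m 2 + e ^ 3 * m 3 with hC₂
  have hC₂p : ∀ p, p ≤ 3 → e ^ p * m p ≤ C₂ := by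
    intro p hp
    have h0 := hm0 0
    have h1 : 0 ≤ e * m 1 := mul_nonneg he0 (hm0 1)
    have h2 : 0 ≤ e ^ 2 * m 2 := mul_nonneg (by positivity) (hm0 2)
    have h3 : 0 ≤ e ^ 3 * m 3 := mul_nonneg (by positivity) (hm0 3)
    interval_cases p
    · rw [pow_zero, one_mul]; linarith
    · rw [pow_one]; linarith
    · linarith
    · linarith
  have hC₂0 : 0 ≤ C₂ := (mul_nonneg (pow_nonneg he0 0) (hm0 0)).trans (hC₂p 0 (by norm_num))
  obtain ⟨s, hs⟩ : ∃ s : ℝ, ∀ i j, |(J * S * Jᵀ) i j| ≤ s := by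
    refine ⟨∑ i, ∑ j, |(J * S * Jᵀ) i j|, fun i j => ?_⟩
    refine (Finset.single_le_sum (f := fun j => |(J * S * Jᵀ) i j|)
      (fun _ _ => abs_nonneg _) (Finset.mem_univ j)).trans ?_
    exact Finset.single_le_sum (f := fun i => ∑ j, |(J * S * Jᵀ) i j|)
      (fun _ _ => Finset.sum_nonneg fun _ _ => abs_nonneg _) (Finset.mem_univ i)
  set C₃ := |(d : ℝ) ^ 2 * s| with hC₃
  have hC₃0 : 0 ≤ C₃ := abs_nonneg _
  refine ⟨min a 1, c, C₀ + C₁ + C₂ + C₃, by positivity, min_le_right _ _, hc, ?_, by positivity, ?_⟩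
  · exact (mul_le_mul_of_nonneg_right (min_le_left _ _) hc.le).trans hac
  intro α hα hαa
  have hαa' : α ≤ a := hαa.trans (min_le_left _ _)
  have hα1 : α ≤ 1 := hαa.trans (min_le_right _ _)
  have hcα : c * α ≤ 1 := by nlinarith
  have hcα0 : 0 ≤ c * α := by positivity
  have hρ : 0 ≤ 1 - c * α := by linarith
  have hρ1 : 1 - c * α ≤ 1 := by linarith
  set B := 1 + α • J with hB
  have hQ : ∀ k : ℕ, ∀ t, ⟪t, cl (B ^ k * S * (B ^ k)ᵀ) t⟫ ≤ (1 - c * α) ^ k * ⟪t, cl S t⟫ :=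
    hlya α hα hαa'
  have hq : ∀ t, 0 ≤ ⟪t, cl S t⟫ := fun t => (by positivity : 0 ≤ q0 * ‖t‖ ^ 2).trans (hq0S t)
  have hsym : ∀ k, (kcov S B k)ᵀ = kcov S B k := by
    intro k
    simp only [kcov, Matrix.transpose_sub, Matrix.transpose_mul, Matrix.transpose_transpose, hSt,
      Matrix.mul_assoc]
  -- the `k`-step noise covariance dominates `(1 - (1 - cα)^k) S`
  have hlow : ∀ k : ℕ, ∀ t, (1 - (1 - c * α) ^ k) * (q0 * ‖t‖ ^ 2) ≤ ⟪t, cl (kcov S B k) t⟫ := by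
    intro k t
    rw [kcov, cl_sub, inner_sub_right]
    have h1 := hQ k t
    have h2 : (1 - c * α) ^ k ≤ 1 := pow_le_one₀ hρ hρ1
    have h3 := mul_le_mul_of_nonneg_left (hq0S t) (sub_nonneg.2 h2)
    linarith
  have hPSD : ∀ k, (kcov S B k).PosSemidef := by
    intro k
    refine posSemidef_of_inner (hsym k) fun t => le_trans ?_ (hlow k t)
    have h2 : (1 - c * α) ^ k ≤ 1 := pow_le_one₀ hρ hρ1
    have := sub_nonneg.2 h2
    positivity
  have hBn : ∀ k : ℕ, ‖cl (B ^ k)‖ ^ 2 ≤ C₀ ^ 2 * (1 - c * α) ^ k := by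
    intro k
    have h0 : 0 ≤ C₀ ^ 2 * (1 - c * α) ^ k := by positivity
    have h1 : ‖cl (B ^ k)‖ ≤ Real.sqrt (C₀ ^ 2 * (1 - c * α) ^ k) := by
      refine norm_cl_sq_le (Real.sqrt_nonneg _) fun x => ?_
      refine abs_le_of_sq_le_sq' ?_ (by positivity) |>.2
      rw [mul_pow, Real.sq_sqrt h0, hC₀sq]
      have h2 := hQ k x
      rw [cl_mul, cl_mul] at h2
      have h3 : ⟪x, cl (B ^ k) (cl S (cl (B ^ k)ᵀ x))⟫
          = ⟪cl (B ^ k)ᵀ x, cl S (cl (B ^ k)ᵀ x)⟫ := by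
        rw [inner_cl_left, Matrix.transpose_transpose]
      rw [h3] at h2
      have h4 := hq0S (cl (B ^ k)ᵀ x)
      have h5 := inner_cl_le S x
      have h6 : q0 * ‖cl (B ^ k)ᵀ x‖ ^ 2 ≤ (1 - c * α) ^ k * (q1 * ‖x‖ ^ 2) :=
        (h4.trans h2).trans (by gcongr)
      calc _ = (q0 * ‖cl (B ^ k)ᵀ x‖ ^ 2) / q0 := by field_simp
        _ ≤ ((1 - c * α) ^ k * (q1 * ‖x‖ ^ 2)) / q0 := by gcongr
        _ = _ := by ring
    calc _ ≤ Real.sqrt (C₀ ^ 2 * (1 - c * α) ^ k) ^ 2 := by gcongr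
      _ = _ := Real.sq_sqrt h0
  -- the Lyapunov equation turns the one-step noise covariance into `αM` up to `O(α²)`
  have hk1 : kcov S B 1 = α • M - (α ^ 2) • (J * S * Jᵀ) := by
    have h1 : B ^ 1 * S * (B ^ 1)ᵀ = S + α • (J * S + S * Jᵀ) + (α ^ 2) • (J * S * Jᵀ) := by
      simp only [hB, pow_one, Matrix.transpose_add, Matrix.transpose_one, Matrix.transpose_smul,
        Matrix.add_mul, Matrix.mul_add, Matrix.one_mul, Matrix.mul_one, Matrix.smul_mul,
        Matrix.mul_smul, smul_add, smul_smul, pow_two]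
      abel
    rw [kcov, h1, hL, smul_neg]; abel
  refine ⟨hPSD, fun k => ?_, fun k hk h hh => ?_, fun p hp => ?_, fun b => ?_⟩
  · refine (hBn k).trans ?_
    have : 0 ≤ (1 - c * α) ^ k := by positivity
    gcongr
    linarith
  · have hkα : 0 < (k : ℝ) * α := by positivity
    set τ := 1 - (1 - c * α) ^ k with hτ
    have hinv := one_sub_pow_le_inv hcα0 hcα k
    have hτl : (k * (c * α)) / (1 + k * (c * α)) ≤ τ := by
      rw [hτ]
      have : (k * (c * α)) / (1 + k * (c * α)) = 1 - 1 / (1 + k * (c * α)) := by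
        field_simp; ring
      linarith
    have hτ0 : 0 < τ := lt_of_lt_of_le (by positivity) hτl
    have hτi : 1 / τ ≤ 1 + 1 / (c * (k * α)) := by
      rw [div_le_iff₀ hτ0]
      calc (1 : ℝ) = (1 + 1 / (c * (k * α))) * ((k * (c * α)) / (1 + k * (c * α))) := by
            field_simp; ring
        _ ≤ _ := by gcongr
    -- the smoothing scale: `2σ²I ≤ kcov S B k`, with `1/σ²` of order `1 + 1/(kα)`
    set σ := Real.sqrt (q0 * τ / 2) with hσ
    have hσ0 : 0 < σ := Real.sqrt_pos.2 (by positivity)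
    have hσ2 : σ ^ 2 = q0 * τ / 2 := Real.sq_sqrt (by positivity)
    have hdom : (kcov S B k - (2 * σ ^ 2) • (1 : Matrix (Fin d) (Fin d) ℝ)).PosSemidef := by
      refine posSemidef_of_inner ?_ fun t => ?_
      · rw [Matrix.transpose_sub, hsym, Matrix.transpose_smul, Matrix.transpose_one]
      · rw [cl_sub, cl_smul, cl_one, inner_sub_right, inner_smul_right,
          real_inner_self_eq_norm_sq, hσ2]
        have := hlow k t
        linarith
    have hBC : ‖cl (B ^ k)‖ ≤ C₀ := by
      refine abs_le_of_sq_le_sq' ?_ hC₀0 |>.2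
      refine (hBn k).trans ?_
      calc _ ≤ C₀ ^ 2 * 1 := by gcongr; exact pow_le_one₀ hρ hρ1
        _ = _ := mul_one _
    obtain ⟨G₁, G₂, hG⟩ := isC21_gau hσ0 hdom hh (B ^ k) hBC
    refine ⟨G₁, G₂, hG.mono ?_⟩
    have h1 : 1 + 1 / σ ^ 2 ≤ (1 + 2 / q0 + 2 / (q0 * c)) * (1 + 1 / (k * α)) := by
      have h2 : 1 / σ ^ 2 = 2 / q0 * (1 / τ) := by rw [hσ2]; field_simp
      have h3 : 2 / q0 * (1 / τ) ≤ 2 / q0 * (1 + 1 / (c * (k * α))) := by gcongr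
      have h4 : 2 / q0 * (1 + 1 / (c * (k * α))) = 2 / q0 + 2 / (q0 * c) * (1 / (k * α)) := by
        field_simp
      have h5 : 0 ≤ 1 / (k * α) := by positivity
      have h6 : 0 ≤ 2 / q0 * (1 / (k * α)) := by positivity
      have h7 : 0 ≤ 2 / (q0 * c) := by positivity
      rw [h2]
      nlinarith
    calc _ ≤ (C₀ + g * C₀ ^ 2 + g ^ 2 * C₀ ^ 3)
          * ((1 + 2 / q0 + 2 / (q0 * c)) * (1 + 1 / (k * α))) := by gcongr
      _ = C₁ * (1 + 1 / (k * α)) := by rw [hC₁]; ring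
      _ ≤ _ := by gcongr; linarith
  · have h1 : ∀ x, ⟪x, cl (kcov S B 1) x⟫ ≤ (e * Real.sqrt α) ^ 2 * ‖x‖ ^ 2 := by
      intro x
      rw [hk1, cl_sub, cl_smul, cl_smul, inner_sub_right, inner_smul_right, inner_smul_right,
        mul_pow, hesq, Real.sq_sqrt hα.le]
      have h2 := inner_cl_le M x
      have h3 : 0 ≤ ⟪x, cl (J * S * Jᵀ) x⟫ := by
        rw [cl_mul, cl_mul]
        have := hq (cl Jᵀ x)
        rwa [inner_cl_left, Matrix.transpose_transpose] at this
      have h4 : 0 ≤ α ^ 2 * ⟪x, cl (J * S * Jᵀ) x⟫ := by positivity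
      have h5 := mul_le_mul_of_nonneg_left h2 hα.le
      linarith
    refine (integral_norm_pow_gau_le (hPSD 1) (by positivity) h1 p).trans ?_
    calc (e * Real.sqrt α) ^ p * m p = e ^ p * m p * Real.sqrt α ^ p := by ring
      _ ≤ C₂ * Real.sqrt α ^ p := by gcongr; exact hC₂p p hp
      _ ≤ _ := by gcongr; linarith
  · rw [integral_bilin_gau (hPSD 1), hk1, bpair_sub, bpair_smul, bpair_smul, sub_sub_cancel_left,
      abs_neg, abs_mul, abs_of_nonneg (by positivity)]
    calc _ ≤ α ^ 2 * (d ^ 2 * s * ‖b‖) := by gcongr; exact abs_bpair_le b _ hs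
      _ ≤ α ^ 2 * (C₃ * ‖b‖) := by gcongr; exact le_abs_self _
      _ = C₃ * ‖b‖ * α ^ 2 := by ring
      _ ≤ _ := by gcongr; linarith

end Package

/-! ### The long-run covariance and the Poisson equation -/

section Markov
variable {Z : Type*} [MeasurableSpace Z]

/-- Bounded measurable real functions. -/
def BM (f : Z → ℝ) : Prop := Measurable f ∧ ∃ C, ∀ z, |f z| ≤ C

namespace BM
variable {f g : Z → ℝ}

lemma add (hf : BM f) (hg : BM g) : BM (fun z => f z + g z) := by
  obtain ⟨C, hC⟩ := hf.2
  obtain ⟨D, hD⟩ := hg.2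
  exact ⟨hf.1.add hg.1, C + D, fun z => (abs_add_le _ _).trans (add_le_add (hC z) (hD z))⟩

lemma const_mul (c : ℝ) (hf : BM f) : BM (fun z => c * f z) := by
  obtain ⟨C, hC⟩ := hf.2
  refine ⟨hf.1.const_mul c, |c| * C, fun z => ?_⟩
  rw [abs_mul]
  exact mul_le_mul_of_nonneg_left (hC z) (abs_nonneg c)

lemma const (c : ℝ) : BM (fun _ : Z => c) := ⟨measurable_const, |c|, fun _ => le_rfl⟩

lemma sub (hf : BM f) (hg : BM g) : BM (fun z => f z - g z) := by
  have := hf.add (hg.const_mul (-1))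
  simpa [sub_eq_add_neg] using this

lemma mul (hf : BM f) (hg : BM g) : BM (fun z => f z * g z) := by
  obtain ⟨C, hC⟩ := hf.2
  obtain ⟨D, hD⟩ := hg.2
  refine ⟨hf.1.mul hg.1, C * D, fun z => ?_⟩
  rw [abs_mul]
  exact mul_le_mul (hC z) (hD z) (abs_nonneg _) ((abs_nonneg _).trans (hC z))

lemma integrable (hf : BM f) (ν : Measure Z) [IsFiniteMeasure ν] : Integrable f ν := by
  obtain ⟨C, hC⟩ := hf.2
  exact Integrable.of_bound hf.1.aestronglyMeasurable C (Filter.Eventually.of_forall hC)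

end BM

/-- The Markov operator of `P` on real functions. -/
noncomputable def sOp (P : ProbabilityTheory.Kernel Z Z) (f : Z → ℝ) (z : Z) : ℝ :=
  ∫ z', f z' ∂(P z)

variable (P : ProbabilityTheory.Kernel Z Z) [ProbabilityTheory.IsMarkovKernel P]
  {f g : Z → ℝ}

lemma measurable_sOp (hf : Measurable f) : Measurable (sOp P f) :=
  (hf.stronglyMeasurable.integral_kernel (κ := P)).measurable

lemma abs_sOp_le {C : ℝ} (hC : ∀ z, |f z| ≤ C) (z : Z) : |sOp P f z| ≤ C := by
  have := norm_integral_le_of_norm_le_const (μ := P z) (f := f) (Filter.Eventually.of_forall hC)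
  simpa [sOp] using this

lemma BM.sOp (hf : BM f) : BM (sOp P f) := by
  obtain ⟨C, hC⟩ := hf.2
  exact ⟨measurable_sOp P hf.1, C, abs_sOp_le P hC⟩

lemma BM.iter (hf : BM f) (n : ℕ) : BM ((_root_.sOp P)^[n] f) := by
  induction n with
  | zero => exact hf
  | succ n ih => rw [Function.iterate_succ_apply']; exact ih.sOp P

lemma abs_iter_le {C : ℝ} (hC : ∀ z, |f z| ≤ C) (n : ℕ) (z : Z) : |(sOp P)^[n] f z| ≤ C := by
  induction n generalizing z with
  | zero => exact hC z
  | succ n ih => rw [Function.iterate_succ_apply']; exact abs_sOp_le P ih z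

lemma sOp_add (hf : BM f) (hg : BM g) (z : Z) :
    sOp P (fun z => f z + g z) z = sOp P f z + sOp P g z :=
  integral_add (hf.integrable _) (hg.integrable _)

lemma sOp_sub (hf : BM f) (hg : BM g) (z : Z) :
    sOp P (fun z => f z - g z) z = sOp P f z - sOp P g z :=
  integral_sub (hf.integrable _) (hg.integrable _)

lemma sOp_const_mul (c : ℝ) (f : Z → ℝ) (z : Z) : sOp P (fun z => c * f z) z = c * sOp P f z :=
  integral_const_mul _ _

/-- Jensen's inequality for the square. -/
lemma sq_sOp_le (hf : BM f) (z : Z) : sOp P f z * sOp P f z ≤ sOp P (fun z => f z * f z) z := by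
  set c := sOp P f z with hc
  have h0 : 0 ≤ ∫ z', (f z' - c) ^ 2 ∂(P z) := integral_nonneg fun _ => sq_nonneg _
  have h1 : ∫ z', (f z' - c) ^ 2 ∂(P z) = sOp P (fun z => f z * f z) z - 2 * c * c + c ^ 2 := by
    have e : ∀ z', (f z' - c) ^ 2 = (f z' * f z' - 2 * c * f z') + c ^ 2 := fun z' => by ring
    simp only [e]
    rw [integral_add (((hf.mul hf).sub (hf.const_mul _)).integrable _)
      (integrable_const _), integral_sub ((hf.mul hf).integrable _) ((hf.const_mul _).integrable _),
      integral_const_mul]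
    simp [sOp, hc]
  nlinarith

variable (π : Measure Z) [IsProbabilityMeasure π]

lemma integral_bind_kernel {X Y : Type*} [MeasurableSpace X] [MeasurableSpace Y] {μ : Measure X}
    {κ : ProbabilityTheory.Kernel X Y} {f : Y → ℝ} (hf : Integrable f (μ.bind κ)) :
    ∫ y, f y ∂(μ.bind κ) = ∫ x, ∫ y, f y ∂(κ x) ∂μ := by
  have h : (ProbabilityTheory.Kernel.comp κ (ProbabilityTheory.Kernel.const Unit μ)) () = μ.bind κ := by
    rw [ProbabilityTheory.Kernel.comp_apply, ProbabilityTheory.Kernel.const_apply]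
  rw [← h] at hf ⊢
  rw [ProbabilityTheory.Kernel.integral_comp hf, ProbabilityTheory.Kernel.const_apply]

lemma integral_sOp (hπ : π.bind (fun z => P z) = π) (hf : BM f) :
    ∫ z, sOp P f z ∂π = ∫ z, f z ∂π := by
  have h : π.bind P = π := hπ
  conv_rhs => rw [← h]
  rw [integral_bind_kernel]
  · rfl
  · rw [h]; exact hf.integrable _

/-- The form `⟨f, g⟩ - ⟨Pf, Pg⟩` in `L²(π)`. -/
noncomputable def dform (f g : Z → ℝ) : ℝ := ∫ z, (f z * g z - sOp P f z * sOp P g z) ∂π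

lemma dform_nonneg (hπ : π.bind (fun z => P z) = π) (hf : BM f) : 0 ≤ dform P π f f := by
  rw [dform, integral_sub ((hf.mul hf).integrable _) (((hf.sOp P).mul (hf.sOp P)).integrable _),
    ← integral_sOp P π hπ (hf.mul hf), sub_nonneg]
  exact integral_mono (((hf.sOp P).mul (hf.sOp P)).integrable _)
    (((hf.mul hf).sOp P).integrable _) fun z => sq_sOp_le P hf z

lemma dform_expand (hf : BM f) (hg : BM g) (c : ℝ) :
    dform P π (fun z => f z + c * g z) (fun z => f z + c * g z)
      = dform P π f f + 2 * c * dform P π f g + c ^ 2 * dform P π g g := by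
  have j : ∀ {f g : Z → ℝ}, BM f → BM g →
      BM (fun z => f z * g z - sOp P f z * sOp P g z) := fun hf hg =>
    (hf.mul hg).sub ((hf.sOp P).mul (hg.sOp P))
  have i : ∀ {f g : Z → ℝ}, BM f → BM g →
      Integrable (fun z => f z * g z - sOp P f z * sOp P g z) π := fun hf hg =>
    (j hf hg).integrable _
  simp only [dform]
  rw [← integral_const_mul, ← integral_const_mul, ← integral_add (i hf hf) ((i hf hg).const_mul _),
    ← integral_add (((j hf hf).add ((j hf hg).const_mul _)).integrable _)
      ((i hg hg).const_mul _)]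
  refine integral_congr_ae (Filter.Eventually.of_forall fun z => ?_)
  simp only [sOp_add P hf (hg.const_mul c), sOp_const_mul]
  ring

/-- The partial sums of `⟨f - Pf, Pⁿg⟩` grow at most like `√N`: with `T = ∑ Pⁿg`, the function
`PT - T` is bounded, so `⟨T, T⟩ - ⟨PT, PT⟩` is only `O(N)`, and Cauchy–Schwarz applies. -/
lemma abs_sum_coboundary_le (hπ : π.bind (fun z => P z) = π) (hf : BM f) (hg : BM g) :
    ∃ C, ∀ N : ℕ, 1 ≤ N →
      |∑ n ∈ Finset.range N, ∫ z, (f z - sOp P f z) * (sOp P)^[n] g z ∂π| ≤ C * Real.sqrt N := by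
  obtain ⟨Cf, hCf⟩ := hf.2
  obtain ⟨Cg, hCg⟩ := hg.2
  refine ⟨dform P π f f + 4 * Cg ^ 2 + 2 * |Cf * Cg|, fun N hN => ?_⟩
  have hZ : Nonempty Z := by
    by_contra h
    rw [not_nonempty_iff] at h
    have := (inferInstance : IsProbabilityMeasure π).measure_univ
    simp [Set.eq_empty_of_isEmpty] at this
  obtain ⟨z0⟩ := hZ
  have hCf0 : 0 ≤ Cf := (abs_nonneg _).trans (hCf z0)
  have hCg0 : 0 ≤ Cg := (abs_nonneg _).trans (hCg z0)
  set T : ℕ → Z → ℝ := fun N z => ∑ n ∈ Finset.range N, (sOp P)^[n] g z with hT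
  have hTB : ∀ N, BM (T N) := by
    intro N
    induction N with
    | zero => exact ⟨by simp [hT], 0, by simp [hT]⟩
    | succ N ih =>
      have := ih.add (hg.iter P N)
      simpa only [hT, Finset.sum_range_succ] using this
  have hTabs : ∀ z, |T N z| ≤ N * Cg := by
    intro z
    refine (Finset.abs_sum_le_sum_abs _ _).trans ?_
    refine (Finset.sum_le_sum fun n _ => abs_iter_le P hCg n z).trans ?_
    simp
  have hPT : ∀ N z, sOp P (T N) z = T N z + (sOp P)^[N] g z - g z := by
    intro N
    induction N with
    | zero => intro z; simp [hT, sOp]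
    | succ N ih =>
      intro z
      have e : T (N + 1) = fun z => T N z + (sOp P)^[N] g z := by
        funext z; simp only [hT, Finset.sum_range_succ]
      rw [e, sOp_add P (hTB N) (hg.iter P N), ih, Function.iterate_succ_apply']
      ring
  have hdiff : ∀ z, |sOp P (T N) z - T N z| ≤ 2 * Cg := by
    intro z
    rw [hPT, show T N z + (sOp P)^[N] g z - g z - T N z = (sOp P)^[N] g z - g z by ring]
    refine (abs_sub _ _).trans ?_
    linarith [abs_iter_le P hCg N z, hCg z]
  have hsum : ∑ n ∈ Finset.range N, ∫ z, (f z - sOp P f z) * (sOp P)^[n] g z ∂π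
      = dform P π f (T N) + ∫ z, sOp P f z * (sOp P (T N) z - T N z) ∂π := by
    rw [← integral_finsetSum _ fun n _ =>
      ((hf.sub (hf.sOp P)).mul (hg.iter P n)).integrable _, dform, ← integral_add
      (((hf.mul (hTB N)).sub ((hf.sOp P).mul ((hTB N).sOp P))).integrable _)
      (((hf.sOp P).mul (((hTB N).sOp P).sub (hTB N))).integrable _)]
    refine integral_congr_ae (Filter.Eventually.of_forall fun z => ?_)
    simp only [← Finset.mul_sum]
    change (f z - sOp P f z) * T N z = _
    ring
  have h2 : |∫ z, sOp P f z * (sOp P (T N) z - T N z) ∂π| ≤ 2 * |Cf * Cg| := by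
    have := norm_integral_le_of_norm_le_const (μ := π) (C := Cf * (2 * Cg))
      (f := fun z => sOp P f z * (sOp P (T N) z - T N z)) (Filter.Eventually.of_forall fun z => by
        rw [norm_mul]
        exact mul_le_mul (abs_sOp_le P hCf z) (hdiff z) (abs_nonneg _) hCf0)
    simp only [Real.norm_eq_abs, probReal_univ, mul_one] at this
    rw [abs_of_nonneg (mul_nonneg hCf0 hCg0)]
    linarith
  have h3 : dform P π (T N) (T N) ≤ 4 * Cg ^ 2 * N := by
    have hsq : ∀ z, T N z * T N z - sOp P (T N) z * sOp P (T N) z ≤ 4 * Cg ^ 2 * N := by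
      intro z
      have a1 := hdiff z
      have a2 : |sOp P (T N) z + T N z| ≤ 2 * (N * Cg) := by
        refine (abs_add_le _ _).trans ?_
        linarith [abs_sOp_le P hTabs z, hTabs z]
      calc _ = -((sOp P (T N) z - T N z) * (sOp P (T N) z + T N z)) := by ring
        _ ≤ |sOp P (T N) z - T N z| * |sOp P (T N) z + T N z| := by
          rw [← abs_mul]; exact neg_le_abs _
        _ ≤ 2 * Cg * (2 * (N * Cg)) := by gcongr
        _ = _ := by ring
    calc _ ≤ ∫ _z, 4 * Cg ^ 2 * (N : ℝ) ∂π := by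
          refine integral_mono ((((hTB N).mul (hTB N)).sub
            (((hTB N).sOp P).mul ((hTB N).sOp P))).integrable _) (integrable_const _) hsq
      _ = _ := by simp
  set s := Real.sqrt N with hs
  have hN1 : (1 : ℝ) ≤ N := by exact_mod_cast hN
  have hs1 : 1 ≤ s := Real.one_le_sqrt.2 hN1
  have hs0 : 0 < s := by linarith
  have hss : s ^ 2 = N := Real.sq_sqrt (by linarith)
  have hff := dform_nonneg P π hπ hf
  have hTT := dform_nonneg P π hπ (hTB N)
  -- expand the nonnegative form at `f ± T / √N`
  have hx1 := dform_nonneg P π hπ (hf.add ((hTB N).const_mul s⁻¹))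
  have hx2 := dform_nonneg P π hπ (hf.add ((hTB N).const_mul (-s⁻¹)))
  rw [dform_expand P π hf (hTB N)] at hx1 hx2
  have h4 : s⁻¹ ^ 2 * dform P π (T N) (T N) ≤ 4 * Cg ^ 2 := by
    rw [inv_pow, inv_mul_le_iff₀ (by positivity), hss]; linarith
  have h5 : |s⁻¹ * dform P π f (T N)| ≤ dform P π f f + 4 * Cg ^ 2 := by
    rw [abs_le]; constructor <;> nlinarith
  have h6 : |dform P π f (T N)| ≤ (dform P π f f + 4 * Cg ^ 2) * s := by
    rw [abs_mul, abs_of_pos (inv_pos.2 hs0), inv_mul_le_iff₀ hs0] at h5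
    linarith
  rw [hsum]
  refine (abs_add_le _ _).trans ?_
  have : 2 * |Cf * Cg| ≤ 2 * |Cf * Cg| * s := le_mul_of_one_le_right (by positivity) hs1
  linarith

/-- The two-sided correlation series of `f - Pf` and `g - Pg` telescopes; its remainder converges
and has Cesàro means tending to `0`, hence tends to `0`. -/
lemma tsum_correlation (hπ : π.bind (fun z => P z) = π) (hf : BM f) (hg : BM g) {x y : Z → ℝ}
    (hx : x = fun z => f z - sOp P f z) (hy : y = fun z => g z - sOp P g z)
    (hsum : Summable fun m : ℕ =>
      ∫ z, (x z * (sOp P)^[m + 1] y z + (sOp P)^[m + 1] x z * y z) ∂π) :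
    ∑' m : ℕ, ∫ z, (x z * (sOp P)^[m + 1] y z + (sOp P)^[m + 1] x z * y z) ∂π
      = ∫ z, x z * sOp P g z ∂π + ∫ z, y z * sOp P f z ∂π := by
  have hxB : BM x := by rw [hx]; exact hf.sub (hf.sOp P)
  have hyB : BM y := by rw [hy]; exact hg.sub (hg.sOp P)
  have hit : ∀ {f : Z → ℝ}, BM f → ∀ n : ℕ, ∀ z, (sOp P)^[n] (fun z => f z - sOp P f z) z
      = (sOp P)^[n] f z - (sOp P)^[n + 1] f z := by
    intro f hf n
    induction n with
    | zero => intro z; rfl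
    | succ n ih =>
      intro z
      rw [Function.iterate_succ_apply', funext ih, sOp_sub P (hf.iter P n) (hf.iter P (n + 1)),
        Function.iterate_succ_apply', Function.iterate_succ_apply' (sOp P) (n + 1)]
      rw [Function.iterate_succ_apply']
  set u : ℕ → ℝ := fun n => ∫ z, x z * (sOp P)^[n] g z ∂π with hu
  set v : ℕ → ℝ := fun n => ∫ z, y z * (sOp P)^[n] f z ∂π with hv
  have hb : ∀ m : ℕ, ∫ z, (x z * (sOp P)^[m + 1] y z + (sOp P)^[m + 1] x z * y z) ∂π
      = (u (m + 1) + v (m + 1)) - (u (m + 2) + v (m + 2)) := by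
    intro m
    have iu := fun n => (hxB.mul (hg.iter P n)).integrable π
    have iv := fun n => (hyB.mul (hf.iter P n)).integrable π
    have iuv := fun n => ((hxB.mul (hg.iter P n)).add (hyB.mul (hf.iter P n))).integrable π
    simp only [hu, hv]
    rw [← integral_add (iu _) (iv _), ← integral_add (iu _) (iv _),
      ← integral_sub (iuv _) (iuv _)]
    refine integral_congr_ae (Filter.Eventually.of_forall fun z => ?_)
    have e1 : (sOp P)^[m + 1] y z = _ := (congrFun (congrArg _ hy) z).trans (hit hg (m + 1) z)
    have e2 : (sOp P)^[m + 1] x z = _ := (congrFun (congrArg _ hx) z).trans (hit hf (m + 1) z)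
    simp only [e1, e2]
    ring
  have htel : ∀ N, ∑ m ∈ Finset.range N, ((u (m + 1) + v (m + 1)) - (u (m + 2) + v (m + 2)))
      = (u 1 + v 1) - (u (N + 1) + v (N + 1)) := fun N =>
    Finset.sum_range_sub' (fun m => u (m + 1) + v (m + 1)) N
  have hlim := hsum.hasSum.tendsto_sum_nat
  set t := ∑' m : ℕ, ∫ z, (x z * (sOp P)^[m + 1] y z + (sOp P)^[m + 1] x z * y z) ∂π
  simp only [hb, htel] at hlim
  have hc1 : Filter.Tendsto (fun N => u (N + 1) + v (N + 1)) Filter.atTop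
      (nhds ((u 1 + v 1) - t)) := by
    have := (tendsto_const_nhds (x := u 1 + v 1)).sub hlim
    simpa using this
  have hc : Filter.Tendsto (fun N => u N + v N) Filter.atTop (nhds ((u 1 + v 1) - t)) :=
    (Filter.tendsto_add_atTop_iff_nat (f := fun N => u N + v N) 1).1 hc1
  -- the limit of `u + v` is identified by its Cesàro means, which are `O(1/√n)`
  have hces := hc.cesaro
  obtain ⟨C, hC⟩ := abs_sum_coboundary_le P π hπ hf hg
  obtain ⟨D, hD⟩ := abs_sum_coboundary_le P π hπ hg hf
  have hzero : Filter.Tendsto (fun n : ℕ => ((n : ℝ))⁻¹ * ∑ i ∈ Finset.range n, (u i + v i))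
      Filter.atTop (nhds 0) := by
    have hs : Filter.Tendsto (fun n : ℕ => (C + D) * (Real.sqrt n)⁻¹) Filter.atTop (nhds 0) := by
      have := (tendsto_inv_atTop_zero.comp
        (Real.tendsto_sqrt_atTop.comp (tendsto_natCast_atTop_atTop (R := ℝ)))).const_mul (C + D)
      simpa using this
    refine squeeze_zero_norm' ?_ hs
    filter_upwards [Filter.eventually_ge_atTop 1] with n hn
    have h1 : |∑ i ∈ Finset.range n, (u i + v i)| ≤ (C + D) * Real.sqrt n := by
      rw [Finset.sum_add_distrib]
      refine (abs_add_le _ _).trans ?_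
      have a := hC n hn
      have b := hD n hn
      simp only [hu, hv, hx, hy]
      linarith
    have hn0 : (0 : ℝ) < n := by exact_mod_cast hn
    have hs0 : 0 < Real.sqrt n := Real.sqrt_pos.2 hn0
    rw [Real.norm_eq_abs, abs_mul, abs_of_pos (inv_pos.2 hn0), inv_mul_le_iff₀ hn0]
    refine h1.trans (le_of_eq ?_)
    have := Real.mul_self_sqrt hn0.le
    field_simp
    rw [pow_two, this]
  have := tendsto_nhds_unique hces hzero
  have e1 : u 1 + v 1 = ∫ z, x z * sOp P g z ∂π + ∫ z, y z * sOp P f z ∂π := rfl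
  linarith

variable {d : ℕ}

lemma bm_coord {ξ : Z → EuclideanSpace ℝ (Fin d)} (hm : Measurable ξ) {C : ℝ}
    (hb : ∀ z, ‖ξ z‖ ≤ C) (i : Fin d) : BM (fun z => ξ z i) :=
  ⟨by fun_prop, C, fun z => (PiLp.norm_apply_le (ξ z) i).trans (hb z)⟩

lemma integrable_of_bdd {ξ : Z → EuclideanSpace ℝ (Fin d)} (hm : Measurable ξ) {C : ℝ}
    (hb : ∀ z, ‖ξ z‖ ≤ C) (ν : Measure Z) [IsFiniteMeasure ν] : Integrable ξ ν :=
  Integrable.of_bound hm.aestronglyMeasurable C (Filter.Eventually.of_forall hb)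

lemma integral_coord {ξ : Z → EuclideanSpace ℝ (Fin d)} {ν : Measure Z} (h : Integrable ξ ν)
    (i : Fin d) : (∫ z, ξ z ∂ν) i = ∫ z, ξ z i ∂ν :=
  ((EuclideanSpace.proj (𝕜 := ℝ) i).integral_comp_comm h).symm

lemma kernelOp_iter_coord {ξ : Z → EuclideanSpace ℝ (Fin d)} (hm : Measurable ξ) {C : ℝ}
    (hb : ∀ z, ‖ξ z‖ ≤ C) (n : ℕ) :
    (Measurable ((kernelOp P)^[n] ξ) ∧ ∀ z, ‖(kernelOp P)^[n] ξ z‖ ≤ C) ∧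
      ∀ i, (fun z => (kernelOp P)^[n] ξ z i) = (sOp P)^[n] (fun z => ξ z i) := by
  induction n with
  | zero => exact ⟨⟨hm, hb⟩, fun i => rfl⟩
  | succ n ih =>
    obtain ⟨⟨h1, h2⟩, h3⟩ := ih
    rw [Function.iterate_succ_apply']
    refine ⟨⟨(h1.stronglyMeasurable.integral_kernel (κ := P)).measurable, fun z => ?_⟩, fun i => ?_⟩
    · have := norm_integral_le_of_norm_le_const (μ := P z) (f := (kernelOp P)^[n] ξ)
        (Filter.Eventually.of_forall h2)
      simpa [kernelOp] using this
    · rw [Function.iterate_succ_apply', ← h3]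
      funext z
      exact integral_coord (integrable_of_bdd h1 h2 _) i

/-- The centring matrix `∫ Φ dπ` of the second Poisson equation is antisymmetric: by the Poisson
equation `ξ = V - PV` and `tsum_correlation`, the series for `SM` equals
`∫ (V ξᵀ + ξ Vᵀ - ξ ξᵀ) dπ`. -/
theorem phi_antisymm (hπ : π.bind (fun z => P z) = π)
    {ξ V : Z → EuclideanSpace ℝ (Fin d)} (hξm : Measurable ξ)
    {Cξ : ℝ} (hξb : ∀ z, ‖ξ z‖ ≤ Cξ) {SM : Matrix (Fin d) (Fin d) ℝ} (hSM : SM.PosDef)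
    (hSMabs : ∀ i j : Fin d, Summable (fun m : ℕ =>
      |∫ z, (ξ z i * ((kernelOp P)^[m+1] ξ z) j + ((kernelOp P)^[m+1] ξ z) i * ξ z j) ∂π|))
    (hSMdef : ∀ i j : Fin d, SM i j
      = (∫ z, ξ z i * ξ z j ∂π)
        + ∑' m : ℕ,
            ∫ z, (ξ z i * ((kernelOp P)^[m+1] ξ z) j
              + ((kernelOp P)^[m+1] ξ z) i * ξ z j) ∂π)
    (hVm : Measurable V) {CV : ℝ} (hVb : ∀ z, ‖V z‖ ≤ CV)
    (hPoisson1 : ∀ z, ξ z = V z - ∫ z', V z' ∂(P z)) (i j : Fin d) :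
    (∫ z', (-(V z' i * ξ z' j) + (1/2) * SM i j + (1/2) * (ξ z' i * ξ z' j)) ∂π)
      = -∫ z', (-(V z' j * ξ z' i) + (1/2) * SM j i + (1/2) * (ξ z' j * ξ z' i)) ∂π := by
  have hx : ∀ i, (fun z => ξ z i) = fun z => V z i - sOp P (fun z => V z i) z := by
    intro i
    funext z
    rw [hPoisson1 z, PiLp.sub_apply, integral_coord (integrable_of_bdd hVm hVb _)]
    rfl
  have hV := bm_coord hVm hVb
  have hξ := bm_coord hξm hξb
  have hk : ∀ m z i, (kernelOp P)^[m+1] ξ z i = (sOp P)^[m + 1] (fun z => ξ z i) z := fun m z i =>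
    congrFun ((kernelOp_iter_coord P hξm hξb (m + 1)).2 i) z
  have hs := (hSMabs i j).of_abs
  have hd := hSMdef i j
  simp only [hk] at hs hd
  rw [tsum_correlation P π hπ (hV i) (hV j) (hx i) (hx j) hs] at hd
  have hsymm : SM j i = SM i j := by
    have := hSM.isHermitian.apply i j
    simpa using this
  have p1 : ∀ i z, sOp P (fun z => V z i) z = V z i - ξ z i := fun i z => by
    have := congrFun (hx i) z
    simp only at this
    linarith
  simp only [p1] at hd
  have iVξ := fun i j => ((hV i).mul (hξ j)).integrable π
  have iξξ := fun i j => ((hξ i).mul (hξ j)).integrable π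
  have e : ∀ i j, ∫ z, ξ z i * (V z j - ξ z j) ∂π
      = ∫ z, V z j * ξ z i ∂π - ∫ z, ξ z i * ξ z j ∂π := by
    intro i j
    rw [← integral_sub (iVξ j i) (iξξ i j)]
    congr 1; funext z; ring
  have e2 : ∀ i j, ∫ z', (-(V z' i * ξ z' j) + (1/2) * SM i j + (1/2) * (ξ z' i * ξ z' j)) ∂π
      = -∫ z, V z i * ξ z j ∂π + (1/2) * SM i j + (1/2) * ∫ z, ξ z i * ξ z j ∂π := by
    intro i j
    have hb : BM (fun z => -(V z i * ξ z j) + (1/2) * SM i j) := by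
      have := (((hV i).mul (hξ j)).const_mul (-1)).add (BM.const ((1/2) * SM i j))
      simpa using this
    have hn : Integrable (fun z => -(V z i * ξ z j)) π := (iVξ i j).neg
    rw [integral_add (hb.integrable _) ((iξξ i j).const_mul _),
      integral_add hn (integrable_const _), integral_neg]
    simp [integral_const_mul]
  have e3 : ∫ z, ξ z j * ξ z i ∂π = ∫ z, ξ z i * ξ z j ∂π := by
    congr 1; funext z; ring
  rw [e, e, e3] at hd
  rw [e2, e2, e3, hsymm]
  linarith

end Markov

/-! ### Taylor bound for the drift and the stationary chain -/

section Drift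
variable {d : ℕ}

/-- Second-order Taylor bound at a root, from bounds on the second partial derivatives. -/
lemma taylor_drift {F : EuclideanSpace ℝ (Fin d) → EuclideanSpace ℝ (Fin d)} {M : ℝ}
    {x₀ : EuclideanSpace ℝ (Fin d)} (hF : ContDiff ℝ 2 F) (hroot : F x₀ = 0)
    (hM : ∀ x : EuclideanSpace ℝ (Fin d), ∀ i j k : Fin d,
      |iteratedFDeriv ℝ 2 (fun y => F y i) x
        ![EuclideanSpace.single j 1, EuclideanSpace.single k 1]| ≤ M) :
    ∃ c, 0 ≤ c ∧ ∀ v, ‖F (x₀ + v) - fderiv ℝ F x₀ v‖ ≤ c * ‖v‖ ^ 2 := by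
  refine ⟨d * (d ^ 2 * |M|), by positivity, fun v => ?_⟩
  have hcomp : ∀ i, |F (x₀ + v) i - fderiv ℝ F x₀ v i| ≤ d ^ 2 * |M| * ‖v‖ ^ 2 := by
    intro i
    set f : EuclideanSpace ℝ (Fin d) → ℝ := fun y => F y i with hf
    have hfc : ContDiff ℝ 2 f := (EuclideanSpace.proj (𝕜 := ℝ) i).contDiff.comp hF
    have hd1 : ∀ x, HasFDerivAt f (fderiv ℝ f x) x := fun x =>
      (hfc.differentiable (by norm_num) x).hasFDerivAt
    have hc1 : ContDiff ℝ 1 (fderiv ℝ f) := hfc.fderiv_right (by norm_num)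
    have hd2 : ∀ x, HasFDerivAt (fderiv ℝ f) (fderiv ℝ (fderiv ℝ f) x) x := fun x =>
      (hc1.differentiable (by norm_num) x).hasFDerivAt
    have hb2 : ∀ x, ‖fderiv ℝ (fderiv ℝ f) x‖ ≤ d ^ 2 * |M| := by
      intro x
      set b := fderiv ℝ (fderiv ℝ f) x with hb
      have hbe : ∀ j k, |b (EuclideanSpace.single j 1) (EuclideanSpace.single k 1)| ≤ |M| := by
        intro j k
        have := hM x i j k
        rw [iteratedFDeriv_two_apply] at this
        exact this.trans (le_abs_self M)
      refine ContinuousLinearMap.opNorm_le_bound _ (by positivity) fun u => ?_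
      refine ContinuousLinearMap.opNorm_le_bound _ (by positivity) fun w => ?_
      rw [← bpair_vec, bpair, Real.norm_eq_abs]
      refine (Finset.abs_sum_le_sum_abs _ _).trans ?_
      refine (Finset.sum_le_sum fun j _ => Finset.abs_sum_le_sum_abs _ _).trans ?_
      refine (Finset.sum_le_sum fun j _ => Finset.sum_le_sum fun k _ =>
        show _ ≤ ‖u‖ * ‖w‖ * |M| from ?_).trans ?_
      · rw [Matrix.of_apply, abs_mul, abs_mul]
        exact mul_le_mul (mul_le_mul (PiLp.norm_apply_le u j) (PiLp.norm_apply_le w k)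
          (abs_nonneg _) (norm_nonneg _)) (hbe j k) (abs_nonneg _) (by positivity)
      · simp only [Finset.sum_const, Finset.card_univ, Fintype.card_fin, nsmul_eq_mul]
        exact le_of_eq (by ring)
    have hlip : ∀ x y, ‖fderiv ℝ f x - fderiv ℝ f y‖ ≤ d ^ 2 * |M| * ‖x - y‖ := fun x y =>
      convex_univ.norm_image_sub_le_of_norm_hasFDerivWithin_le
        (fun z _ => (hd2 z).hasFDerivWithinAt) (fun z _ => hb2 z) (Set.mem_univ y)
        (Set.mem_univ x)
    have key := (convex_closedBall x₀ ‖v‖).norm_image_sub_le_of_norm_hasFDerivWithin_le'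
      (f := f) (φ := fderiv ℝ f x₀) (C := d ^ 2 * |M| * ‖v‖) (x := x₀) (y := x₀ + v)
      (fun z _ => (hd1 z).hasFDerivWithinAt) (fun z hz => ?_) (by simp) (by simp)
    · have e1 : f x₀ = 0 := by simp [hf, hroot]
      have e2 : fderiv ℝ f x₀ v = fderiv ℝ F x₀ v i := by
        have hFd := (hF.differentiable (by norm_num) x₀).hasFDerivAt
        have := ((EuclideanSpace.proj (𝕜 := ℝ) i).hasFDerivAt.comp x₀ hFd).fderiv
        have h2 : fderiv ℝ f x₀ = (EuclideanSpace.proj (𝕜 := ℝ) i).comp (fderiv ℝ F x₀) := this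
        rw [h2]; rfl
      rw [e1, add_sub_cancel_left, e2, sub_zero, Real.norm_eq_abs] at key
      refine key.trans (le_of_eq (by ring))
    · refine (hlip z x₀).trans ?_
      rw [mem_closedBall_iff_norm] at hz
      gcongr
  set x := F (x₀ + v) - fderiv ℝ F x₀ v with hx
  have hsum : ‖x‖ ≤ ∑ i, |x i| := by
    have h1 : x = ∑ i, x i • EuclideanSpace.single i (1:ℝ) := by
      have := (EuclideanSpace.basisFun (Fin d) ℝ).sum_repr x
      simpa using this.symm
    conv_lhs => rw [h1]
    refine (norm_sum_le _ _).trans (Finset.sum_le_sum fun i _ => ?_)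
    rw [norm_smul, PiLp.norm_single, norm_one, mul_one, Real.norm_eq_abs]
  refine hsum.trans ((Finset.sum_le_sum fun i _ => hcomp i).trans ?_)
  simp only [Finset.sum_const, Finset.card_univ, Fintype.card_fin, nsmul_eq_mul]
  exact le_of_eq (by ring)

end Drift

section Chain
variable {d : ℕ} {Z : Type*} [MeasurableSpace Z]

/-- Stationarity of the joint chain `(x, z) ↦ (T (x, z), z')`, `z' ∼ P z`, against an integrable
test function. -/
lemma stationary {μ : Measure (EuclideanSpace ℝ (Fin d) × Z)} [IsProbabilityMeasure μ]
    (P : ProbabilityTheory.Kernel Z Z) [ProbabilityTheory.IsMarkovKernel P]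
    {T : EuclideanSpace ℝ (Fin d) × Z → EuclideanSpace ℝ (Fin d)} (hT : Measurable T)
    (hinv : Measure.bind μ (fun p => Measure.map (fun z' => (T p, z')) (P p.2)) = μ)
    {φ : EuclideanSpace ℝ (Fin d) × Z → ℝ} (hφ : Integrable φ μ) (hφm : Measurable φ) :
    Integrable (fun p => ∫ z', φ (T p, z') ∂(P p.2)) μ ∧
      ∫ p, ∫ z', φ (T p, z') ∂(P p.2) ∂μ = ∫ p, φ p ∂μ := by
  set κ : ProbabilityTheory.Kernel (EuclideanSpace ℝ (Fin d) × Z) (EuclideanSpace ℝ (Fin d) × Z) :=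
    (ProbabilityTheory.Kernel.deterministic T hT).prod (P.comap Prod.snd measurable_snd) with hκ
  have hκp : ∀ p, κ p = Measure.map (fun z' => (T p, z')) (P p.2) := by
    intro p
    rw [hκ, ProbabilityTheory.Kernel.prod_apply, ProbabilityTheory.Kernel.deterministic_apply,
      ProbabilityTheory.Kernel.comap_apply, Measure.dirac_prod]
  have hb : μ.bind κ = μ := by
    have : (κ : _ → _) = fun p => Measure.map (fun z' => (T p, z')) (P p.2) := funext hκp
    rw [this]; exact hinv
  have hint : ∀ p, ∫ q, φ q ∂(κ p) = ∫ z', φ (T p, z') ∂(P p.2) := by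
    intro p
    rw [hκp, integral_map (by fun_prop) hφm.aestronglyMeasurable]
  have hφ' : Integrable φ (μ.bind κ) := by rwa [hb]
  have h : (ProbabilityTheory.Kernel.comp κ (ProbabilityTheory.Kernel.const Unit μ)) ()
      = μ.bind κ := by
    rw [ProbabilityTheory.Kernel.comp_apply, ProbabilityTheory.Kernel.const_apply]
  constructor
  · have h1 : Integrable φ
        ((ProbabilityTheory.Kernel.comp κ (ProbabilityTheory.Kernel.const Unit μ)) ()) := by
      rwa [h]
    have := h1.integral_comp
    rw [ProbabilityTheory.Kernel.const_apply] at this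
    simpa only [hint] using this
  · have := integral_bind_kernel hφ'
    rw [hb] at this
    rw [this]
    simp only [hint]

lemma measurable_bpair {X : Type*} [MeasurableSpace X]
    {b : X → EuclideanSpace ℝ (Fin d) →L[ℝ] EuclideanSpace ℝ (Fin d) →L[ℝ] ℝ}
    {S : X → Matrix (Fin d) (Fin d) ℝ}
    (hb : ∀ u v, Measurable fun x => b x u v) (hS : ∀ i j, Measurable fun x => S x i j) :
    Measurable fun x => bpair (b x) (S x) := by
  unfold bpair
  exact Finset.measurable_sum _ fun i _ => Finset.measurable_sum _ fun j _ => (hS i j).mul (hb _ _)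

set_option maxHeartbeats 1000000 in
/-- One step of the comparison: the generator of the stationary chain, corrected by the Poisson
solutions `V` and `W`, and one step of the Gaussian recursion agree to third order. Both steps
are compared with the same second-order operator, so only stationarity is needed to bound the
increment `E[g' (Y)] - E[g (Y)]`. -/
lemma chain_step {μ : Measure (EuclideanSpace ℝ (Fin d) × Z)} [IsProbabilityMeasure μ]
    (P : ProbabilityTheory.Kernel Z Z) [ProbabilityTheory.IsMarkovKernel P]
    {F : EuclideanSpace ℝ (Fin d) → EuclideanSpace ℝ (Fin d)} (hFm : Measurable F)
    {x₀ : EuclideanSpace ℝ (Fin d)} (J : EuclideanSpace ℝ (Fin d) →L[ℝ] EuclideanSpace ℝ (Fin d))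
    {cF cL r Cξ CV CW : ℝ} (hcF : 0 ≤ cF) (hcL : 0 ≤ cL) (hr : 0 < r) (hr1 : r ≤ 1)
    (hFL : ∀ v, ‖F (x₀ + v)‖ ≤ cL * ‖v‖) (hFT : ∀ v, ‖F (x₀ + v) - J v‖ ≤ cF * ‖v‖ ^ 2)
    {ξ V : Z → EuclideanSpace ℝ (Fin d)} (hξm : Measurable ξ) (hξb : ∀ z, ‖ξ z‖ ≤ Cξ)
    (hVm : Measurable V) (hVb : ∀ z, ‖V z‖ ≤ CV)
    (hPoisson1 : ∀ z, ξ z = V z - ∫ z', V z' ∂(P z))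
    {W : Z → Matrix (Fin d) (Fin d) ℝ} (hWm : ∀ i j : Fin d, Measurable (fun z => W z i j))
    (hCW : 0 ≤ CW) (hWb : ∀ z, ∀ i j : Fin d, |W z i j| ≤ CW)
    {SM Φb : Matrix (Fin d) (Fin d) ℝ} (hΦ : ∀ i j, Φb i j + Φb j i = 0)
    (hPoisson2 : ∀ z, ∀ i j : Fin d, W z i j - (∫ z', W z' i j ∂(P z))
        = (-(V z i * ξ z j) + (1/2) * SM i j + (1/2) * (ξ z i * ξ z j)) - Φb i j)
    (hinv : Measure.bind μ (fun p : EuclideanSpace ℝ (Fin d) × Z =>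
        Measure.map (fun z' => (p.1 + r ^ 2 • (F p.1 + ξ p.2), z')) (P p.2)) = μ)
    (hY : Integrable (fun p : EuclideanSpace ℝ (Fin d) × Z =>
      (1 + ‖r⁻¹ • (p.1 - x₀)‖) ^ 3) μ)
    {g g' : EuclideanSpace ℝ (Fin d) → ℝ} {G₁ G₂} {K c₁ : ℝ} (hg : IsC21 g G₁ G₂ K)
    (hgi : Integrable (fun p : EuclideanSpace ℝ (Fin d) × Z => g (r⁻¹ • (p.1 - x₀))) μ)
    (hgi' : Integrable (fun p : EuclideanSpace ℝ (Fin d) × Z => g' (r⁻¹ • (p.1 - x₀))) μ)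
    (hg' : ∀ y, |g' y - g y - r ^ 2 * (G₁ y (J y) + (1/2) * bpair (G₂ y) SM)|
      ≤ c₁ * K * (r ^ 3 * (1 + ‖y‖) ^ 3)) :
    |∫ p, g' (r⁻¹ • (p.1 - x₀)) ∂μ - ∫ p, g (r⁻¹ • (p.1 - x₀)) ∂μ|
      ≤ (c₁ + ((cL + Cξ) ^ 3 + (cL + Cξ) ^ 2 * CV + (cL + Cξ) * (d ^ 2 * CW) + cF
          + (cL ^ 2 + cL * Cξ) + cL * CV)) * K * r ^ 3
        * ∫ p, (1 + ‖r⁻¹ • (p.1 - x₀)‖) ^ 3 ∂μ := by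
  set c₂ := (cL + Cξ) ^ 3 + (cL + Cξ) ^ 2 * CV + (cL + Cξ) * (d ^ 2 * CW) + cF
          + (cL ^ 2 + cL * Cξ) + cL * CV with hc₂
  set Y : EuclideanSpace ℝ (Fin d) × Z → EuclideanSpace ℝ (Fin d) := fun p => r⁻¹ • (p.1 - x₀)
    with hYdef
  have hYm : Measurable Y := by fun_prop
  have hK := hg.K_nonneg
  set T : EuclideanSpace ℝ (Fin d) × Z → EuclideanSpace ℝ (Fin d) :=
    fun p => p.1 + r ^ 2 • (F p.1 + ξ p.2) with hT
  have hTm : Measurable T := by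
    have h1 : Measurable fun p : EuclideanSpace ℝ (Fin d) × Z => F p.1 := hFm.comp measurable_fst
    have h2 : Measurable fun p : EuclideanSpace ℝ (Fin d) × Z => ξ p.2 := hξm.comp measurable_snd
    exact measurable_fst.add ((h1.add h2).const_smul (r ^ 2))
  -- the corrected test function
  set φ : EuclideanSpace ℝ (Fin d) × Z → ℝ := fun p =>
    g (Y p) + r * G₁ (Y p) (V p.2) - r ^ 2 * bpair (G₂ (Y p)) (W p.2) with hφdef
  have m1 : Measurable fun p : EuclideanSpace ℝ (Fin d) × Z => G₁ (Y p) (V p.2) := by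
    have c : Continuous fun q : EuclideanSpace ℝ (Fin d) × EuclideanSpace ℝ (Fin d) =>
        G₁ q.1 q.2 := (hg.continuous_G₁.comp continuous_fst).clm_apply continuous_snd
    exact c.measurable.comp (hYm.prodMk (hVm.comp measurable_snd))
  have m2 : Measurable fun p : EuclideanSpace ℝ (Fin d) × Z => bpair (G₂ (Y p)) (W p.2) := by
    refine measurable_bpair (fun u v => ?_) fun i j => (hWm i j).comp measurable_snd
    have c : Continuous fun y => G₂ y u v :=
      (hg.continuous_G₂.clm_apply continuous_const).clm_apply continuous_const
    exact c.measurable.comp hYm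
  have hφm : Measurable φ :=
    ((hg.continuous_g.measurable.comp hYm).add (m1.const_mul r)).sub (m2.const_mul (r ^ 2))
  have i1 : Integrable (fun p : EuclideanSpace ℝ (Fin d) × Z => G₁ (Y p) (V p.2)) μ := by
    refine Integrable.of_bound m1.aestronglyMeasurable (K * CV)
      (Filter.Eventually.of_forall fun p => (hg.abs_G₁_le _ _).trans ?_)
    exact mul_le_mul_of_nonneg_left (hVb _) hK
  have i2 : Integrable (fun p : EuclideanSpace ℝ (Fin d) × Z => bpair (G₂ (Y p)) (W p.2)) μ := by
    refine Integrable.of_bound m2.aestronglyMeasurable (d ^ 2 * CW * K)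
      (Filter.Eventually.of_forall fun p => (abs_bpair_le _ _ (hWb p.2)).trans ?_)
    exact mul_le_mul_of_nonneg_left (hg.bound2 _) (by positivity)
  have hφi : Integrable φ μ := (hgi.add (i1.const_mul r)).sub (i2.const_mul (r ^ 2))
  obtain ⟨hPi, hPe⟩ := stationary P hTm hinv hφi hφm
  set PW : Z → Matrix (Fin d) (Fin d) ℝ := fun z => Matrix.of fun i j => ∫ z', W z' i j ∂(P z)
  have hPV : ∀ z, ∫ z', V z' ∂(P z) = V z - ξ z := fun z => by
    rw [hPoisson1 z]; abel
  have hVi : ∀ z, Integrable V (P z) := fun z => integrable_of_bdd hVm hVb _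
  have hWi : ∀ z i j, Integrable (fun z' => W z' i j) (P z) := fun z i j =>
    Integrable.of_bound (hWm i j).aestronglyMeasurable CW
      (Filter.Eventually.of_forall fun z => hWb z i j)
  have hPφ : ∀ p, ∫ z', φ (T p, z') ∂(P p.2) = g (Y (T p, p.2)) + r * G₁ (Y (T p, p.2)) (V p.2 - ξ p.2)
      - r ^ 2 * bpair (G₂ (Y (T p, p.2))) (PW p.2) := by
    intro p
    have hYc : ∀ z', Y (T p, z') = Y (T p, p.2) := fun _ => rfl
    simp only [hφdef, hYc]
    set y := Y (T p, p.2)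
    have j1 : Integrable (fun z' => G₁ y (V z')) (P p.2) := (G₁ y).integrable_comp (hVi p.2)
    have j2 : Integrable (fun z' => bpair (G₂ y) (W z')) (P p.2) := by
      unfold bpair
      exact integrable_finsetSum _ fun i _ => integrable_finsetSum _ fun j _ =>
        (hWi p.2 i j).mul_const _
    have e1 : ∫ z', G₁ y (V z') ∂(P p.2) = G₁ y (V p.2 - ξ p.2) := by
      rw [(G₁ y).integral_comp_comm (hVi p.2), hPV]
    have e2 : ∫ z', bpair (G₂ y) (W z') ∂(P p.2) = bpair (G₂ y) (PW p.2) := by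
      unfold bpair
      rw [integral_finsetSum _ fun i _ => integrable_finsetSum _ fun j _ =>
        (hWi p.2 i j).mul_const _]
      refine Finset.sum_congr rfl fun i _ => ?_
      rw [integral_finsetSum _ fun j _ => (hWi p.2 i j).mul_const _]
      refine Finset.sum_congr rfl fun j _ => ?_
      rw [integral_mul_const]; rfl
    have j3 : Integrable (fun z' => g y + r * G₁ y (V z')) (P p.2) :=
      (integrable_const _).add (j1.const_mul r)
    rw [integral_sub j3 (j2.const_mul _), integral_add (integrable_const _) (j1.const_mul r),
      integral_const_mul, integral_const_mul, e1, e2]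
    simp
  have hrr : r * r⁻¹ = 1 := mul_inv_cancel₀ hr.ne'
  have hYT : ∀ p, Y (T p, p.2) = Y p + (r • F (x₀ + r • Y p) + r • ξ p.2) := by
    intro p
    have e : x₀ + r • Y p = p.1 := by
      simp only [hYdef]
      rw [smul_smul, hrr, one_smul]; abel
    rw [e]
    simp only [hYdef, hT]
    rw [show p.1 + r ^ 2 • (F p.1 + ξ p.2) - x₀ = (p.1 - x₀) + r ^ 2 • (F p.1 + ξ p.2) by abel,
      smul_add, smul_smul, show r⁻¹ * r ^ 2 = r by field_simp, smul_add]
  -- conditional expectation of the corrected test function after one step, to third order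
  have hpt : ∀ p, |(∫ z', φ (T p, z') ∂(P p.2)) - φ p
      - r ^ 2 * (G₁ (Y p) (J (Y p)) + (1/2) * bpair (G₂ (Y p)) SM)|
      ≤ c₂ * K * (r ^ 3 * (1 + ‖Y p‖) ^ 3) := by
    intro p
    rw [hPφ, hYT]
    have hn : ‖r • Y p‖ = r * ‖Y p‖ := by rw [norm_smul, Real.norm_eq_abs, abs_of_pos hr]
    refine markov_step hg SM Φb (W p.2) (PW p.2) hr hr1 hcF hcL (Y p) (r • F (x₀ + r • Y p))
      (J (Y p)) (ξ p.2) (V p.2) ?_ ?_ (hξb _) ?_ ?_ hCW hΦ (hPoisson2 p.2)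
    · rw [norm_smul, Real.norm_eq_abs, abs_of_pos hr]
      have := hFL (r • Y p)
      rw [hn] at this
      calc _ ≤ r * (cL * (r * ‖Y p‖)) := by gcongr
        _ = _ := by ring
    · have e : ∀ y, r • F (x₀ + r • y) - r ^ 2 • J y = r • (F (x₀ + r • y) - J (r • y)) := by
        intro y
        rw [map_smul, smul_sub, smul_smul, pow_two]
      rw [e, norm_smul, Real.norm_eq_abs, abs_of_pos hr]
      have := hFT (r • Y p)
      rw [hn] at this
      calc _ ≤ r * (cF * (r * ‖Y p‖) ^ 2) := by gcongr
        _ = _ := by ring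
    · rw [← hPV]
      have := norm_integral_le_of_norm_le_const (μ := P p.2) (f := V)
        (Filter.Eventually.of_forall hVb)
      simpa using this
    · intro i j
      have := norm_integral_le_of_norm_le_const (μ := P p.2) (f := fun z => W z i j)
        (Filter.Eventually.of_forall fun z => hWb z i j)
      simpa [PW] using this
  have hdiff : ∀ p, |(g' (Y p) - g (Y p)) - ((∫ z', φ (T p, z') ∂(P p.2)) - φ p)|
      ≤ (c₁ + c₂) * K * r ^ 3 * (1 + ‖Y p‖) ^ 3 := by
    intro p
    have a := abs_le.1 (hg' (Y p))
    have b := abs_le.1 (hpt p)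
    generalize r ^ 2 * (G₁ (Y p) (J (Y p)) + (1/2) * bpair (G₂ (Y p)) SM) = q at a b
    generalize (∫ z', φ (T p, z') ∂(P p.2)) - φ p = s at a b ⊢
    generalize g' (Y p) - g (Y p) = t at a b ⊢
    have e : (c₁ + c₂) * K * r ^ 3 * (1 + ‖Y p‖) ^ 3 = c₁ * K * (r ^ 3 * (1 + ‖Y p‖) ^ 3)
      + c₂ * K * (r ^ 3 * (1 + ‖Y p‖) ^ 3) := by ring
    rw [e, abs_le]
    constructor <;> linarith [a.1, a.2, b.1, b.2]
  have hzero : ∫ p, ((∫ z', φ (T p, z') ∂(P p.2)) - φ p) ∂μ = 0 := by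
    rw [integral_sub hPi hφi, hPe, sub_self]
  have heq : ∫ p, g' (Y p) ∂μ - ∫ p, g (Y p) ∂μ
      = ∫ p, ((g' (Y p) - g (Y p)) - ((∫ z', φ (T p, z') ∂(P p.2)) - φ p)) ∂μ := by
    have k1 : Integrable (fun p => g' (Y p) - g (Y p)) μ := hgi'.sub hgi
    have k2 : Integrable (fun p => (∫ z', φ (T p, z') ∂(P p.2)) - φ p) μ := hPi.sub hφi
    rw [integral_sub k1 k2, hzero, sub_zero, integral_sub hgi' hgi]
  have hYc : Integrable (fun p => (c₁ + c₂) * K * r ^ 3 * (1 + ‖Y p‖) ^ 3) μ := hY.const_mul _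
  have hfin := norm_integral_le_of_norm_le (f := fun p =>
    (g' (Y p) - g (Y p)) - ((∫ z', φ (T p, z') ∂(P p.2)) - φ p)) hYc (Filter.Eventually.of_forall hdiff)
  rw [integral_const_mul] at hfin
  rw [heq]
  exact hfin

end Chain

/-! ### Summation of the one-step errors -/

section Summation

/-- Summation of the one-step errors over `n ≈ log(1/α) / (cα)` steps: the errors of size
`α^(3/2) (1 + 1/(kα))` add up to `√α (αn + log n)`, and after `n` steps the contraction
factor is `O(√α)`. -/
lemma sum_steps {e b : ℕ → ℝ} {G D₀ D₁ D₂ C c α : ℝ} (hα : 0 < α) (hαe : α ≤ Real.exp (-1))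
    (hc : 0 < c) (hcα : c * α ≤ 1) (hC : 0 ≤ C) (hD₀ : 0 ≤ D₀) (hD₁ : 0 ≤ D₁) (hD₂ : 0 ≤ D₂)
    (h0 : |e 1 - e 0| ≤ D₀ * Real.sqrt α)
    (h1 : ∀ k : ℕ, 1 ≤ k → |e (k + 1) - e k| ≤ D₁ * (C * (1 + 1 / (k * α))) * Real.sqrt α ^ 3)
    (h2 : ∀ k, |e k - G| ≤ D₂ * b k) (hb : ∀ k, b k ^ 2 ≤ C ^ 2 * (1 - c * α) ^ k) :
    |e 0 - G| ≤ (D₀ + D₁ * C * ((1 / c + 1) + (3 + Real.log (1 / c + 1))) + D₂ * C)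
      * (Real.sqrt α * Real.log (1 / α)) := by
  set r := Real.sqrt α with hr
  have hr0 : 0 < r := Real.sqrt_pos.2 hα
  have hr2 : r ^ 2 = α := Real.sq_sqrt hα.le
  set ℓ := Real.log (1 / α) with hℓ
  have hℓ1 : 1 ≤ ℓ := by
    rw [hℓ, one_div, Real.log_inv]
    have := Real.log_le_log hα hαe
    rw [Real.log_exp] at this
    linarith
  have hα1 : α ≤ 1 := hαe.trans (Real.exp_le_one_iff.2 (by norm_num))
  have hexpℓ : Real.exp (-ℓ) = α := by
    rw [hℓ, one_div, Real.log_inv, neg_neg, Real.exp_log hα]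
  have hℓα : ℓ ≤ 1 / α := by
    have h := Real.log_le_sub_one_of_pos (x := 1 / α) (by positivity)
    linarith
  -- the number of steps after which the contraction factor `(1 - cα)^m` is at most `α`
  set m := ⌈ℓ / (c * α)⌉₊ with hm
  have hml : ℓ / (c * α) ≤ m := Nat.le_ceil _
  have hmu : (m : ℝ) ≤ ℓ / (c * α) + 1 := (Nat.ceil_lt_add_one (by positivity)).le
  have hm0 : 0 < (m : ℝ) := lt_of_lt_of_le (by positivity) hml
  have hαm : α * m ≤ (1 / c + 1) * ℓ := by
    calc α * m ≤ α * (ℓ / (c * α) + 1) := by gcongr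
      _ = ℓ / c + α := by field_simp
      _ ≤ ℓ / c + ℓ := by linarith
      _ = _ := by ring
  have hlogm : Real.log m ≤ Real.log (1 / c + 1) + 2 * ℓ := by
    have h : (m : ℝ) ≤ (1 / c + 1) * (1 / α * (1 / α)) := by
      have : α * m ≤ (1 / c + 1) * (1 / α) := hαm.trans (by gcongr)
      calc (m : ℝ) = (α * m) * (1 / α) := by field_simp
        _ ≤ ((1 / c + 1) * (1 / α)) * (1 / α) := by gcongr
        _ = _ := by ring
    refine (Real.log_le_log hm0 h).trans (le_of_eq ?_)
    rw [Real.log_mul (by positivity) (by positivity), Real.log_mul (by positivity) (by positivity)]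
    ring
  have hlogc : 0 ≤ Real.log (1 / c + 1) := Real.log_nonneg (by
    have : 0 < 1 / c := by positivity
    linarith)
  have hharm : ∑ k ∈ Finset.range m, ((k : ℝ) + 1)⁻¹ ≤ (3 + Real.log (1 / c + 1)) * ℓ := by
    have h := harmonic_le_one_add_log m
    have e1 : ((harmonic m : ℚ) : ℝ) = ∑ k ∈ Finset.range m, ((k : ℝ) + 1)⁻¹ := by
      simp [harmonic]
    rw [e1] at h
    have := le_mul_of_one_le_right hlogc hℓ1
    linarith
  have htel : ∀ n : ℕ, |e (n + 1) - e 1|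
      ≤ D₁ * C * (n * r ^ 3 + r * ∑ k ∈ Finset.range n, ((k : ℝ) + 1)⁻¹) := by
    intro n
    induction n with
    | zero => simp
    | succ n ih =>
      have h := h1 (n + 1) (by omega)
      have e1 : D₁ * (C * (1 + 1 / (((n + 1 : ℕ) : ℝ) * α))) * r ^ 3
          = D₁ * C * (r ^ 3 + r * ((n : ℝ) + 1)⁻¹) := by
        rw [← hr2]; push_cast; field_simp
      rw [e1] at h
      rw [Finset.sum_range_succ]
      calc _ = |(e (n + 1 + 1) - e (n + 1)) + (e (n + 1) - e 1)| := by congr 1; ring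
        _ ≤ _ := abs_add_le _ _
        _ ≤ _ := add_le_add h ih
        _ = _ := by push_cast; ring
  have hmid : |e (m + 1) - e 1|
      ≤ D₁ * C * ((1 / c + 1) + (3 + Real.log (1 / c + 1))) * (r * ℓ) := by
    refine (htel m).trans ?_
    have a1 : (m : ℝ) * r ^ 3 ≤ r * ((1 / c + 1) * ℓ) := by
      calc (m : ℝ) * r ^ 3 = r * (α * m) := by rw [← hr2]; ring
        _ ≤ _ := by gcongr
    have a2 : r * ∑ k ∈ Finset.range m, ((k : ℝ) + 1)⁻¹ ≤ r * ((3 + Real.log (1 / c + 1)) * ℓ) := by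
      gcongr
    calc _ ≤ D₁ * C * (r * ((1 / c + 1) * ℓ) + r * ((3 + Real.log (1 / c + 1)) * ℓ)) := by gcongr
      _ = _ := by ring
  have hbn : b (m + 1) ≤ C * r := by
    refine abs_le_of_sq_le_sq' ?_ (by positivity) |>.2
    refine (hb (m + 1)).trans ?_
    rw [mul_pow, hr2]
    gcongr
    calc (1 - c * α) ^ (m + 1) ≤ Real.exp (-(c * α)) ^ (m + 1) := by
          refine pow_le_pow_left₀ (by linarith) ?_ _
          have := Real.add_one_le_exp (-(c * α))
          linarith
      _ = Real.exp (-(c * α * (m + 1))) := by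
          rw [← Real.exp_nat_mul]; congr 1; push_cast; ring
      _ ≤ Real.exp (-ℓ) := by
          refine Real.exp_le_exp.2 (neg_le_neg ?_)
          rw [div_le_iff₀ (by positivity)] at hml
          have : 0 < c * α := by positivity
          linarith
      _ = α := hexpℓ
  have hlast : |e (m + 1) - G| ≤ D₂ * (C * r) := (h2 _).trans (by gcongr)
  have hrl : r ≤ r * ℓ := le_mul_of_one_le_right hr0.le hℓ1
  calc |e 0 - G| = |(e (m + 1) - G) - (e (m + 1) - e 1) - (e 1 - e 0)| := by congr 1; ring
    _ ≤ |e (m + 1) - G| + |e (m + 1) - e 1| + |e 1 - e 0| :=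
        (abs_sub _ _).trans (add_le_add (abs_sub _ _) le_rfl)
    _ ≤ D₂ * (C * (r * ℓ)) + D₁ * C * ((1 / c + 1) + (3 + Real.log (1 / c + 1))) * (r * ℓ)
        + D₀ * (r * ℓ) := by
        refine add_le_add (add_le_add (hlast.trans ?_) hmid) (h0.trans ?_) <;> gcongr
    _ = _ := by ring

end Summation

/-! ### Assembling the estimate -/

section Assembly

variable {d : ℕ} {Ω : Type*} [MeasurableSpace Ω]

/-- The fourth-moment bound controls the cubic weight in which the one-step errors are measured. -/
lemma moments_of_lintegral {μ : Measure Ω} [IsProbabilityMeasure μ]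
    {Y : Ω → EuclideanSpace ℝ (Fin d)} (hY : Measurable Y) {A : ℝ} (hA : 0 ≤ A)
    (h : ∫⁻ y, ENNReal.ofReal (‖y‖ ^ 4) ∂(Measure.map Y μ) ≤ ENNReal.ofReal A) :
    Integrable (fun p => (1 + ‖Y p‖) ^ 3) μ ∧ ∫ p, (1 + ‖Y p‖) ^ 3 ∂μ ≤ 8 * (1 + A) := by
  rw [lintegral_map (by fun_prop) hY] at h
  have h4 : Integrable (fun p => ‖Y p‖ ^ 4) μ := by
    refine ⟨by fun_prop, ?_⟩
    rw [hasFiniteIntegral_iff_ofReal (Filter.Eventually.of_forall fun p => by positivity)]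
    exact h.trans_lt ENNReal.ofReal_lt_top
  have h4A : ∫ p, ‖Y p‖ ^ 4 ∂μ ≤ A := by
    rw [integral_eq_lintegral_of_nonneg_ae (Filter.Eventually.of_forall fun p => by positivity)
      h4.1]
    exact ENNReal.toReal_le_of_le_ofReal hA h
  have hpt : ∀ t : ℝ, 0 ≤ t → (1 + t) ^ 3 ≤ 8 * (1 + t ^ 4) := by
    intro t ht
    nlinarith [sq_nonneg (t ^ 2 - 1), sq_nonneg (t - 1), sq_nonneg (t ^ 2 - t),
      mul_nonneg ht (sq_nonneg (t - 1)), pow_nonneg ht 3]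
  have hdom : Integrable (fun p => 8 * (1 + ‖Y p‖ ^ 4)) μ :=
    ((integrable_const (1 : ℝ)).add h4).const_mul 8
  have h3 : Integrable (fun p => (1 + ‖Y p‖) ^ 3) μ := by
    refine hdom.mono' (by fun_prop) (Filter.Eventually.of_forall fun p => ?_)
    rw [Real.norm_eq_abs, abs_of_nonneg (by positivity)]
    exact hpt _ (norm_nonneg _)
  refine ⟨h3, (integral_mono h3 hdom fun p => hpt _ (norm_nonneg _)).trans ?_⟩
  rw [integral_const_mul, integral_add (integrable_const (1 : ℝ)) h4]
  simp only [integral_const, probReal_univ, smul_eq_mul, one_mul]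
  linarith

/-- The crude comparison of two laws on a Lipschitz test function, through its value at `0`. -/
lemma lip_compare {μ : Measure Ω} [IsProbabilityMeasure μ]
    {γ : Measure (EuclideanSpace ℝ (Fin d))} [IsProbabilityMeasure γ]
    {Y : Ω → EuclideanSpace ℝ (Fin d)} (hYm : Measurable Y)
    (hY : Integrable (fun p => ‖Y p‖) μ) (hγ : Integrable (fun y => ‖y‖) γ)
    {f : EuclideanSpace ℝ (Fin d) → ℝ} {K : ℝ≥0} (hf : LipschitzWith K f) :
    Integrable (fun p => f (Y p)) μ ∧
      |∫ p, f (Y p) ∂μ - ∫ y, f y ∂γ| ≤ (∫ p, ‖Y p‖ ∂μ + ∫ y, ‖y‖ ∂γ) * K := by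
  have hb : ∀ y, |f y - f 0| ≤ K * ‖y‖ := fun y => by
    have := hf.dist_le_mul y 0
    rwa [Real.dist_eq, dist_zero_right] at this
  have i1 : Integrable (fun p => f (Y p) - f 0) μ :=
    (hY.const_mul (K : ℝ)).mono' ((hf.continuous.measurable.comp hYm).sub_const _).aestronglyMeasurable
      (Filter.Eventually.of_forall fun p => hb _)
  have i2 : Integrable (fun y => f y - f 0) γ :=
    (hγ.const_mul (K : ℝ)).mono' (hf.continuous.measurable.sub_const _).aestronglyMeasurable
      (Filter.Eventually.of_forall fun p => hb _)
  have j1 : Integrable (fun p => f (Y p)) μ := by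
    exact (i1.add (integrable_const (f 0))).congr (Filter.Eventually.of_forall fun p => by simp)
  have j2 : Integrable (fun y => f y) γ := by
    exact (i2.add (integrable_const (f 0))).congr (Filter.Eventually.of_forall fun p => by simp)
  refine ⟨j1, ?_⟩
  have e1 : ∫ p, (f (Y p) - f 0) ∂μ = ∫ p, f (Y p) ∂μ - f 0 := by
    rw [integral_sub j1 (integrable_const _)]; simp
  have e2 : ∫ y, (f y - f 0) ∂γ = ∫ y, f y ∂γ - f 0 := by
    rw [integral_sub j2 (integrable_const _)]; simp
  have b1 : |∫ p, (f (Y p) - f 0) ∂μ| ≤ K * ∫ p, ‖Y p‖ ∂μ := by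
    rw [← integral_const_mul]
    exact norm_integral_le_of_norm_le (f := fun p => f (Y p) - f 0) (hY.const_mul _)
      (Filter.Eventually.of_forall fun p => hb _)
  have b2 : |∫ y, (f y - f 0) ∂γ| ≤ K * ∫ y, ‖y‖ ∂γ := by
    rw [← integral_const_mul]
    exact norm_integral_le_of_norm_le (f := fun p => f p - f 0) (hγ.const_mul _)
      (Filter.Eventually.of_forall fun p => hb _)
  have : ∫ p, f (Y p) ∂μ - ∫ y, f y ∂γ
      = ∫ p, (f (Y p) - f 0) ∂μ - ∫ y, (f y - f 0) ∂γ := by rw [e1, e2]; ring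
  rw [this]
  refine (abs_sub _ _).trans ?_
  linarith

/-- One step of the Gaussian recursion acts on a smooth function as `1 + r² 𝓛` up to `r³`, where
`𝓛` is the Ornstein-Uhlenbeck generator with drift `J` and diffusion `M`. -/
lemma semig_step {J S M : Matrix (Fin d) (Fin d) ℝ} {r C : ℝ} (hr : 0 < r) (hr1 : r ≤ 1)
    (hC : 0 ≤ C) (hP : ∀ k, (kcov S (1 + r ^ 2 • J) k).PosSemidef)
    (h3 : ∫ u, ‖u‖ ^ 3 ∂(gau (kcov S (1 + r ^ 2 • J) 1)) ≤ C * r ^ 3)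
    (hcov : ∀ b : EuclideanSpace ℝ (Fin d) →L[ℝ] EuclideanSpace ℝ (Fin d) →L[ℝ] ℝ,
      |∫ u, b u u ∂(gau (kcov S (1 + r ^ 2 • J) 1)) - r ^ 2 * bpair b M| ≤ C * ‖b‖ * r ^ 4)
    {h : EuclideanSpace ℝ (Fin d) → ℝ} (hh : LipschitzWith 1 h) (k : ℕ) {G₁ G₂} {K : ℝ}
    (hg : IsC21 (semig S (1 + r ^ 2 • J) k h) G₁ G₂ K) (y : EuclideanSpace ℝ (Fin d)) :
    |semig S (1 + r ^ 2 • J) (k + 1) h y - semig S (1 + r ^ 2 • J) k h y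
        - r ^ 2 * (G₁ y (cl J y) + (1/2) * bpair (G₂ y) M)|
      ≤ (‖cl J‖ ^ 2 + C + 4 * ‖cl J‖ ^ 3 + 4 * C) * K * (r ^ 3 * (1 + ‖y‖) ^ 3) := by
  have hB : cl (1 + r ^ 2 • J) y = y + r ^ 2 • cl J y := by
    rw [cl_add, cl_one, cl_smul]
  rw [semig_succ hP hh, hB]
  exact gauss_step hg (cl J) M _ hr hr1 hC (integrable_norm_gau _) (integrable_norm_pow_gau _ 2)
    (integrable_norm_pow_gau _ 3) h3 (integral_clm_gau _) hcov y

/-- A single smoothing step moves a Lipschitz function by `O(r)`. -/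
lemma semig_one_sub {J S : Matrix (Fin d) (Fin d) ℝ} {r C : ℝ} (hr : 0 < r) (hr1 : r ≤ 1)
    (h1 : ∫ u, ‖u‖ ∂(gau (kcov S (1 + r ^ 2 • J) 1)) ≤ C * r)
    {h : EuclideanSpace ℝ (Fin d) → ℝ} (hh : LipschitzWith 1 h) (y : EuclideanSpace ℝ (Fin d)) :
    |semig S (1 + r ^ 2 • J) 1 h y - h y| ≤ (‖cl J‖ + C) * r * (1 + ‖y‖) := by
  have hB : cl (1 + r ^ 2 • J) y = y + r ^ 2 • cl J y := by
    rw [cl_add, cl_one, cl_smul]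
  have hi := hh.integrable_of_norm (integrable_norm_gau (kcov S (1 + r ^ 2 • J) 1))
    (y + r ^ 2 • cl J y)
  have hn := integrable_norm_gau (kcov S (1 + r ^ 2 • J) 1)
  have hC : 0 ≤ C * r := (integral_nonneg fun u => norm_nonneg u).trans h1
  have hC' : 0 ≤ C := nonneg_of_mul_nonneg_left hC hr
  have hy := norm_nonneg y
  have hJ : ‖r ^ 2 • cl J y‖ ≤ r * (‖cl J‖ * ‖y‖) := by
    rw [norm_smul, Real.norm_eq_abs, abs_of_nonneg (by positivity)]
    have : r ^ 2 ≤ r := by nlinarith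
    gcongr
    exact (cl J).le_opNorm y
  rw [semig, pow_one, hB]
  have e : ∫ u, h (y + r ^ 2 • cl J y + u) ∂(gau (kcov S (1 + r ^ 2 • J) 1)) - h y
      = ∫ u, (h (y + r ^ 2 • cl J y + u) - h y) ∂(gau (kcov S (1 + r ^ 2 • J) 1)) := by
    rw [integral_sub hi (integrable_const _)]; simp
  rw [e]
  have hd : Integrable (fun u => r * (‖cl J‖ * ‖y‖) + ‖u‖) (gau (kcov S (1 + r ^ 2 • J) 1)) :=
    (integrable_const _).add hn
  refine (norm_integral_le_of_norm_le
    (f := fun u => h (y + r ^ 2 • cl J y + u) - h y) hd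
    (Filter.Eventually.of_forall fun u => ?_)).trans ?_
  · have := hh.dist_le_mul (y + r ^ 2 • cl J y + u) y
    rw [Real.dist_eq, dist_eq_norm, NNReal.coe_one, one_mul] at this
    refine this.trans ?_
    have e2 : y + r ^ 2 • cl J y + u - y = r ^ 2 • cl J y + u := by abel
    rw [e2]
    exact (norm_add_le _ _).trans (by gcongr)
  · rw [integral_add (integrable_const _) hn]
    simp only [integral_const, probReal_univ, smul_eq_mul, one_mul]
    have := mul_nonneg hC hy
    have := mul_nonneg hr.le (norm_nonneg (cl J))
    nlinarith

end Assembly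
/-- general-purpose Gaussian approximation, Markovian noise.
Under the drift-regularity conditions of the i.i.d. theorem, a uniformly bounded Markovian
noise `ξ(Z_k)` driven by a kernel `P` with invariant law `π_Z` and centered stationary mean,
an entrywise absolutely convergent long-run covariance `Σ_M ≻ 0`, bounded measurable
solutions `V, W` of the two Poisson equations, and a family of invariant joint laws whose
centered-scaled `X`-marginals have uniformly bounded fourth moments, the Wasserstein-1
distance between the centered-scaled stationary law and `N(0,Σ_Y)`, where
`J*Σ_Y + Σ_Y(J*)ᵀ = −Σ_M`, is at most `Ū √α log(1/α)` for all small `α`. -/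
theorem stmt18 {d : ℕ} (hd : 1 ≤ d) {Z : Type*} [MeasurableSpace Z]
    (F : EuclideanSpace ℝ (Fin d) → EuclideanSpace ℝ (Fin d))
    (L M : ℝ) (xstar : EuclideanSpace ℝ (Fin d))
    (hF : ContDiff ℝ 2 F)
    (hroot : F xstar = 0) (hrootuniq : ∀ x, F x = 0 → x = xstar)
    (hLip : ∀ x y, ‖F x - F y‖ ≤ L * ‖x - y‖)
    (hM : ∀ x : EuclideanSpace ℝ (Fin d), ∀ i j k : Fin d,
      |iteratedFDeriv ℝ 2 (fun y => F y i) x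
        ![EuclideanSpace.single j 1, EuclideanSpace.single k 1]| ≤ M)
    (Jstar : Matrix (Fin d) (Fin d) ℝ)
    (hJstar : ∀ v, fderiv ℝ F xstar v = Matrix.toEuclideanLin Jstar v)
    (hHurwitz : ∀ z ∈ spectrum ℂ (Jstar.map Complex.ofReal), z.re < 0)
    (P : ProbabilityTheory.Kernel Z Z) [ProbabilityTheory.IsMarkovKernel P]
    (πZ : Measure Z) [IsProbabilityMeasure πZ]
    (hπZinv : πZ.bind (fun z => P z) = πZ)
    (ξ : Z → EuclideanSpace ℝ (Fin d)) (hξm : Measurable ξ)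
    (Cξ : ℝ) (hξb : ∀ z, ‖ξ z‖ ≤ Cξ)
    (hξmean : (∫ z, ξ z ∂πZ) = 0)
    (SM : Matrix (Fin d) (Fin d) ℝ) (hSM : SM.PosDef)
    (hSMabs : ∀ i j : Fin d, Summable (fun m : ℕ =>
      |∫ z, (ξ z i * ((kernelOp P)^[m+1] ξ z) j + ((kernelOp P)^[m+1] ξ z) i * ξ z j) ∂πZ|))
    (hSMdef : ∀ i j : Fin d, SM i j
      = (∫ z, ξ z i * ξ z j ∂πZ)
        + ∑' m : ℕ,
            ∫ z, (ξ z i * ((kernelOp P)^[m+1] ξ z) j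
              + ((kernelOp P)^[m+1] ξ z) i * ξ z j) ∂πZ)
    (V : Z → EuclideanSpace ℝ (Fin d)) (hVm : Measurable V)
    (CV : ℝ) (hVb : ∀ z, ‖V z‖ ≤ CV)
    (hPoisson1 : ∀ z, ξ z = V z - ∫ z', V z' ∂(P z))
    (W : Z → Matrix (Fin d) (Fin d) ℝ)
    (hWm : ∀ i j : Fin d, Measurable (fun z => W z i j))
    (CW : ℝ) (hWb : ∀ z, ∀ i j : Fin d, |W z i j| ≤ CW)
    (hPoisson2 : ∀ z, ∀ i j : Fin d,
      W z i j - (∫ z', W z' i j ∂(P z))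
        = (-(V z i * ξ z j) + (1/2) * SM i j + (1/2) * (ξ z i * ξ z j))
          - ∫ z', (-(V z' i * ξ z' j) + (1/2) * SM i j + (1/2) * (ξ z' i * ξ z' j)) ∂πZ)
    (SY : Matrix (Fin d) (Fin d) ℝ) (hSY : SY.PosDef)
    (hLyap : Jstar * SY + SY * Jstarᵀ = -SM)
    (γ : Measure (EuclideanSpace ℝ (Fin d))) [IsProbabilityMeasure γ]
    (hγ : ∀ t : EuclideanSpace ℝ (Fin d),
      (∫ x, Complex.exp (Complex.I * ((⟪t, x⟫ : ℝ) : ℂ)) ∂γ)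
        = Complex.exp (-(1/2 : ℂ) * ((⟪t, Matrix.toEuclideanLin SY t⟫ : ℝ) : ℂ)))
    (α₀ A : ℝ) (hα₀ : α₀ ∈ Set.Ioc (0:ℝ) 1) (hA : 0 ≤ A)
    (μα : ℝ → Measure (EuclideanSpace ℝ (Fin d) × Z))
    (hprob : ∀ α ∈ Set.Ioo (0:ℝ) α₀, IsProbabilityMeasure (μα α))
    (hmarg : ∀ α ∈ Set.Ioo (0:ℝ) α₀, Measure.map Prod.snd (μα α) = πZ)
    (hinv : ∀ α ∈ Set.Ioo (0:ℝ) α₀,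
      Measure.bind (μα α) (fun p : EuclideanSpace ℝ (Fin d) × Z =>
        Measure.map (fun z' => (p.1 + α • (F p.1 + ξ p.2), z')) (P p.2)) = μα α)
    (hmom : ∀ α ∈ Set.Ioo (0:ℝ) α₀,
      (∫⁻ y, ENNReal.ofReal (‖y‖ ^ 4)
          ∂(Measure.map (fun p : EuclideanSpace ℝ (Fin d) × Z =>
              (Real.sqrt α)⁻¹ • (p.1 - xstar)) (μα α)))
        ≤ ENNReal.ofReal A) :
    ∃ α₁ ∈ Set.Ioc (0:ℝ) 1, ∃ U : ℝ, ∀ α ∈ Set.Ioc (0:ℝ) α₁,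
      ∀ h : EuclideanSpace ℝ (Fin d) → ℝ, LipschitzWith 1 h →
        |(∫ y, h y ∂(Measure.map (fun p : EuclideanSpace ℝ (Fin d) × Z =>
              (Real.sqrt α)⁻¹ • (p.1 - xstar)) (μα α)))
            - ∫ y, h y ∂γ|
          ≤ U * (Real.sqrt α * Real.log (1/α)) := by
  obtain ⟨a, c, C, ha, ha1, hc, hac, hC, hpack⟩ := gaussian_package hSY hSM hLyap
  obtain rfl : γ = gau SY := eq_gau hSY.posSemidef γ hγ
  obtain ⟨cF, hcF, hFT⟩ := taylor_drift hF hroot hM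
  -- a point of `Z` and a coordinate are needed to see that the bounds `Cξ, CV, CW` are nonnegative
  have hZ : Nonempty Z := by
    by_contra hne
    rw [not_nonempty_iff] at hne
    exact IsProbabilityMeasure.ne_zero πZ (Measure.eq_zero_of_isEmpty πZ)
  obtain ⟨z₀⟩ := hZ
  have hCξ : 0 ≤ Cξ := (norm_nonneg _).trans (hξb z₀)
  have hCV : 0 ≤ CV := (norm_nonneg _).trans (hVb z₀)
  have hCW : 0 ≤ CW := (abs_nonneg _).trans (hWb z₀ ⟨0, hd⟩ ⟨0, hd⟩)
  have hJ : ∀ v, fderiv ℝ F xstar v = cl Jstar v := fun v => hJstar v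
  simp only [hJ] at hFT
  have hFL : ∀ v, ‖F (xstar + v)‖ ≤ |L| * ‖v‖ := fun v => by
    have := hLip (xstar + v) xstar
    rw [hroot, sub_zero, add_sub_cancel_left] at this
    exact this.trans (by gcongr; exact le_abs_self L)
  set Φb : Matrix (Fin d) (Fin d) ℝ := Matrix.of fun i j =>
    ∫ z', (-(V z' i * ξ z' j) + (1/2) * SM i j + (1/2) * (ξ z' i * ξ z' j)) ∂πZ with hΦb
  have hΦ : ∀ i j, Φb i j + Φb j i = 0 := fun i j => by
    have := phi_antisymm P πZ hπZinv hξm hξb hSM hSMabs hSMdef hVm hVb hPoisson1 i j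
    simp only [hΦb, Matrix.of_apply]
    linarith
  set m : ℝ := 8 * (1 + A) with hm
  have hm0 : 0 ≤ m := by positivity
  set c₁ : ℝ := ‖cl Jstar‖ ^ 2 + C + 4 * ‖cl Jstar‖ ^ 3 + 4 * C with hc₁
  have hc₁0 : 0 ≤ c₁ := by positivity
  set c₂ : ℝ := (|L| + Cξ) ^ 3 + (|L| + Cξ) ^ 2 * CV + (|L| + Cξ) * (d ^ 2 * CW) + cF
    + (|L| ^ 2 + |L| * Cξ) + |L| * CV with hc₂
  have hc₂0 : 0 ≤ c₂ := by positivity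
  set D₂ : ℝ := m + ∫ y, ‖y‖ ∂(gau SY) with hD₂
  have hD₂0 : 0 ≤ D₂ := add_nonneg hm0 (integral_nonneg fun y => norm_nonneg y)
  have hα₁ : 0 < min (min a (α₀ / 2)) (Real.exp (-1)) :=
    lt_min (lt_min ha (half_pos hα₀.1)) (Real.exp_pos _)
  refine ⟨min (min a (α₀ / 2)) (Real.exp (-1)),
    ⟨hα₁, (min_le_left _ _).trans ((min_le_left _ _).trans ha1)⟩,
    (‖cl Jstar‖ + C) * m
      + (c₁ + c₂) * m * C * ((1 / c + 1) + (3 + Real.log (1 / c + 1))) + D₂ * C, ?_⟩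
  intro α hα h hh
  have hα0 : 0 < α := hα.1
  have hαa : α ≤ a := hα.2.trans ((min_le_left _ _).trans (min_le_left _ _))
  have hαe : α ≤ Real.exp (-1) := hα.2.trans (min_le_right _ _)
  have hαα₀ : α ∈ Set.Ioo (0:ℝ) α₀ :=
    ⟨hα0, lt_of_le_of_lt (hα.2.trans ((min_le_left _ _).trans (min_le_right _ _)))
      (half_lt_self hα₀.1)⟩
  have hcα : c * α ≤ 1 := (by nlinarith : c * α ≤ a * c).trans hac
  obtain ⟨hP, hcon, hreg, hmomk, hcovk⟩ := hpack α hα0 hαa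
  have hpr := hprob α hαα₀
  have hiv := hinv α hαα₀
  have hmo := hmom α hαα₀
  set μ := μα α with hμ
  set r := Real.sqrt α with hr
  have hr0 : 0 < r := Real.sqrt_pos.2 hα0
  have hr2 : α = r ^ 2 := (Real.sq_sqrt hα0.le).symm
  have hr1 : r ≤ 1 := Real.sqrt_le_one.2 (hαa.trans ha1)
  have hYm : Measurable fun p : EuclideanSpace ℝ (Fin d) × Z => r⁻¹ • (p.1 - xstar) := by
    fun_prop
  obtain ⟨hY3, hY3m⟩ := moments_of_lintegral hYm hA hmo
  have hle : ∀ t : ℝ, 0 ≤ t → 1 + t ≤ (1 + t) ^ 3 := fun t ht => by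
    nlinarith [pow_nonneg ht 2, pow_nonneg ht 3]
  have hY1' : Integrable (fun p : EuclideanSpace ℝ (Fin d) × Z =>
      1 + ‖r⁻¹ • (p.1 - xstar)‖) μ := by
    refine hY3.mono' (by fun_prop) (Filter.Eventually.of_forall fun p => ?_)
    rw [Real.norm_eq_abs, abs_of_nonneg (by positivity)]
    exact hle _ (norm_nonneg _)
  have hY1 : Integrable (fun p : EuclideanSpace ℝ (Fin d) × Z => ‖r⁻¹ • (p.1 - xstar)‖) μ := by
    refine hY1'.mono' (by fun_prop) (Filter.Eventually.of_forall fun p => ?_)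
    rw [norm_norm]
    linarith
  have hY1m' : ∫ p, (1 + ‖r⁻¹ • (p.1 - xstar)‖) ∂μ ≤ m :=
    (integral_mono hY1' hY3 fun p => hle _ (norm_nonneg _)).trans hY3m
  have hY1m : ∫ p, ‖r⁻¹ • (p.1 - xstar)‖ ∂μ ≤ m :=
    (integral_mono hY1 hY1' fun p => le_add_of_nonneg_left zero_le_one).trans hY1m'
  have hcmp := fun k => lip_compare hYm hY1 (integrable_norm_gau SY)
    (semig_lip (S := SY) (B := 1 + α • Jstar) hh k)
  -- interpolation between `E[h(Y)]` (at `k = 0`) and `∫ h dγ` (as `k → ∞`) along the semigroup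
  have key := sum_steps
    (e := fun k => ∫ p, semig SY (1 + α • Jstar) k h (r⁻¹ • (p.1 - xstar)) ∂μ)
    (b := fun k => ‖cl ((1 + α • Jstar) ^ k)‖) (G := ∫ y, h y ∂(gau SY))
    (D₀ := (‖cl Jstar‖ + C) * m) (D₁ := (c₁ + c₂) * m) (D₂ := D₂)
    hα0 hαe hc hcα hC (by positivity) (by positivity) hD₂0 ?_ ?_ ?_ hcon
  · simp only [semig_zero] at key
    rw [integral_map hYm.aemeasurable hh.continuous.measurable.aestronglyMeasurable]
    exact key
  · have i0 := (hcmp 0).1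
    have i1 := (hcmp 1).1
    simp only [semig_zero] at i0 ⊢
    rw [← integral_sub i1 i0]
    have h1 := hmomk 1 (by norm_num)
    simp only [pow_one] at h1
    have hpt := semig_one_sub (J := Jstar) (S := SY) hr0 hr1 (C := C) (by rwa [← hr2]) hh
    rw [← hr2] at hpt
    refine (norm_integral_le_of_norm_le
      (f := fun p : EuclideanSpace ℝ (Fin d) × Z =>
        semig SY (1 + α • Jstar) 1 h (r⁻¹ • (p.1 - xstar)) - h (r⁻¹ • (p.1 - xstar)))
      (hY1'.const_mul ((‖cl Jstar‖ + C) * r))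
      (Filter.Eventually.of_forall fun p => hpt _)).trans ?_
    rw [integral_const_mul]
    calc (‖cl Jstar‖ + C) * r * ∫ p, (1 + ‖r⁻¹ • (p.1 - xstar)‖) ∂μ
        ≤ (‖cl Jstar‖ + C) * r * m := by gcongr
      _ = _ := by ring
  · intro k hk
    obtain ⟨G₁, G₂, hg⟩ := hreg k hk h hh
    have hK := hg.K_nonneg
    have h3 := hmomk 3 le_rfl
    have hstep := semig_step (J := Jstar) (S := SY) (M := SM) hr0 hr1 hC (by rwa [← hr2])
      (by rwa [← hr2])
      (by
        rw [← hr2]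
        intro b
        have e4 : r ^ 4 = α ^ 2 := by rw [hr2]; ring
        rw [e4]
        exact hcovk b) hh k (by rw [← hr2]; exact hg)
    have := chain_step P hF.continuous.measurable (cl Jstar) hcF (abs_nonneg L) hr0 hr1 hFL hFT
      hξm hξb hVm hVb hPoisson1 hWm hCW hWb hΦ hPoisson2 (by rwa [← hr2]) hY3 hg (hcmp k).1
      (hcmp (k + 1)).1 (by rw [← hr2] at hstep ⊢; exact hstep)
    refine this.trans ?_
    calc (c₁ + c₂) * (C * (1 + 1 / (k * α))) * r ^ 3 * ∫ p, (1 + ‖r⁻¹ • (p.1 - xstar)‖) ^ 3 ∂μ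
        ≤ (c₁ + c₂) * (C * (1 + 1 / (k * α))) * r ^ 3 * m := by gcongr
      _ = _ := by ring
  · intro k
    have := (hcmp k).2
    rw [integral_semig hSY.posSemidef hP hh k, coe_nnnorm] at this
    exact this.trans (by rw [hD₂]; gcongr)
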